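/- Let Γ be a non-elementary hyperbolic group with no nontrivial finite normal subgroup, and let S ⊆ Γ be a finite subset. Then there exists a sequence (N_i)_{i∈ℕ} of pairwise distinct nontrivial normal subgroups of Γ such that each quotient Γ/N_i is a non-elementary hyperbolic group and N_i ∩ (S·S⁻¹) ⊆ {1} for every i (so that the quotient map Γ → Γ/N_i is injective on S). -/

import Mathlib

open Pointwise

/-- The word length of `g` with respect to a (symmetric) generating set `S`: the least
`k` such that `g` is a product of `k` elements of `S`. -/
noncomputable def wordLength {Γ : Type*} [Group Γ] (S : Set Γ) (g : Γ) : ℕ :=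
  sInf {k | ∃ l : List Γ, (∀ x ∈ l, x ∈ S) ∧ l.length = k ∧ l.prod = g}

/-- The Gromov product `(x|y)_w = ½(d(x,w) + d(y,w) − d(x,y))` with respect to the word
metric `d(x,y) = |x⁻¹y|_S` of a generating set `S`. -/
noncomputable def wordGromovProduct {Γ : Type*} [Group Γ] (S : Set Γ) (w x y : Γ) : ℝ :=
  ((wordLength S (x⁻¹ * w) : ℝ) + (wordLength S (y⁻¹ * w) : ℝ) -
    (wordLength S (x⁻¹ * y) : ℝ)) / 2

/-- A group is hyperbolic if it has a finite symmetric generating set whose word metric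
is Gromov hyperbolic: for some `δ ≥ 0`, `(x|z)_w ≥ min((x|y)_w, (y|z)_w) − δ` for all
`x, y, z, w`. -/
def IsHyperbolicGroup (Γ : Type*) [Group Γ] : Prop :=
  ∃ S : Set Γ, S.Finite ∧ (∀ s ∈ S, s⁻¹ ∈ S) ∧ Subgroup.closure S = ⊤ ∧
    ∃ δ : ℝ, 0 ≤ δ ∧ ∀ x y z w : Γ,
      wordGromovProduct S w x z ≥
        min (wordGromovProduct S w x y) (wordGromovProduct S w y z) - δ

/-- A group is non-elementary if it is not virtually cyclic, i.e. it contains no cyclic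
subgroup of finite index. -/
def IsNonElementaryGroup (Γ : Type*) [Group Γ] : Prop :=
  ∀ g : Γ, (Subgroup.zpowers g).index = 0

/-- The quotient of `G` by the normal subgroup `N` is a non-elementary hyperbolic
group. -/
def QuotientIsNonElementaryHyperbolic {G : Type*} [Group G] (N : Subgroup G)
    (hN : N.Normal) : Prop :=
  letI := hN
  IsHyperbolicGroup (G ⧸ N) ∧ IsNonElementaryGroup (G ⧸ N)

/-!
The word metric is a hyperbolic metric with integer values, on which some `g` of infinite order
translates along a geodesic axis. Translates of this axis either stay close along their whole
length or overlap for a bounded time. For a large multiple `n` of a fixed period, this small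
overlap makes the normal closure of `g ^ n` the union of a growing sequence of subgroups, the
windmills, in which every nontrivial element follows a translate of the axis along almost `n`
periods (an analogue of Greendlinger's lemma).

Three consequences follow. Nontrivial elements of the normal closure are long, so that they avoid
any given finite set. A relation of the quotient can be shortened locally (Dehn's algorithm), which
makes the quotient hyperbolic. And certain commutators of `p`-th powers, whose geodesics turn
between different translates of the axis all the time, survive in the quotient for every `p`; in a
virtually cyclic group, such a commutator is trivial for some `p`.
-/

/-! ### Hyperbolic geometry with integer distances -/

/-- An integer-valued hyperbolic metric, such as the word metric of a hyperbolic group. The field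
`exists_between` replaces geodesics, and `four_point` is Gromov's inequality, multiplied by two so
that all quantities are integers. -/
structure DiscreteHyperbolicMetric (X : Type*) where
  /-- The distance. -/
  dist : X → X → ℤ
  /-- Twice the hyperbolicity constant. -/
  δ : ℤ
  dist_self : ∀ x, dist x x = 0
  dist_comm : ∀ x y, dist x y = dist y x
  dist_triangle : ∀ x y z, dist x z ≤ dist x y + dist y z
  eq_of_dist_eq_zero : ∀ x y, dist x y = 0 → x = y
  exists_between : ∀ x y k, 0 ≤ k → k ≤ dist x y → ∃ z, dist x z = k ∧ dist z y = dist x y - k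
  four_point : ∀ u v w q,
    dist u q + dist q w - dist u w ≤ dist u q + dist q v - dist u v + δ ∨
      dist w q + dist q v - dist w v ≤ dist u q + dist q v - dist u v + δ
  one_le_δ : 1 ≤ δ

namespace DiscreteHyperbolicMetric

variable {X : Type*} (M : DiscreteHyperbolicMetric X)

/-- Twice the Gromov product of `u` and `v` seen from `q`: the length lost by going from `u` to `v`
through `q`. It vanishes exactly when `q` lies on a geodesic from `u` to `v`, and for a small bound
`e` the inequality `M.excess u v q ≤ e` says that `q` is near such a geodesic. -/
def excess (u v q : X) : ℤ := M.dist u q + M.dist q v - M.dist u v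

lemma dist_nonneg (x y : X) : 0 ≤ M.dist x y := by
  have := M.dist_triangle x y x
  have := M.dist_self x
  have := M.dist_comm x y
  omega

lemma excess_nonneg (u v q : X) : 0 ≤ M.excess u v q := by
  have := M.dist_triangle u q v
  simp only [excess]
  omega

lemma excess_comm (u v q : X) : M.excess u v q = M.excess v u q := by
  simp only [excess, M.dist_comm u, M.dist_comm q v]
  omega

lemma excess_le_or_excess_le {u v q : X} {e : ℤ} (h : M.excess u v q ≤ e) (w : X) :
    M.excess u w q ≤ e + M.δ ∨ M.excess w v q ≤ e + M.δ := by
  have := M.four_point u v w q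
  simp only [excess] at *
  omega

lemma excess_le_add_right (u m v f : X) : M.excess u v f ≤ M.excess u v m + M.excess m v f := by
  have := M.dist_triangle u m f
  simp only [excess]
  omega

lemma excess_le_add_left (u m v f : X) : M.excess u v f ≤ M.excess u v m + M.excess u m f := by
  have := M.dist_triangle f m v
  simp only [excess]
  omega

lemma excess_le_add_dist (u v q q' : X) : M.excess u v q' ≤ M.excess u v q + 2 * M.dist q q' := by
  have := M.dist_triangle u q q'
  have := M.dist_triangle q' q v
  have := M.dist_comm q q'
  simp only [excess]
  omega

lemma excess_le_add_dist_right (u v v' q : X) :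
    M.excess u v' q ≤ M.excess u v q + 2 * M.dist v v' := by
  have := M.dist_triangle q v v'
  have := M.dist_triangle u v' v
  have := M.dist_comm v v'
  simp only [excess]
  omega

lemma excess_le_add_dist_left (u u' v q : X) :
    M.excess u' v q ≤ M.excess u v q + 2 * M.dist u u' := by
  rw [M.excess_comm u', M.excess_comm u]
  exact M.excess_le_add_dist_right _ _ _ _

lemma excess_self (u q : X) : M.excess u u q = 2 * M.dist u q := by
  simp only [excess, M.dist_comm q u, M.dist_self]
  omega

lemma excess_right_self (u v : X) : M.excess u v v = 0 := by
  simp [excess, M.dist_self]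

lemma excess_left_self (u v : X) : M.excess u v u = 0 := by
  simp [excess, M.dist_self]

lemma excess_le_dist_left (u v q : X) : M.excess u v q ≤ 2 * M.dist u q := by
  have := M.dist_triangle q u v
  have := M.dist_comm u q
  simp only [excess]
  omega

lemma excess_le_dist_right (u v q : X) : M.excess u v q ≤ 2 * M.dist v q := by
  rw [M.excess_comm]
  exact M.excess_le_dist_left _ _ _

lemma excess_add_excess (u p q : X) : M.excess u p q + M.excess u q p = 2 * M.dist p q := by
  have := M.dist_comm p q
  simp only [excess]
  omega

lemma two_mul_dist_le_excess_add (u m v q : X) :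
    2 * M.dist q m ≤ M.excess u m q + M.excess m v q + M.excess u v m := by
  have := M.dist_triangle u q v
  have := M.dist_comm q m
  simp only [excess]
  omega

lemma dist_le_of_excess_le {u v p q : X} {e e' : ℤ} (hq : M.excess u v q ≤ e)
    (hp : M.excess u v p ≤ e') (h : M.dist u p ≤ M.dist u q) :
    M.dist p q ≤ e + e' + M.δ + M.dist u q - M.dist u p := by
  have := M.dist_comm p q
  have := M.excess_nonneg u v p
  have := M.dist_triangle u q v
  have := M.dist_nonneg p q
  rcases M.excess_le_or_excess_le hq p with hup | hpv <;> simp only [excess] at * <;> omega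

lemma exists_geodesic_point {u v q : X} {e : ℤ} (hq : M.excess u v q ≤ e) :
    ∃ q', M.excess u v q' = 0 ∧ M.dist q q' ≤ e + M.δ := by
  by_cases hle : M.dist u q ≤ M.dist u v
  · obtain ⟨z, huz, hzv⟩ := M.exists_between u v (M.dist u q) (M.dist_nonneg _ _) hle
    have hz : M.excess u v z = 0 := by simp only [excess]; omega
    refine ⟨z, hz, ?_⟩
    have := M.dist_le_of_excess_le hq hz.le huz.le
    rw [M.dist_comm]
    omega
  · refine ⟨v, M.excess_right_self u v, ?_⟩
    have := M.one_le_δ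
    have := M.dist_nonneg q v
    simp only [excess] at *
    omega

lemma excess_le_of_endpoints {u v p p' f : X} {e e' η : ℤ} (hp : M.excess u v p ≤ e)
    (hp' : M.excess u v p' ≤ e') (he : 0 ≤ e) (he' : 0 ≤ e') (hf : M.excess p p' f ≤ η) :
    M.excess u v f ≤ e + e' + η + M.δ := by
  rcases M.excess_le_or_excess_le hf u with h | h
  · have := M.excess_le_add_left u p v f
    rw [M.excess_comm] at h
    omega
  · have := M.excess_le_add_left u p' v f
    omega

/-- In the interior of a subsegment the bound no longer depends on the excess `ε` of the ends. -/
lemma excess_le_of_far_endpoints {u v p p' f : X} {ε η : ℤ} (hp : M.excess u v p ≤ ε)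
    (hp' : M.excess u v p' ≤ ε) (hf : M.excess p p' f ≤ η)
    (hfp : 2 * η + 3 * M.δ + ε < 2 * M.dist f p) (hfp' : 2 * η + 3 * M.δ + ε < 2 * M.dist f p') :
    M.excess u v f ≤ η + 2 * M.δ := by
  have of_left : ∀ e : X, M.excess u v e ≤ ε → 2 * η + 3 * M.δ + ε < 2 * M.dist f e →
      M.excess u e f ≤ η + M.δ → M.excess u v f ≤ η + 2 * M.δ := by
    intro e he hfe hue
    rcases M.excess_le_or_excess_le hue v with huv | hve
    · omega
    · have := M.two_mul_dist_le_excess_add u e v f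
      rw [M.excess_comm v e] at hve
      omega
  rcases M.excess_le_or_excess_le hf u with h | h
  · rw [M.excess_comm] at h
    exact of_left p hp hfp h
  · exact of_left p' hp' hfp' h

/-- The points `P 0, …, P (k + 1)` form a local quasigeodesic: the path hardly turns back at the
vertices `P 1, …, P k`, and consecutive such vertices are far apart. -/
structure IsLocalQuasigeodesic (P : ℕ → X) (k : ℕ) : Prop where
  excess_le : ∀ i, i < k → M.excess (P i) (P (i + 2)) (P (i + 1)) ≤ 2 * M.δ
  lt_dist : ∀ i, i + 1 < k → 4 * M.δ < M.dist (P (i + 1)) (P (i + 2))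

namespace IsLocalQuasigeodesic

variable {M} {P : ℕ → X} {k : ℕ}

lemma shift (h : M.IsLocalQuasigeodesic P k) (a : ℕ) :
    M.IsLocalQuasigeodesic (fun i => P (a + i)) (k - a) where
  excess_le i hi := h.excess_le (a + i) (by omega)
  lt_dist i hi := h.lt_dist (a + i) (by omega)

lemma reverse (h : M.IsLocalQuasigeodesic P k) :
    M.IsLocalQuasigeodesic (fun i => P (k + 1 - i)) k where
  excess_le i hi := by
    have := h.excess_le (k - 1 - i) (by omega)
    rw [M.excess_comm, show k - 1 - i = k + 1 - (i + 2) by omega,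
      show k + 1 - (i + 2) + 2 = k + 1 - i by omega,
      show k + 1 - (i + 2) + 1 = k + 1 - (i + 1) by omega] at this
    exact this
  lt_dist i hi := by
    have := h.lt_dist (k - 2 - i) (by omega)
    rw [M.dist_comm, show k - 2 - i + 2 = k + 1 - (i + 1) by omega,
      show k - 2 - i + 1 = k + 1 - (i + 2) by omega] at this
    exact this

lemma excess_zero_succ_le (h : M.IsLocalQuasigeodesic P k) :
    ∀ b, b ≤ k → M.excess (P 0) (P (b + 1)) (P b) ≤ 3 * M.δ := by
  have hδ := M.one_le_δ
  intro b
  induction b with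
  | zero => intro _; rw [M.excess_left_self]; omega
  | succ b ih =>
    intro hb
    have hturn : M.excess (P b) (P (b + 1 + 1)) (P (b + 1)) ≤ 2 * M.δ := h.excess_le b (by omega)
    rcases M.excess_le_or_excess_le hturn (P 0) with hback | hforth
    · rcases b with _ | b
      · exact hturn.trans (by omega)
      · have := ih (by omega)
        have : 4 * M.δ < M.dist (P (b + 1)) (P (b + 1 + 1)) := h.lt_dist b (by omega)
        have := M.excess_add_excess (P 0) (P (b + 1)) (P (b + 1 + 1))
        rw [M.excess_comm] at hback
        omega
    · exact hforth.trans (by omega)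

lemma excess_succ_le (h : M.IsLocalQuasigeodesic P k) {a b : ℕ} (hab : a ≤ b) (hb : b ≤ k) :
    M.excess (P a) (P (b + 1)) (P b) ≤ 3 * M.δ := by
  have := (h.shift a).excess_zero_succ_le (b - a) (by omega)
  rwa [add_zero, show a + (b - a + 1) = b + 1 by omega, show a + (b - a) = b by omega] at this

lemma excess_next_le (h : M.IsLocalQuasigeodesic P k) {a c : ℕ} (hac : a < c)
    (hc : c ≤ k + 1) : M.excess (P a) (P c) (P (a + 1)) ≤ 3 * M.δ := by
  have := h.reverse.excess_succ_le (a := k + 1 - c) (b := k - a) (by omega) (by omega)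
  rwa [M.excess_comm, show k + 1 - (k + 1 - c) = c by omega,
    show k + 1 - (k - a) = a + 1 by omega, show k + 1 - (k - a + 1) = a by omega] at this

lemma excess_vertex_le (h : M.IsLocalQuasigeodesic P k) {a b c : ℕ} (hab : a ≤ b) (hbc : b ≤ c)
    (hc : c ≤ k + 1) : M.excess (P a) (P c) (P b) ≤ 4 * M.δ := by
  have hδ := M.one_le_δ
  rcases hbc.eq_or_lt with rfl | hbc
  · rw [M.excess_right_self]; omega
  rcases hab.eq_or_lt with rfl | hab
  · rw [M.excess_left_self]; omega
  have hprev := h.excess_succ_le hab.le (by omega)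
  have hnext := h.excess_next_le hbc hc
  rcases (Nat.succ_le_of_lt hbc).eq_or_lt with rfl | hbc'
  · exact hprev.trans (by omega)
  rcases M.excess_le_or_excess_le hprev (P c) with hac | hcb
  · omega
  · have hlong := h.lt_dist (b - 1) (by omega)
    rw [show b - 1 + 1 = b by omega, show b - 1 + 2 = b + 1 by omega] at hlong
    have := M.excess_add_excess (P c) (P b) (P (b + 1))
    rw [M.excess_comm] at hnext
    omega

lemma excess_le_of_near_side (h : M.IsLocalQuasigeodesic P k) {i : ℕ} (hi : i ≤ k) {q : X} {η : ℤ}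
    (hq : M.excess (P i) (P (i + 1)) q ≤ η) : M.excess (P 0) (P (k + 1)) q ≤ η + 7 * M.δ := by
  have := h.excess_vertex_le (Nat.zero_le i) (by omega) le_rfl
  have := M.excess_le_add_right (P 0) (P i) (P (k + 1)) q
  have := h.excess_next_le (a := i) (c := k + 1) (by omega) le_rfl
  have := M.excess_le_add_left (P i) (P (i + 1)) (P (k + 1)) q
  omega

lemma exists_near_side (h : M.IsLocalQuasigeodesic P k) {q : X} {ε : ℤ}
    (hε : 0 ≤ ε) (hq : M.excess (P 0) (P (k + 1)) q ≤ ε) :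
    ∃ i, i ≤ k ∧ M.excess (P i) (P (i + 1)) q ≤ 2 * ε + 7 * M.δ := by
  classical
  have hδ := M.one_le_δ
  have hex : ∃ i, M.excess (P 0) (P (i + 1)) q ≤ ε + M.δ := ⟨k, by omega⟩
  obtain ⟨n, hnear, hmin⟩ : ∃ n, M.excess (P 0) (P (n + 1)) q ≤ ε + M.δ ∧
      ∀ j < n, ¬ M.excess (P 0) (P (j + 1)) q ≤ ε + M.δ :=
    ⟨Nat.find hex, Nat.find_spec hex, fun j hj => Nat.find_min hex hj⟩
  have hnk : n ≤ k := by
    by_contra hlt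
    exact hmin k (by omega) (by omega)
  refine ⟨n, hnk, ?_⟩
  rcases n with _ | n
  · exact hnear.trans (by omega)
  have hfar := hmin n (by omega)
  rcases M.excess_le_or_excess_le hnear (P (n + 1)) with hpre | hside
  · rcases M.excess_le_or_excess_le hq (P (n + 1)) with hpre' | hpost
    · omega
    · have := M.two_mul_dist_le_excess_add (P 0) (P (n + 1)) (P (k + 1)) q
      have := h.excess_vertex_le (Nat.zero_le (n + 1)) (by omega) le_rfl
      have := M.excess_le_dist_left (P (n + 1)) (P (n + 1 + 1)) q
      have := M.dist_comm (P (n + 1)) q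
      omega
  · omega

end IsLocalQuasigeodesic

end DiscreteHyperbolicMetric

/-! ### Elements with a periodic geodesic axis -/

/-- A discrete hyperbolic metric on a group which is invariant under left translations and has
finite balls. -/
structure HyperbolicGroupMetric (Γ : Type*) [Group Γ] extends DiscreteHyperbolicMetric Γ where
  dist_mul_left : ∀ h x y, dist (h * x) (h * y) = dist x y
  finite_ball : ∀ r, {x | dist 1 x ≤ r}.Finite

namespace HyperbolicGroupMetric

variable {Γ : Type*} [Group Γ] (M : HyperbolicGroupMetric Γ)

lemma excess_mul_left (h u v q : Γ) : M.excess (h * u) (h * v) (h * q) = M.excess u v q := by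
  simp only [DiscreteHyperbolicMetric.excess, M.dist_mul_left]

lemma dist_one_inv_mul (x y : Γ) : M.dist 1 (x⁻¹ * y) = M.dist x y := by
  simpa using (M.dist_mul_left x 1 (x⁻¹ * y)).symm

lemma dist_one_inv (x : Γ) : M.dist 1 x⁻¹ = M.dist 1 x := by
  simpa [M.dist_comm x] using M.dist_one_inv_mul x 1

lemma dist_mul_right_self (x y : Γ) : M.dist x (x * y) = M.dist 1 y := by
  simpa using M.dist_mul_left x 1 y

lemma excess_one_inv_mul (u v q : Γ) : M.excess 1 (u⁻¹ * v) (u⁻¹ * q) = M.excess u v q := by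
  simpa using M.excess_mul_left u⁻¹ u v q

end HyperbolicGroupMetric

/-- A hyperbolic group metric together with an element `g` whose powers lie on a geodesic line, on
which `g` translates by `T`. The condition `T ≤ δ` makes the powers of `g` coarsely dense on that
line; it can be achieved by enlarging `δ`. -/
structure AxialMetric (Γ : Type*) [Group Γ] extends HyperbolicGroupMetric Γ where
  /-- The element translating along the axis. -/
  g : Γ
  /-- The translation length of `g`. -/
  T : ℤ
  one_le_T : 1 ≤ T
  T_le_δ : T ≤ δ
  dist_zpow : ∀ i j : ℤ, dist (g ^ i) (g ^ j) = T * |i - j|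

namespace AxialMetric

variable {Γ : Type*} [Group Γ] (M : AxialMetric Γ)

/-- The point with coordinate `i` on the axis of `a`, the translate by `a` of the axis of `g`. -/
def pt (a : Γ) (i : ℤ) : Γ := a * M.g ^ i

lemma pt_zero (a : Γ) : M.pt a 0 = a := by simp [pt]

lemma mul_pt (h a : Γ) (i : ℤ) : h * M.pt a i = M.pt (h * a) i := by simp [pt, mul_assoc]

lemma pt_pt (a : Γ) (i j : ℤ) : M.pt (M.pt a i) j = M.pt a (i + j) := by
  simp [pt, mul_assoc, zpow_add]

lemma dist_pt_pt (a : Γ) (i j : ℤ) : M.dist (M.pt a i) (M.pt a j) = M.T * |i - j| := by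
  simp [pt, M.dist_mul_left, M.dist_zpow]

lemma dist_pt_self (a : Γ) (i : ℤ) : M.dist (M.pt a i) a = M.T * |i| := by
  simpa [pt_zero] using M.dist_pt_pt a i 0

lemma dist_one_zpow (i : ℤ) : M.dist 1 (M.g ^ i) = M.T * |i| := by
  simpa using M.dist_zpow 0 i

lemma dist_pt_pt_of_le {a : Γ} {i j : ℤ} (h : i ≤ j) :
    M.dist (M.pt a i) (M.pt a j) = M.T * (j - i) := by
  rw [M.dist_pt_pt, abs_sub_comm, abs_of_nonneg (by omega)]

lemma abs_sub_le_dist_pt (a : Γ) (i j : ℤ) : |i - j| ≤ M.dist (M.pt a i) (M.pt a j) := by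
  rw [dist_pt_pt]
  exact le_mul_of_one_le_left (abs_nonneg _) M.one_le_T

lemma dist_pt_succ_le (a : Γ) (i : ℤ) : M.dist (M.pt a i) (M.pt a (i + 1)) ≤ M.δ := by
  rw [M.dist_pt_pt_of_le (by omega), add_sub_cancel_left, mul_one]
  exact M.T_le_δ

lemma excess_pt_eq_zero {a : Γ} {i t j : ℤ} (hit : i ≤ t) (htj : t ≤ j) :
    M.excess (M.pt a i) (M.pt a j) (M.pt a t) = 0 := by
  simp only [DiscreteHyperbolicMetric.excess]
  rw [M.dist_pt_pt_of_le hit, M.dist_pt_pt_of_le htj, M.dist_pt_pt_of_le (hit.trans htj)]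
  ring

lemma excess_self_pt_eq_zero {a : Γ} {t k : ℤ} (h₀ : min 0 k ≤ t) (hk : t ≤ max 0 k) :
    M.excess a (M.pt a k) (M.pt a t) = 0 := by
  rcases le_total 0 k with h | h
  · have := M.excess_pt_eq_zero (a := a) (i := 0) (t := t) (j := k) (by omega) (by omega)
    rwa [pt_zero] at this
  · have := M.excess_pt_eq_zero (a := a) (i := k) (t := t) (j := 0) (by omega) (by omega)
    rwa [pt_zero, M.excess_comm] at this

lemma abs_sub_le_dist_add_dist (a b : Γ) (i j : ℤ) :
    |i - j| ≤ M.dist b (M.pt a i) + M.dist b (M.pt a j) := by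
  have := M.abs_sub_le_dist_pt a i j
  have := M.dist_triangle (M.pt a i) b (M.pt a j)
  rw [M.dist_comm _ b] at this
  omega

lemma exists_pt_near_of_le {a : Γ} {i j : ℤ} (hij : i ≤ j) {q : Γ} {e : ℤ}
    (hq : M.excess (M.pt a i) (M.pt a j) q ≤ e) :
    ∃ t, i ≤ t ∧ t ≤ j ∧ M.dist q (M.pt a t) ≤ e + 2 * M.δ := by
  have hT := M.one_le_T
  have hTδ := M.T_le_δ
  by_cases hle : M.dist (M.pt a i) q ≤ M.dist (M.pt a i) (M.pt a j)
  · set r := M.dist (M.pt a i) q with hr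
    have hr0 : 0 ≤ r := M.dist_nonneg _ _
    have hdiv := Int.mul_ediv_add_emod r M.T
    have hmod := Int.emod_nonneg r (by omega : M.T ≠ 0)
    have hmod_lt := Int.emod_lt_of_pos r (by omega : 0 < M.T)
    have hquot : 0 ≤ r / M.T := Int.ediv_nonneg hr0 (by omega)
    rw [M.dist_pt_pt_of_le hij] at hle
    have hquot_le : r / M.T ≤ j - i := by
      by_contra! hlt
      nlinarith
    have hex := M.excess_pt_eq_zero (a := a) (i := i) (t := i + r / M.T) (j := j) (by omega)
      (by omega)
    have hdist : M.dist (M.pt a i) (M.pt a (i + r / M.T)) = M.T * (r / M.T) := by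
      rw [M.dist_pt_pt_of_le (by omega), add_sub_cancel_left]
    refine ⟨i + r / M.T, by omega, by omega, ?_⟩
    have := M.dist_le_of_excess_le hq hex.le (by omega)
    rw [M.dist_comm]
    omega
  · refine ⟨j, hij, le_rfl, ?_⟩
    have := M.dist_nonneg q (M.pt a j)
    have := M.one_le_δ
    simp only [DiscreteHyperbolicMetric.excess] at *
    omega

lemma exists_pt_near {a : Γ} {i j : ℤ} {q : Γ} {e : ℤ}
    (hq : M.excess (M.pt a i) (M.pt a j) q ≤ e) :
    ∃ t, min i j ≤ t ∧ t ≤ max i j ∧ M.dist q (M.pt a t) ≤ e + 2 * M.δ := by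
  rcases le_total i j with h | h
  · obtain ⟨t, hit, htj, ht⟩ := M.exists_pt_near_of_le h hq
    exact ⟨t, by omega, by omega, ht⟩
  · rw [M.excess_comm] at hq
    obtain ⟨t, hjt, hti, ht⟩ := M.exists_pt_near_of_le h hq
    exact ⟨t, by omega, by omega, ht⟩

end AxialMetric

namespace AxialMetric

variable {Γ : Type*} [Group Γ] (M : AxialMetric Γ)

/-- The translation by `k` periods along the axis of `a`, that is, the conjugate of `g ^ k`
by `a`. -/
def translation (a : Γ) (k : ℤ) : Γ := a * M.g ^ k * a⁻¹

lemma translation_zero (a : Γ) : M.translation a 0 = 1 := by simp [translation]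

lemma translation_add (a : Γ) (k l : ℤ) :
    M.translation a (k + l) = M.translation a k * M.translation a l := by
  simp only [translation, zpow_add]
  group

lemma translation_neg (a : Γ) (k : ℤ) : M.translation a (-k) = (M.translation a k)⁻¹ := by
  simp only [translation]
  group

lemma translation_zpow (a : Γ) (k l : ℤ) : M.translation a k ^ l = M.translation a (k * l) := by
  simp only [translation, conj_zpow, zpow_mul]

lemma translation_pt (a : Γ) (i k : ℤ) : M.translation (M.pt a i) k = M.translation a k := by
  simp only [translation, pt]
  group

lemma translation_mul_left (h a : Γ) (k : ℤ) :
    M.translation (h * a) k = h * M.translation a k * h⁻¹ := by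
  simp only [translation]
  group

lemma translation_mul_pt (a : Γ) (k i : ℤ) : M.translation a k * M.pt a i = M.pt a (k + i) := by
  simp only [translation, pt, zpow_add]
  group

lemma pt_mul_pt_inv (a : Γ) (i j : ℤ) : M.pt a i * (M.pt a j)⁻¹ = M.translation a (i - j) := by
  simp only [pt, translation, zpow_sub]
  group

/-- The axes of `a` and `b` agree as unoriented periodic lines: the translation by `n₀` along one is
the translation by `± n₀` along the other. -/
def Coaxial (n₀ : ℤ) (a b : Γ) : Prop :=
  M.translation a n₀ = M.translation b n₀ ∨ M.translation a n₀ = M.translation b (-n₀)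

namespace Coaxial

variable {M} {n₀ : ℤ} {a b c : Γ}

lemma symm (h : M.Coaxial n₀ a b) : M.Coaxial n₀ b a := by
  rcases h with h | h
  · exact Or.inl h.symm
  · exact Or.inr (by rw [translation_neg, h, translation_neg, inv_inv])

lemma trans (hab : M.Coaxial n₀ a b) (hbc : M.Coaxial n₀ b c) : M.Coaxial n₀ a c := by
  rcases hab with hab | hab <;> rcases hbc with hbc | hbc
  · exact Or.inl (hab.trans hbc)
  · exact Or.inr (hab.trans hbc)
  · exact Or.inr (by rw [hab, translation_neg, hbc, ← translation_neg])
  · exact Or.inl (by rw [hab, translation_neg, hbc, translation_neg, inv_inv])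

lemma mul_left (h : M.Coaxial n₀ a b) (x : Γ) : M.Coaxial n₀ (x * a) (x * b) := by
  rcases h with h | h
  · exact Or.inl (by rw [translation_mul_left, translation_mul_left, h])
  · exact Or.inr (by rw [translation_mul_left, translation_mul_left, h])

lemma pt_self (n₀ : ℤ) (a : Γ) (i : ℤ) : M.Coaxial n₀ (M.pt a i) a :=
  Or.inl (M.translation_pt a i n₀)

lemma exists_translation_eq (h : M.Coaxial n₀ a b) (k : ℤ) :
    ∃ l, M.translation a (n₀ * k) = M.translation b l := by
  rcases h with h | h
  · exact ⟨n₀ * k, by rw [← translation_zpow, h, translation_zpow]⟩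
  · exact ⟨-n₀ * k, by rw [← translation_zpow, h, translation_zpow]⟩

lemma of_dvd {n : ℤ} (h : M.Coaxial n₀ a b) (hn : n₀ ∣ n) : M.Coaxial n a b := by
  obtain ⟨k, rfl⟩ := hn
  rcases h with h | h
  · exact Or.inl (by rw [← translation_zpow, ← translation_zpow, h])
  · exact Or.inr (by rw [← translation_zpow, h, translation_zpow, neg_mul])

end Coaxial

lemma abs_le_of_conj_zpow_eq {h : Γ} {m k : ℤ} (hconj : h * M.g ^ m * h⁻¹ = M.g ^ k) :
    |m| ≤ |k| := by
  by_contra! hlt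
  have hT := M.one_le_T
  set t : ℤ := 2 * M.dist 1 h + 1
  have ht0 : 0 < t := by have := M.dist_nonneg 1 h; omega
  have hpow : M.g ^ (m * t) = h⁻¹ * M.g ^ (k * t) * h := by
    have : h * M.g ^ (m * t) * h⁻¹ = M.g ^ (k * t) := by
      rw [zpow_mul, zpow_mul, ← hconj, conj_zpow]
    rw [← this]
    group
  have hlen : M.dist 1 (M.g ^ (m * t)) ≤ 2 * M.dist 1 h + M.dist 1 (M.g ^ (k * t)) := by
    rw [hpow]
    have := M.dist_triangle 1 (h⁻¹) (h⁻¹ * M.g ^ (k * t) * h)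
    have := M.dist_triangle (h⁻¹) (h⁻¹ * M.g ^ (k * t)) (h⁻¹ * M.g ^ (k * t) * h)
    rw [M.dist_mul_right_self, M.dist_mul_right_self] at this
    rw [M.dist_one_inv] at *
    omega
  rw [dist_one_zpow, dist_one_zpow, abs_mul, abs_mul, abs_of_pos ht0] at hlen
  have : (|k| + 1) * t ≤ |m| * t := by nlinarith
  have : M.T * (|k| * t) + t ≤ M.T * (|m| * t) := by nlinarith
  omega

lemma abs_eq_of_conj_zpow_eq {h : Γ} {m k : ℤ} (hconj : h * M.g ^ m * h⁻¹ = M.g ^ k) :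
    |m| = |k| := by
  refine le_antisymm (M.abs_le_of_conj_zpow_eq hconj) (M.abs_le_of_conj_zpow_eq (h := h⁻¹) ?_)
  rw [← hconj]
  group

lemma coaxial_of_translation_eq {a b : Γ} {m k : ℤ} (h : M.translation a m = M.translation b k) :
    M.Coaxial m a b := by
  have hconj : b⁻¹ * a * M.g ^ m * (b⁻¹ * a)⁻¹ = M.g ^ k := by
    have : b⁻¹ * a * M.g ^ m * (b⁻¹ * a)⁻¹ = b⁻¹ * M.translation a m * b := by
      simp only [translation]
      group
    rw [this, h, translation]
    group
  rcases abs_eq_abs.1 (M.abs_eq_of_conj_zpow_eq hconj) with rfl | rfl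
  · exact Or.inl h
  · exact Or.inr (by rwa [neg_neg])

/-- Translates of the axis which are `c`-close at two places at least `θ` periods apart are
coaxial. -/
def IsOverlapBound (n₀ c θ : ℤ) : Prop :=
  ∀ a b : Γ, ∀ i₀ i₁ j₀ j₁ : ℤ, M.dist (M.pt a i₀) (M.pt b j₀) ≤ c →
    M.dist (M.pt a i₁) (M.pt b j₁) ≤ c → i₀ + θ ≤ i₁ → M.Coaxial n₀ a b

lemma exists_pt_near_of_endpoints {a b : Γ} {c i₀ i i₁ j₀ j₁ : ℤ}
    (h₀ : M.dist (M.pt a i₀) (M.pt b j₀) ≤ c) (h₁ : M.dist (M.pt a i₁) (M.pt b j₁) ≤ c)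
    (hi₀ : i₀ ≤ i) (hi₁ : i ≤ i₁) : ∃ j, M.dist (M.pt a i) (M.pt b j) ≤ 4 * c + 2 * M.δ := by
  have hi := M.excess_pt_eq_zero (a := a) hi₀ hi₁
  have hb₀ := M.excess_le_add_dist_left (M.pt a i₀) (M.pt b j₀) (M.pt a i₁) (M.pt a i)
  have hb₁ := M.excess_le_add_dist_right (M.pt b j₀) (M.pt a i₁) (M.pt b j₁) (M.pt a i)
  obtain ⟨j, -, -, hj⟩ := M.exists_pt_near (by omega :
    M.excess (M.pt b j₀) (M.pt b j₁) (M.pt a i) ≤ 4 * c)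
  exact ⟨j, hj⟩

lemma exists_pt_near_of_far_endpoints {a b : Γ} {c i₀ i i₁ j₀ j₁ : ℤ}
    (h₀ : M.dist (M.pt a i₀) (M.pt b j₀) ≤ c) (h₁ : M.dist (M.pt a i₁) (M.pt b j₁) ≤ c)
    (hi₀ : i₀ + (3 * M.δ + 2 * c) < i) (hi₁ : i + (3 * M.δ + 2 * c) < i₁) :
    ∃ j, M.dist (M.pt a i) (M.pt b j) ≤ 4 * M.δ := by
  have hδ := M.one_le_δ
  have := M.dist_nonneg (M.pt a i₀) (M.pt b j₀)
  have hex₀ := M.excess_le_dist_left (M.pt b j₀) (M.pt b j₁) (M.pt a i₀)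
  have hex₁ := M.excess_le_dist_right (M.pt b j₀) (M.pt b j₁) (M.pt a i₁)
  rw [M.dist_comm] at hex₀ hex₁
  have hi := M.excess_pt_eq_zero (a := a) (i := i₀) (t := i) (j := i₁) (by omega) (by omega)
  have hd₀ := M.abs_sub_le_dist_pt a i i₀
  have hd₁ := M.abs_sub_le_dist_pt a i i₁
  rw [abs_of_nonneg (by omega)] at hd₀
  rw [abs_sub_comm, abs_of_nonneg (by omega)] at hd₁
  have := M.excess_le_of_far_endpoints (hex₀.trans (by omega)) (hex₁.trans (by omega)) hi.le
    (ε := 2 * c) (by omega) (by omega)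
  obtain ⟨j, -, -, hj⟩ := M.exists_pt_near this
  exact ⟨j, by omega⟩

/-- Pigeonhole: two of the points `pt a (i₀ + i)` have the same position relative to nearby points
of the axis of `b`. -/
lemma exists_translation_eq_of_overlap {a b : Γ} {c i₀ i₁ j₀ j₁ : ℤ}
    (h₀ : M.dist (M.pt a i₀) (M.pt b j₀) ≤ c) (h₁ : M.dist (M.pt a i₁) (M.pt b j₁) ≤ c)
    (hi : i₀ + (M.finite_ball (4 * c + 2 * M.δ)).toFinset.card ≤ i₁) :
    ∃ m k : ℤ, 0 < m ∧ m ≤ (M.finite_ball (4 * c + 2 * M.δ)).toFinset.card ∧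
      M.translation a m = M.translation b k := by
  set B := (M.finite_ball (4 * c + 2 * M.δ)).toFinset with hB
  have hnear : ∀ i : ℕ, i < B.card + 1 →
      ∃ j, M.dist (M.pt a (i₀ + i)) (M.pt b j) ≤ 4 * c + 2 * M.δ := fun i hi =>
    M.exists_pt_near_of_endpoints h₀ h₁ (by omega) (by omega)
  choose! j hj using hnear
  have hmem : ∀ i ∈ Finset.range (B.card + 1), (M.pt a (i₀ + i))⁻¹ * M.pt b (j i) ∈ B := by
    intro i hi
    rw [hB, Set.Finite.mem_toFinset, Set.mem_ofPred_eq, M.dist_one_inv_mul]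
    exact hj i (Finset.mem_range.1 hi)
  obtain ⟨x, hx, y, hy, hxy, heq⟩ := Finset.exists_ne_map_eq_of_card_lt_of_maps_to
    (by simp : B.card < (Finset.range (B.card + 1)).card) hmem
  wlog hlt : x < y generalizing x y
  · exact this y hy x hx hxy.symm heq.symm (by omega)
  simp only [Finset.mem_range] at hx hy
  refine ⟨y - x, j y - j x, by omega, by omega, ?_⟩
  have hrel : M.pt b (j y) * (M.pt b (j x))⁻¹ = M.pt a (i₀ + y) * (M.pt a (i₀ + x))⁻¹ := by
    rw [inv_mul_eq_iff_eq_mul, ← mul_assoc] at heq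
    rw [mul_inv_eq_iff_eq_mul, heq]
    group
  rw [← M.pt_mul_pt_inv b, hrel, pt_mul_pt_inv]
  congr 1
  ring

lemma exists_isOverlapBound (c : ℤ) :
    ∃ n₀ : ℤ, 1 ≤ n₀ ∧ ∃ θ : ℤ, 0 ≤ θ ∧ M.IsOverlapBound n₀ c θ := by
  set N := (M.finite_ball (4 * c + 2 * M.δ)).toFinset.card
  refine ⟨N.factorial, by exact_mod_cast N.factorial_pos, N, by omega, ?_⟩
  intro a b i₀ i₁ j₀ j₁ h₀ h₁ hi
  obtain ⟨m, k, hm0, hmN, heq⟩ := M.exists_translation_eq_of_overlap h₀ h₁ hi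
  lift m to ℕ using hm0.le
  refine (M.coaxial_of_translation_eq heq).of_dvd ?_
  exact_mod_cast Nat.dvd_factorial (by omega) (by omega)

/-- One exponent `n₀` serves for all `c`: long overlaps at scale `c` contain long overlaps at scale
`4 * δ`. -/
lemma exists_forall_isOverlapBound :
    ∃ n₀ : ℤ, 1 ≤ n₀ ∧ ∀ c : ℤ, ∃ θ : ℤ, 0 ≤ θ ∧ M.IsOverlapBound n₀ c θ := by
  obtain ⟨n₀, hn₀, θ, hθ, hbound⟩ := M.exists_isOverlapBound (4 * M.δ)
  refine ⟨n₀, hn₀, fun c => ?_⟩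
  have hδ := M.one_le_δ
  have hc := le_abs_self c
  have hc0 := abs_nonneg c
  refine ⟨θ + 2 * (3 * M.δ + 2 * |c| + 1), by omega, ?_⟩
  intro a b i₀ i₁ j₀ j₁ h₀ h₁ hi
  obtain ⟨j, hj⟩ := M.exists_pt_near_of_far_endpoints (i := i₀ + (3 * M.δ + 2 * |c| + 1)) h₀ h₁
    (by omega) (by omega)
  obtain ⟨j', hj'⟩ := M.exists_pt_near_of_far_endpoints (i := i₁ - (3 * M.δ + 2 * |c| + 1)) h₀ h₁
    (by omega) (by omega)
  exact hbound a b _ _ _ _ hj hj' (by omega)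

/-- Both ends of the axis of `a` stay at bounded distance from the axis of `b`. -/
lemma exists_pt_near_of_coaxial {n₀ : ℤ} (hn₀ : 1 ≤ n₀) {a b : Γ} (h : M.Coaxial n₀ a b) :
    ∃ j, M.dist a (M.pt b j) ≤ 4 * M.δ := by
  have hδ := M.one_le_δ
  set r := M.dist a b
  have hr0 : 0 ≤ r := M.dist_nonneg _ _
  have hperiodic : ∀ t : ℤ, ∃ j, M.dist (M.pt a (n₀ * t)) (M.pt b j) ≤ r := by
    intro t
    obtain ⟨l, hl⟩ := h.exists_translation_eq t
    refine ⟨l, le_of_eq ?_⟩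
    have ha := M.translation_mul_pt a (n₀ * t) 0
    have hb := M.translation_mul_pt b l 0
    rw [add_zero, pt_zero] at ha hb
    rw [← ha, ← hb, hl, M.dist_mul_left]
  have hlong : 3 * M.δ + 2 * r < n₀ * (3 * M.δ + 2 * r + 1) := by nlinarith
  obtain ⟨j₀, h₀⟩ := hperiodic (-(3 * M.δ + 2 * r + 1))
  obtain ⟨j₁, h₁⟩ := hperiodic (3 * M.δ + 2 * r + 1)
  rw [mul_neg] at h₀
  obtain ⟨j, hj⟩ := M.exists_pt_near_of_far_endpoints (i := 0) h₀ h₁ (by omega) (by omega)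
  exact ⟨j, by rwa [pt_zero] at hj⟩

lemma exists_not_coaxial_one (hne : IsNonElementaryGroup Γ) {n₀ : ℤ} (hn₀ : 1 ≤ n₀) :
    ∃ h : Γ, ¬ M.Coaxial n₀ h 1 := by
  by_contra! hall
  have : Finite {x | M.dist 1 x ≤ 4 * M.δ} := M.finite_ball (4 * M.δ)
  have hsurj : Function.Surjective (fun b : {x | M.dist 1 x ≤ 4 * M.δ} =>
      (QuotientGroup.mk (b : Γ) : Γ ⧸ Subgroup.zpowers M.g)) := by
    intro q
    obtain ⟨x, rfl⟩ := QuotientGroup.mk_surjective q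
    obtain ⟨j, hj⟩ := M.exists_pt_near_of_coaxial hn₀ (hall x⁻¹)
    rw [← M.dist_one_inv_mul, inv_inv, pt, one_mul] at hj
    refine ⟨⟨x * M.g ^ j, hj⟩, QuotientGroup.eq.2 ?_⟩
    simp only [mul_inv_rev, inv_mul_cancel_right]
    exact inv_mem (zpow_mem (Subgroup.mem_zpowers _) _)
  have : Finite (Γ ⧸ Subgroup.zpowers M.g) := Finite.of_surjective _ hsurj
  exact Subgroup.index_ne_zero_of_finite (hne M.g)

end AxialMetric

/-- An axial metric together with bounds for the overlaps of non-coaxial translates of the axis, and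
an element `h₀` moving the axis. -/
structure AxisSystem (Γ : Type*) [Group Γ] extends AxialMetric Γ where
  /-- The period used to compare axes. -/
  n₀ : ℤ
  one_le_n₀ : 1 ≤ n₀
  exists_isOverlapBound : ∀ c : ℤ, ∃ θ : ℤ, 0 ≤ θ ∧ toAxialMetric.IsOverlapBound n₀ c θ
  /-- An element moving the axis of `g` to another one. -/
  h₀ : Γ
  h₀_not_coaxial : ¬ toAxialMetric.Coaxial n₀ h₀ 1

lemma AxialMetric.exists_axisSystem {Γ : Type*} [Group Γ] (M : AxialMetric Γ)
    (hne : IsNonElementaryGroup Γ) : ∃ M' : AxisSystem Γ, M'.toAxialMetric = M := by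
  obtain ⟨n₀, hn₀, hbound⟩ := M.exists_forall_isOverlapBound
  obtain ⟨h₀, hh₀⟩ := M.exists_not_coaxial_one hne hn₀
  exact ⟨{ M with
    n₀ := n₀, one_le_n₀ := hn₀, exists_isOverlapBound := hbound, h₀ := h₀, h₀_not_coaxial := hh₀ },
    rfl⟩

namespace AxisSystem

variable {Γ : Type*} [Group Γ] (M : AxisSystem Γ)

/-- The number of periods along which two non-coaxial axes can stay `c`-close. -/
noncomputable def overlapBound (c : ℤ) : ℤ := (M.exists_isOverlapBound c).choose

lemma overlapBound_nonneg (c : ℤ) : 0 ≤ M.overlapBound c :=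
  (M.exists_isOverlapBound c).choose_spec.1

lemma coaxial_of_dist_le {c : ℤ} {a b : Γ} {i₀ i₁ j₀ j₁ : ℤ}
    (h₀ : M.dist (M.pt a i₀) (M.pt b j₀) ≤ c) (h₁ : M.dist (M.pt a i₁) (M.pt b j₁) ≤ c)
    (hi : M.overlapBound c ≤ |i₁ - i₀|) : M.Coaxial M.n₀ a b := by
  have hbound : M.IsOverlapBound M.n₀ c (M.overlapBound c) :=
    (M.exists_isOverlapBound c).choose_spec.2
  rcases abs_choice (i₁ - i₀) with habs | habs <;> rw [habs] at hi
  · exact hbound a b i₀ i₁ j₀ j₁ h₀ h₁ (by omega)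
  · exact hbound a b i₁ i₀ j₁ j₀ h₁ h₀ (by omega)

lemma abs_sub_lt_of_not_coaxial {c : ℤ} {a b : Γ} {i₀ i₁ j₀ j₁ : ℤ} (hab : ¬ M.Coaxial M.n₀ a b)
    (h₀ : M.excess (M.pt b j₀) (M.pt b j₁) (M.pt a i₀) ≤ c)
    (h₁ : M.excess (M.pt b j₀) (M.pt b j₁) (M.pt a i₁) ≤ c) :
    |i₁ - i₀| < M.overlapBound (c + 2 * M.δ) := by
  by_contra! hle
  obtain ⟨t, -, -, ht⟩ := M.exists_pt_near h₀
  obtain ⟨t', -, -, ht'⟩ := M.exists_pt_near h₁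
  exact hab (M.coaxial_of_dist_le ht ht' hle)

end AxisSystem

/-! ### Windmills -/

lemma card_le_of_forall_abs_sub_le {S : Finset ℤ} {B : ℤ} (hB : 0 ≤ B)
    (h : ∀ x ∈ S, ∀ y ∈ S, |x - y| ≤ B) : (S.card : ℤ) ≤ B + 1 := by
  rcases S.eq_empty_or_nonempty with rfl | hne
  · rw [Finset.card_empty]
    omega
  have hsub : S ⊆ Finset.Icc (S.min' hne) (S.min' hne + B) := fun x hx => by
    have := S.min'_le x hx
    have := (abs_le.1 (h x hx _ (S.min'_mem hne))).2
    exact Finset.mem_Icc.2 (by omega)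
  have := Finset.card_le_card hsub
  rw [Int.card_Icc] at this
  omega

lemma sub_lt_sum_of_cover {ι : Type*} [Fintype ι] {i j : ℤ} {P : ι → ℤ → Prop} {B : ι → ℤ}
    (hB : ∀ k, 0 ≤ B k) (hcover : ∀ t, i ≤ t → t ≤ j → ∃ k, P k t)
    (hdiam : ∀ k x y, P k x → P k y → |x - y| ≤ B k) : j - i < ∑ k, (B k + 1) := by
  classical
  have hsub : Finset.Icc i j ⊆ Finset.univ.biUnion fun k => (Finset.Icc i j).filter (P k) := by
    intro t ht
    obtain ⟨k, hk⟩ := hcover t (Finset.mem_Icc.1 ht).1 (Finset.mem_Icc.1 ht).2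
    exact Finset.mem_biUnion.2 ⟨k, Finset.mem_univ k, Finset.mem_filter.2 ⟨ht, hk⟩⟩
  have hcard : ((Finset.Icc i j).card : ℤ) ≤ ∑ k, (B k + 1) := by
    calc ((Finset.Icc i j).card : ℤ)
        ≤ ∑ k, (((Finset.Icc i j).filter (P k)).card : ℤ) := by
          exact_mod_cast (Finset.card_le_card hsub).trans Finset.card_biUnion_le
      _ ≤ ∑ k, (B k + 1) := Finset.sum_le_sum fun k _ =>
          card_le_of_forall_abs_sub_le (hB k) fun x hx y hy =>
            hdiam k x y (Finset.mem_filter.1 hx).2 (Finset.mem_filter.1 hy).2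
  rw [Int.card_Icc] at hcard
  omega

lemma DiscreteHyperbolicMetric.excess_le_side_of_hexagon {X : Type*}
    (M : DiscreteHyperbolicMetric X) {z p h z' p' h' q : X} {e : ℤ} (hq : M.excess z z' q ≤ e) :
    M.excess p z q ≤ e + 3 * M.δ ∨ M.excess h p q ≤ e + 3 * M.δ ∨ M.excess h h' q ≤ e + 3 * M.δ ∨
      M.excess h' p' q ≤ e + 3 * M.δ ∨ M.excess p' z' q ≤ e + 3 * M.δ := by
  have hδ := M.one_le_δ
  rw [M.excess_comm p z, M.excess_comm h p]
  rcases M.excess_le_or_excess_le hq h with hzh | hhz'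
  · rcases M.excess_le_or_excess_le hzh p with hzp | hph <;> omega
  · rcases M.excess_le_or_excess_le hhz' h' with hhh' | hh'z'
    · omega
    · rcases M.excess_le_or_excess_le hh'z' p' with hh'p' | hp'z' <;> omega

lemma DiscreteHyperbolicMetric.dist_le_of_excess_le_of_le_dist {X : Type*}
    (M : DiscreteHyperbolicMetric X) {h p f f' : X} {E ρ ρ' : ℤ} (hf : M.excess h p f ≤ E)
    (hf' : M.excess h p f' ≤ E) (hρ : ρ ≤ M.dist h f) (hρ' : ρ ≤ M.dist h f')
    (hp : M.dist h p ≤ ρ') : M.dist f f' ≤ 3 * E + M.δ + (ρ' - ρ) := by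
  have := M.dist_nonneg f p
  have := M.dist_nonneg f' p
  rcases le_total (M.dist h f) (M.dist h f') with hle | hle
  · have := M.dist_le_of_excess_le hf' hf hle
    simp only [DiscreteHyperbolicMetric.excess] at hf hf'
    omega
  · have := M.dist_le_of_excess_le hf hf' hle
    rw [M.dist_comm f f']
    simp only [DiscreteHyperbolicMetric.excess] at hf hf'
    omega

namespace AxialMetric

variable {Γ : Type*} [Group Γ] (M : AxialMetric Γ)

lemma exists_pt_near_of_excess_self_pt {p f : Γ} {l E : ℤ} (hf : M.excess p (M.pt p l) f ≤ E) :
    ∃ t, M.dist f (M.pt p t) ≤ E + 2 * M.δ := by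
  rw [← M.pt_zero p, M.pt_pt, zero_add] at hf
  obtain ⟨t, -, -, ht⟩ := M.exists_pt_near hf
  exact ⟨t, ht⟩

lemma dist_le_of_near_pt {p f : Γ} {t E B : ℤ} (hf : M.dist f (M.pt p t) ≤ E) (ht : |t| ≤ B) :
    M.dist p f ≤ E + M.T * B := by
  have := M.dist_triangle p (M.pt p t) f
  have := M.dist_comm p (M.pt p t)
  have := M.dist_comm f (M.pt p t)
  have := M.dist_pt_self p t
  have := mul_le_mul_of_nonneg_left ht (by have := M.one_le_T; omega : 0 ≤ M.T)
  omega

/-- The point `p` is a nearest point projection of `h` to the axis of `p`. -/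
def IsFoot (h p : Γ) : Prop := ∀ t, M.dist h p ≤ M.dist h (M.pt p t)

lemma exists_lt_mul_le : ∃ t : ℤ, 0 < t ∧ M.δ < M.T * t ∧ M.T * t ≤ M.δ + M.T := by
  have hδ := M.one_le_δ
  have hT := M.one_le_T
  have hdiv := Int.mul_ediv_add_emod M.δ M.T
  have hmod := Int.emod_nonneg M.δ (by omega : M.T ≠ 0)
  have hmod_lt := Int.emod_lt_of_pos M.δ (by omega : 0 < M.T)
  have hquot : 0 ≤ M.δ / M.T := Int.ediv_nonneg (by omega) (by omega)
  exact ⟨M.δ / M.T + 1, by omega, by rw [mul_add]; omega, by rw [mul_add]; omega⟩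

variable {M}

lemma IsFoot.excess_le {h p : Γ} (hp : M.IsFoot h p) (k : ℤ) :
    M.excess h (M.pt p k) p ≤ 3 * M.δ := by
  have hδ := M.one_le_δ
  have hT := M.one_le_T
  obtain ⟨t, ht0, hlt, hle⟩ := M.exists_lt_mul_le
  have hdk := M.dist_pt_self p k
  by_cases hk : |k| < t
  · have := M.excess_le_dist_right h (M.pt p k) p
    have : M.T * |k| ≤ M.T * (t - 1) := mul_le_mul_of_nonneg_left (by omega) (by omega)
    rw [mul_sub] at this
    omega
  · obtain ⟨t', ht', hbet⟩ : ∃ t' : ℤ, |t'| = t ∧ |k - t'| = |k| - t := by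
      rcases abs_choice k with habs | habs <;> rw [habs] at hk ⊢
      · exact ⟨t, abs_of_pos ht0, abs_of_nonneg (by omega)⟩
      · exact ⟨-t, by rw [abs_neg, abs_of_pos ht0],
          by rw [abs_of_nonpos (by omega)]; ring⟩
    have hdt := M.dist_pt_self p t'
    have hdkt := M.dist_pt_pt p k t'
    rw [ht'] at hdt
    rw [hbet, mul_sub] at hdkt
    have := M.dist_comm p (M.pt p t')
    have := M.dist_comm p (M.pt p k)
    have := hp t'
    have := M.four_point h (M.pt p t') (M.pt p k) p
    have := M.dist_comm (M.pt p t') (M.pt p k)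
    have := M.T_le_δ
    simp only [DiscreteHyperbolicMetric.excess] at *
    omega

lemma IsFoot.two_mul_dist_le {h p : Γ} (hp : M.IsFoot h p) {t E : ℤ}
    (ht : M.excess h p (M.pt p t) ≤ E) : 2 * M.dist p (M.pt p t) ≤ E + 3 * M.δ := by
  have := M.excess_add_excess h p (M.pt p t)
  have := hp.excess_le t
  omega

variable (M) in
lemma exists_isFoot (h p : Γ) : ∃ i, M.IsFoot h (M.pt p i) := by
  refine ⟨Function.argmin fun t => (M.dist h (M.pt p t)).toNat, fun t => ?_⟩
  rw [M.pt_pt]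
  have := Function.argmin_le (fun t => (M.dist h (M.pt p t)).toNat)
    (Function.argmin (fun t => (M.dist h (M.pt p t)).toNat) + t)
  have := M.dist_nonneg h (M.pt p (Function.argmin (fun t => (M.dist h (M.pt p t)).toNat) + t))
  omega

end AxialMetric

namespace AxisSystem

variable {Γ : Type*} [Group Γ] (M : AxisSystem Γ)

/-- The properties of the subgroup `H` maintained when it is enlarged step by step to the normal
closure of `g ^ n`. The group `H` contains the `n`-th translation along every axis meeting the
`r`-neighbourhood of `1`; the convex hull of `H` meets any other axis along at most `K` periods; a
geodesic between points of `H` leaving the `(r + τ)`-neighbourhood of `H` does so along an axis; and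
a geodesic from `1` to another point of `H` contains a segment of nearly `n` periods of an axis. -/
structure IsWindmill (n K τ κ r : ℤ) (H : Subgroup Γ) : Prop where
  translation_mem : ∀ a, M.dist 1 a < r → M.translation a n ∈ H
  abs_sub_le : ∀ a, M.translation a n ∉ H → ∀ v ∈ H, ∀ i j, M.excess 1 v (M.pt a i) ≤ 2 * M.δ →
    M.excess 1 v (M.pt a j) ≤ 2 * M.δ → |i - j| ≤ K
  exists_axis_of_far : ∀ u ∈ H, ∀ v ∈ H, ∀ q₁ q₂, M.excess u v q₁ = 0 → M.excess q₁ v q₂ = 0 →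
    (∀ y, M.excess q₁ q₂ y = 0 → ∀ h ∈ H, r + τ ≤ M.dist h y) →
    ∃ a i j, M.translation a n ∈ H ∧ M.dist q₁ (M.pt a i) ≤ 4 * M.δ ∧
      M.dist q₂ (M.pt a j) ≤ 4 * M.δ
  exists_long_axis : ∀ v ∈ H, v ≠ 1 →
    ∃ a, ∀ t, 0 ≤ t → t ≤ n - κ → M.excess 1 v (M.pt a t) ≤ 10 * M.δ

/-- A path from a point `h` of `H`, through the point `p` at distance less than `r'` from `h`, to
`z`, where either the whole path is constant, or `z` lies on the axis of `p`, the translation along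
this axis is not in `H`, and `p` is the foot of `h` on it. -/
structure IsArm (n r' : ℤ) (H : Subgroup Γ) (z p h : Γ) : Prop where
  mem : h ∈ H
  dist_lt : M.dist h p < r'
  eq_or_isFoot : (z = p ∧ p = h) ∨
    (M.translation p n ∉ H ∧ M.IsFoot h p ∧ ∃ l, z = M.pt p l)

variable {M} {n K τ κ r r' : ℤ} {H : Subgroup Γ}

lemma translation_mem_of_coaxial (hn : M.n₀ ∣ n) {a b : Γ} (hab : M.Coaxial M.n₀ a b)
    (ha : M.translation a n ∈ H) : M.translation b n ∈ H := by
  rcases hab.symm.of_dvd hn with h | h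
  · rwa [h]
  · rw [h, M.translation_neg]
    exact H.inv_mem ha

lemma translation_mul_mem_iff {a h : Γ} (hh : h ∈ H) :
    M.translation (h * a) n ∈ H ↔ M.translation a n ∈ H := by
  rw [M.translation_mul_left, H.mul_mem_cancel_right (H.inv_mem hh), H.mul_mem_cancel_left hh]

namespace IsWindmill

lemma le_dist_pt (I : M.IsWindmill n K τ κ r H) {a : Γ} (ha : M.translation a n ∉ H) {h : Γ}
    (hh : h ∈ H) (k : ℤ) : r ≤ M.dist h (M.pt a k) := by
  by_contra! hlt
  have := I.translation_mem (h⁻¹ * M.pt a k) (by rwa [M.dist_one_inv_mul])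
  rw [M.mul_pt, M.translation_pt, translation_mul_mem_iff (H.inv_mem hh)] at this
  exact ha this

lemma abs_sub_le_of_excess_le (I : M.IsWindmill n K τ κ r H) (hK : 0 ≤ K) {a : Γ}
    (ha : M.translation a n ∉ H) {u v : Γ} (hu : u ∈ H) (hv : v ∈ H) {E i j : ℤ}
    (hi : M.excess u v (M.pt a i) ≤ E) (hj : M.excess u v (M.pt a j) ≤ E) :
    |i - j| ≤ K + 2 * (3 * M.δ + E + 1) := by
  have hδ := M.one_le_δ
  have hE : 0 ≤ E := (M.excess_nonneg _ _ _).trans hi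
  wlog hij : i ≤ j generalizing i j
  · rw [abs_sub_comm]
    exact this hj hi (by omega)
  rw [abs_sub_comm, abs_of_nonneg (by omega)]
  by_contra! hlt
  have hinterior : ∀ t, i + (3 * M.δ + E + 1) ≤ t → t + (3 * M.δ + E + 1) ≤ j →
      M.excess 1 (u⁻¹ * v) (M.pt (u⁻¹ * a) t) ≤ 2 * M.δ := by
    intro t hit htj
    rw [← M.mul_pt, M.excess_one_inv_mul]
    have hx := M.excess_pt_eq_zero (a := a) (i := i) (t := t) (j := j) (by omega) (by omega)
    have hdi := M.abs_sub_le_dist_pt a t i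
    have hdj := M.abs_sub_le_dist_pt a t j
    rw [abs_of_nonneg (by omega)] at hdi
    rw [abs_sub_comm, abs_of_nonneg (by omega)] at hdj
    have := M.excess_le_of_far_endpoints hi hj hx.le (by omega) (by omega)
    omega
  have := I.abs_sub_le (u⁻¹ * a) (by rwa [translation_mul_mem_iff (H.inv_mem hu)]) (u⁻¹ * v)
    (H.mul_mem (H.inv_mem hu) hv) (i + (3 * M.δ + E + 1)) (j - (3 * M.δ + E + 1))
    (hinterior _ (by omega) (by omega)) (hinterior _ (by omega) (by omega))
  have := (abs_le.1 this).1
  omega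

end IsWindmill

lemma abs_sub_le_of_excess_self_pt_le {p b : Γ} (hpb : ¬ M.Coaxial M.n₀ p b) {l E i j : ℤ}
    (hi : M.excess p (M.pt p l) (M.pt b i) ≤ E) (hj : M.excess p (M.pt p l) (M.pt b j) ≤ E) :
    |i - j| < M.overlapBound (E + 2 * M.δ) := by
  rw [← M.pt_zero p, M.pt_pt, zero_add] at hi hj
  exact M.abs_sub_lt_of_not_coaxial (fun hbp => hpb hbp.symm) hj hi

lemma IsArm.abs_sub_le {z p h : Γ} (A : M.IsArm n r' H z p h) {b : Γ}
    (hb : z = p ∨ ¬ M.Coaxial M.n₀ p b) {E i j : ℤ} (hi : M.excess p z (M.pt b i) ≤ E)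
    (hj : M.excess p z (M.pt b j) ≤ E) : |i - j| ≤ M.overlapBound (E + 2 * M.δ) + E := by
  have hE : 0 ≤ E := (M.excess_nonneg _ _ _).trans hi
  have hpos := M.overlapBound_nonneg (E + 2 * M.δ)
  have of_eq : z = p → |i - j| ≤ M.overlapBound (E + 2 * M.δ) + E := by
    rintro rfl
    rw [M.excess_self] at hi hj
    have := M.abs_sub_le_dist_add_dist b z i j
    omega
  rcases hb with hzp | hpb
  · exact of_eq hzp
  rcases A.eq_or_isFoot with ⟨hzp, -⟩ | ⟨-, -, l, rfl⟩
  · exact of_eq hzp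
  · have := abs_sub_le_of_excess_self_pt_le hpb hi hj
    omega

end AxisSystem

namespace AxisSystem

variable {Γ : Type*} [Group Γ]

/-- The number of periods along which the initial segment of an axis at its foot can follow an arm
of a windmill of radius `r + s`. -/
noncomputable def cornerOverlap (M : AxisSystem Γ) (K s : ℤ) : ℤ :=
  (M.overlapBound (6 * M.δ) + 4 * M.δ) + (13 * M.δ + s) + (K + 2 * (7 * M.δ + 1)) + 7 * M.δ +
    4 * M.δ + 5

/-- A bound for the excess at a corner between an arm of a windmill and a new axis. -/
noncomputable def cornerBound (M : AxisSystem Γ) (K s : ℤ) : ℤ := M.T * M.cornerOverlap K s + M.δ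

variable {M : AxisSystem Γ} {n K τ κ r r' s : ℤ} {H : Subgroup Γ}

lemma cornerOverlap_nonneg (hK : 0 ≤ K) (hs : 0 ≤ s) : 0 ≤ M.cornerOverlap K s := by
  have := M.one_le_δ
  have := M.overlapBound_nonneg (6 * M.δ)
  unfold cornerOverlap
  omega

lemma sub_lt_cornerOverlap (I : M.IsWindmill n K τ κ r H) (hK : 0 ≤ K) (hs : 0 ≤ s)
    {z p h p' h' : Γ} (A : M.IsArm n (r + s) H z p h) (hh' : h' ∈ H)
    (hp' : M.translation p' n ∉ H) (hfoot : M.IsFoot h' p') (hzp : z = p ∨ ¬ M.Coaxial M.n₀ p p')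
    {i j : ℤ} (hij : ∀ t, i ≤ t → t ≤ j → M.excess z p' (M.pt p' t) ≤ M.δ) :
    j - i < M.cornerOverlap K s := by
  have hδ := M.one_le_δ
  have hθ := M.overlapBound_nonneg (6 * M.δ)
  let near (a b : Γ) (t : ℤ) : Prop := M.excess a b (M.pt p' t) ≤ 4 * M.δ
  have hcover := sub_lt_sum_of_cover (i := i) (j := j)
    (P := ![near p z, near h p, near h h', near h' p', near p' p'])
    (B := ![M.overlapBound (6 * M.δ) + 4 * M.δ, 13 * M.δ + s, K + 2 * (7 * M.δ + 1), 7 * M.δ,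
      4 * M.δ]) ?_ ?_ ?_
  · simp only [Fin.sum_univ_five, Matrix.cons_val] at hcover
    unfold cornerOverlap
    omega
  · intro k
    fin_cases k <;> simp only [Fin.mk_one, Fin.zero_eta, Fin.reduceFinMk, Matrix.cons_val] <;> omega
  · intro t hit htj
    have hside := M.excess_le_side_of_hexagon (p := p) (h := h) (h' := h') (p' := p')
      (hij t hit htj)
    rw [show M.δ + 3 * M.δ = 4 * M.δ by ring] at hside
    rcases hside with hside | hside | hside | hside | hside
    exacts [⟨0, hside⟩, ⟨1, hside⟩, ⟨2, hside⟩, ⟨3, hside⟩, ⟨4, hside⟩]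
  · intro k
    fin_cases k <;> intro x y (hx : M.excess _ _ _ ≤ _) (hy : M.excess _ _ _ ≤ _) <;>
      simp only [Fin.mk_one, Fin.zero_eta, Fin.reduceFinMk, Matrix.cons_val]
    · have := A.abs_sub_le hzp hx hy
      rwa [show 4 * M.δ + 2 * M.δ = 6 * M.δ by ring] at this
    · refine (M.abs_sub_le_dist_pt p' x y).trans ?_
      have := M.dist_le_of_excess_le_of_le_dist hx hy (I.le_dist_pt hp' A.mem x)
        (I.le_dist_pt hp' A.mem y) A.dist_lt.le
      exact this.trans (by omega)
    · exact (I.abs_sub_le_of_excess_le hK hp' A.mem hh' hx hy).trans (by omega)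
    · have := hfoot.two_mul_dist_le hx
      have := hfoot.two_mul_dist_le hy
      exact (M.abs_sub_le_dist_add_dist p' p' x y).trans (by omega)
    · rw [M.excess_self] at hx hy
      exact (M.abs_sub_le_dist_add_dist p' p' x y).trans (by omega)

lemma excess_le_cornerBound (I : M.IsWindmill n K τ κ r H) (hK : 0 ≤ K) (hs : 0 ≤ s)
    {z p h p' h' : Γ} (A : M.IsArm n (r + s) H z p h) (hh' : h' ∈ H)
    (hp' : M.translation p' n ∉ H) (hfoot : M.IsFoot h' p') (hzp : z = p ∨ ¬ M.Coaxial M.n₀ p p')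
    (k : ℤ) : M.excess z (M.pt p' k) p' ≤ 2 * M.cornerBound K s := by
  have hδ := M.one_le_δ
  have hT := M.one_le_T
  set m := M.cornerOverlap K s with hm
  have hm0 : 0 ≤ m := cornerOverlap_nonneg hK hs
  by_contra! hlt
  have hlt : 2 * (M.T * m) + M.δ < M.excess z (M.pt p' k) p' := by
    rw [cornerBound, ← hm] at hlt
    omega
  have hdist : ∀ t, |t| ≤ m → M.dist (M.pt p' t) p' ≤ M.T * m := fun t ht => by
    rw [M.dist_pt_self]
    exact mul_le_mul_of_nonneg_left ht (by omega)
  have hk : m < |k| := by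
    by_contra! hle
    have := M.excess_le_dist_right z (M.pt p' k) p'
    have := hdist k hle
    omega
  have hclose : ∀ t, |t| ≤ m → min 0 k ≤ t → t ≤ max 0 k →
      M.excess z p' (M.pt p' t) ≤ M.δ := by
    intro t ht hmin hmax
    rcases M.excess_le_or_excess_le (M.excess_self_pt_eq_zero (a := p') hmin hmax).le z with h | h
    · rw [M.excess_comm]
      omega
    · have := M.excess_le_add_dist z (M.pt p' k) (M.pt p' t) p'
      have := hdist t ht
      omega
  rcases abs_cases k with ⟨habs, -⟩ | ⟨habs, -⟩ <;> rw [habs] at hk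
  · have := sub_lt_cornerOverlap I hK hs A hh' hp' hfoot hzp (i := 0) (j := m) fun t h0 hm =>
      hclose t (abs_le.2 ⟨by omega, hm⟩) (by omega) (by omega)
    omega
  · have := sub_lt_cornerOverlap I hK hs A hh' hp' hfoot hzp (i := -m) (j := 0) fun t hm h0 =>
      hclose t (abs_le.2 ⟨hm, by omega⟩) (by omega) (by omega)
    omega

/-- How far beyond the `r'`-neighbourhood of `H` an arm of radius `r'` can stay `E`-close to a
geodesic between two points of `H`. -/
def armDepth (M : AxisSystem Γ) (K E : ℤ) : ℤ :=
  E + 2 * M.δ + M.T * (K + 2 * (3 * M.δ + (3 * E + 7 * M.δ) + 1))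

lemma dist_lt_add_armDepth (I : M.IsWindmill n K τ κ r H) (hK : 0 ≤ K) {z p h u f : Γ}
    (A : M.IsArm n r' H z p h) (hu : u ∈ H) {E : ℤ} (hpz : M.excess p z f ≤ E)
    (huh : M.excess u h f ≤ E) : M.dist h f < r' + M.armDepth K E := by
  have hδ := M.one_le_δ
  have hT := M.one_le_T
  have hE : 0 ≤ E := (M.excess_nonneg _ _ _).trans hpz
  have := M.dist_triangle h p f
  have := A.dist_lt
  rcases A.eq_or_isFoot with ⟨rfl, rfl⟩ | ⟨hp, hfoot, l, rfl⟩
  · rw [M.excess_self] at hpz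
    have : 0 ≤ M.T * (K + 2 * (3 * M.δ + (3 * E + 7 * M.δ) + 1)) := by positivity
    unfold armDepth
    omega
  · obtain ⟨t, ht⟩ := M.exists_pt_near_of_excess_self_pt hpz
    have := M.excess_le_add_dist u h f (M.pt p t)
    have := hfoot.excess_le t
    have := M.excess_le_add_right u (M.pt p t) h p
    rw [M.excess_comm (M.pt p t)] at this
    have hoverlap := I.abs_sub_le_of_excess_le hK hp hu A.mem (E := 3 * E + 7 * M.δ) (i := t)
      (j := 0) (by omega) (by rw [M.pt_zero]; omega)
    rw [sub_zero] at hoverlap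
    have := M.dist_le_of_near_pt ht hoverlap
    unfold armDepth
    omega

/-- A bound for the number of periods along which two arms can stay `E`-close to each other. -/
noncomputable def armOverlap (M : AxisSystem Γ) (K E : ℤ) : ℤ :=
  M.overlapBound (9 * E + 50 * M.δ) + M.overlapBound (4 * E + 22 * M.δ) +
    (K + 2 * (4 * E + 23 * M.δ + 1)) + 2

/-- How far beyond the `r'`-neighbourhood of `H` two arms of radius `r'` can stay `E`-close. -/
noncomputable def twoArmsDepth (M : AxisSystem Γ) (K E : ℤ) : ℤ :=
  E + 2 * M.δ + M.T * M.armOverlap K E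

lemma armOverlap_nonneg (hK : 0 ≤ K) {E : ℤ} (hE : 0 ≤ E) : 0 ≤ M.armOverlap K E := by
  have := M.one_le_δ
  have := M.overlapBound_nonneg (9 * E + 50 * M.δ)
  have := M.overlapBound_nonneg (4 * E + 22 * M.δ)
  unfold armOverlap
  omega

lemma dist_lt_add_twoArmsDepth_of_eq (hK : 0 ≤ K) {z p h f : Γ} (A : M.IsArm n r' H z p h)
    (hzp : z = p) {E : ℤ} (hf : M.excess p z f ≤ E) : M.dist h f < r' + M.twoArmsDepth K E := by
  have hδ := M.one_le_δ
  have hT := M.one_le_T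
  have := armOverlap_nonneg (M := M) hK ((M.excess_nonneg _ _ _).trans hf)
  have : 0 ≤ M.T * M.armOverlap K E := by positivity
  have := M.dist_triangle h p f
  have := A.dist_lt
  rw [hzp, M.excess_self] at hf
  have := M.dist_nonneg p f
  unfold twoArmsDepth
  omega

lemma dist_lt_add_twoArmsDepth_of_near_pt {z p h f : Γ} (A : M.IsArm n r' H z p h) {t E : ℤ}
    (hf : M.dist f (M.pt p t) ≤ E + 2 * M.δ) (ht : |t| ≤ M.armOverlap K E) :
    M.dist h f < r' + M.twoArmsDepth K E := by
  have := M.dist_le_of_near_pt hf ht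
  have := M.dist_triangle h p f
  have := A.dist_lt
  unfold twoArmsDepth
  omega

/-- The pentagon with vertices `h`, `p`, `f`, `p'`, `h'`, whose side from `p'` to `f` is close to
the axis of `p'`. -/
lemma excess_pt_le_side_of_pentagon {h p f h' p' : Γ} {E t₀ t₁ t : ℤ} (hfoot : M.IsFoot h' p')
    (ht₀ : M.dist f (M.pt p t₀) ≤ E + 2 * M.δ) (ht₁ : M.dist f (M.pt p' t₁) ≤ E + 2 * M.δ)
    (ht : M.excess p' (M.pt p' t₁) (M.pt p' t) = 0) :
    M.excess h h' (M.pt p' t) ≤ 4 * E + 20 * M.δ ∨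
      M.excess p (M.pt p t₀) (M.pt p' t) ≤ 4 * E + 20 * M.δ ∨
      M.excess h p (M.pt p' t) ≤ 4 * E + 20 * M.δ := by
  have hδ := M.one_le_δ
  have := M.dist_nonneg f (M.pt p t₀)
  have hh'f : M.excess h' f (M.pt p' t) ≤ 2 * E + 7 * M.δ := by
    have := M.excess_le_add_right h' p' (M.pt p' t₁) (M.pt p' t)
    have := hfoot.excess_le t₁
    have := M.excess_le_add_dist_right h' (M.pt p' t₁) f (M.pt p' t)
    have := M.dist_comm (M.pt p' t₁) f
    omega
  rcases M.excess_le_or_excess_le hh'f h with hh'h | hhf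
  · rw [M.excess_comm h h']
    omega
  · have hht₀ : M.excess h (M.pt p t₀) (M.pt p' t) ≤ 4 * E + 12 * M.δ := by
      have := M.excess_le_add_dist_right h f (M.pt p t₀) (M.pt p' t)
      omega
    rcases M.excess_le_or_excess_le hht₀ p with hhp | hpt₀ <;> omega

lemma abs_lt_overlapBound_of_near_leg {h p f p' : Γ} {E t₀ t₁ t : ℤ} (hpp' : ¬ M.Coaxial M.n₀ p p')
    (hfoot : M.IsFoot h p) (ht₀ : M.dist f (M.pt p t₀) ≤ E + 2 * M.δ)
    (ht₁ : M.dist f (M.pt p' t₁) ≤ E + 2 * M.δ)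
    (ht : M.excess h p (M.pt p' t) ≤ 4 * E + 20 * M.δ) :
    |t₀| < M.overlapBound (9 * E + 50 * M.δ) := by
  have hδ := M.one_le_δ
  have hnonneg := M.dist_nonneg f (M.pt p t₀)
  have hcorner : M.excess (M.pt p' t) (M.pt p t₀) p ≤ 4 * E + 23 * M.δ := by
    have := hfoot.excess_le t₀
    have := M.dist_triangle h (M.pt p' t) (M.pt p t₀)
    simp only [DiscreteHyperbolicMetric.excess] at *
    omega
  have hp : M.excess (M.pt p' t) (M.pt p' t₁) p ≤ 8 * E + 31 * M.δ := by
    have := M.excess_le_add_dist_right (M.pt p' t) (M.pt p t₀) (M.pt p' t₁) p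
    have := M.dist_triangle (M.pt p t₀) f (M.pt p' t₁)
    have := M.dist_comm (M.pt p t₀) f
    omega
  obtain ⟨t₂, -, -, ht₂⟩ := M.exists_pt_near hp
  by_contra! hle
  exact hpp' (M.coaxial_of_dist_le (a := p) (b := p') (i₀ := 0) (i₁ := t₀) (j₀ := t₂) (j₁ := t₁)
    (c := 9 * E + 50 * M.δ) (by rw [M.pt_zero]; omega)
    (by
      have := M.dist_triangle (M.pt p t₀) f (M.pt p' t₁)
      have := M.dist_comm (M.pt p t₀) f
      omega)
    (by rwa [sub_zero]))

lemma abs_le_armOverlap_of_forall_near (I : M.IsWindmill n K τ κ r H) (hK : 0 ≤ K)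
    {p h p' h' : Γ} (hpp' : ¬ M.Coaxial M.n₀ p p') (hp' : M.translation p' n ∉ H) (hh : h ∈ H)
    (hh' : h' ∈ H) {E t₀ t₁ : ℤ} (hE : 0 ≤ E)
    (hcover : ∀ t, min 0 t₁ ≤ t → t ≤ max 0 t₁ →
      M.excess h h' (M.pt p' t) ≤ 4 * E + 20 * M.δ ∨
        M.excess p (M.pt p t₀) (M.pt p' t) ≤ 4 * E + 20 * M.δ) :
    |t₁| ≤ M.armOverlap K E := by
  have hδ := M.one_le_δ
  have hθ := M.overlapBound_nonneg (9 * E + 50 * M.δ)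
  have hθ' := M.overlapBound_nonneg (4 * E + 22 * M.δ)
  let near (a b : Γ) (t : ℤ) : Prop := M.excess a b (M.pt p' t) ≤ 4 * E + 20 * M.δ
  have hlt := sub_lt_sum_of_cover (i := min 0 t₁) (j := max 0 t₁)
    (P := ![near h h', near p (M.pt p t₀)])
    (B := ![K + 2 * (4 * E + 23 * M.δ + 1), M.overlapBound (4 * E + 22 * M.δ)])
    ?_ ?_ ?_
  · simp only [Fin.sum_univ_two, Matrix.cons_val_zero, Matrix.cons_val_one,
      max_sub_min_eq_abs, sub_zero] at hlt
    unfold armOverlap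
    omega
  · intro k
    fin_cases k <;> simp only [Fin.mk_one, Fin.zero_eta, Matrix.cons_val] <;> omega
  · intro t hmin hmax
    rcases hcover t hmin hmax with h | h
    exacts [⟨0, h⟩, ⟨1, h⟩]
  · intro k
    fin_cases k <;> intro x y (hx : M.excess _ _ _ ≤ _) (hy : M.excess _ _ _ ≤ _) <;>
      simp only [Fin.mk_one, Fin.zero_eta, Matrix.cons_val]
    · exact (I.abs_sub_le_of_excess_le hK hp' hh hh' hx hy).trans (by omega)
    · have hlt := abs_sub_le_of_excess_self_pt_le hpp' hx hy
      rw [show 4 * E + 20 * M.δ + 2 * M.δ = 4 * E + 22 * M.δ by ring] at hlt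
      exact hlt.le

lemma dist_lt_add_twoArmsDepth (I : M.IsWindmill n K τ κ r H) (hK : 0 ≤ K)
    {z p h z' p' h' f : Γ} (A : M.IsArm n r' H z p h) (A' : M.IsArm n r' H z' p' h') {E : ℤ}
    (hpp' : z = p ∨ z' = p' ∨ ¬ M.Coaxial M.n₀ p p')
    (hf : M.excess p z f ≤ E) (hf' : M.excess p' z' f ≤ E) :
    M.dist h f < r' + M.twoArmsDepth K E ∨ M.dist h' f < r' + M.twoArmsDepth K E := by
  have hδ := M.one_le_δ
  have hE : 0 ≤ E := (M.excess_nonneg _ _ _).trans hf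
  have hθ := M.overlapBound_nonneg (4 * E + 22 * M.δ)
  rcases hpp' with hzp | hzp' | hpp'
  · exact Or.inl (dist_lt_add_twoArmsDepth_of_eq hK A hzp hf)
  · exact Or.inr (dist_lt_add_twoArmsDepth_of_eq hK A' hzp' hf')
  rcases A.eq_or_isFoot with ⟨hzp, -⟩ | ⟨-, hfoot, l, rfl⟩
  · exact Or.inl (dist_lt_add_twoArmsDepth_of_eq hK A hzp hf)
  rcases A'.eq_or_isFoot with ⟨hzp', -⟩ | ⟨hp', hfoot', l', rfl⟩
  · exact Or.inr (dist_lt_add_twoArmsDepth_of_eq hK A' hzp' hf')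
  obtain ⟨t₀, ht₀⟩ := M.exists_pt_near_of_excess_self_pt hf
  obtain ⟨t₁, ht₁⟩ := M.exists_pt_near_of_excess_self_pt hf'
  by_cases hleg : ∃ t, M.excess h p (M.pt p' t) ≤ 4 * E + 20 * M.δ
  · obtain ⟨t, ht⟩ := hleg
    have := abs_lt_overlapBound_of_near_leg hpp' hfoot ht₀ ht₁ ht
    refine Or.inl (dist_lt_add_twoArmsDepth_of_near_pt A ht₀ ?_)
    unfold armOverlap
    omega
  · push Not at hleg
    refine Or.inr (dist_lt_add_twoArmsDepth_of_near_pt A' ht₁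
      (abs_le_armOverlap_of_forall_near I hK hpp' hp' A.mem A'.mem (t₀ := t₀) hE
        fun t hmin hmax => ?_))
    rcases excess_pt_le_side_of_pentagon (h := h) hfoot' ht₀ ht₁
      (M.excess_self_pt_eq_zero hmin hmax) with h | h | h
    · exact Or.inl h
    · exact Or.inr h
    · exact absurd h (not_le.2 (hleg t))

end AxisSystem

namespace AxialMetric
variable {Γ : Type*} [Group Γ] {M : AxialMetric Γ}

lemma excess_pt_le_of_uniform {u b : Γ} {ε k κ K : ℤ} (hε : ε = 1 ∨ ε = -1)
    (hu : ∀ t, M.excess u (M.pt b t) (M.pt b (ε * k)) ≤ 2 * K) (hk : κ + K + M.δ < k)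
    {s : ℤ} (h₀ : 0 ≤ s) (hs : s ≤ κ) (hK : 0 ≤ K) : M.excess u b (M.pt b (ε * s)) ≤ M.δ := by
  have hδ := M.one_le_δ
  have hz : M.excess b (M.pt b (ε * k)) (M.pt b (ε * s)) = 0 := by
    apply M.excess_self_pt_eq_zero <;> rcases hε with rfl | rfl <;> omega
  rcases M.excess_le_or_excess_le hz.le u with h | h
  · rw [M.excess_comm]; omega
  · have := hu (ε * s)
    have := M.excess_add_excess u (M.pt b (ε * k)) (M.pt b (ε * s))
    have hdist := M.abs_sub_le_dist_pt b (ε * k) (ε * s)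
    have habs : |ε * k - ε * s| = k - s := by rcases hε with rfl | rfl <;> grind
    omega

variable (M) in
/-- A broken path through `P 0, …, P (m + 1)` whose inner corners `P (i + 1)` are midpoints of
long chords of axes: the path follows the axis based at `P (i + 1)` over a length `κ` on both
sides of it, in the direction given by the sign `ε i`. -/
structure ChordPath (P : ℕ → Γ) (ε : ℕ → ℤ) (m : ℕ) (κ : ℤ) : Prop where
  sign_eq : ∀ i, i < m → ε i = 1 ∨ ε i = -1
  excess_left_le : ∀ i, i < m → ∀ s, 0 ≤ s → s ≤ κ →
    M.excess (P i) (P (i + 1)) (M.pt (P (i + 1)) (-(ε i * s))) ≤ M.δ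
  excess_right_le : ∀ i, i < m → ∀ s, 0 ≤ s → s ≤ κ →
    M.excess (P (i + 1)) (P (i + 2)) (M.pt (P (i + 1)) (ε i * s)) ≤ M.δ
  lt_length : 5 * M.δ < κ

namespace ChordPath
variable {P : ℕ → Γ} {ε : ℕ → ℤ} {m : ℕ} {κ : ℤ}

lemma le_dist_pt (C : M.ChordPath P ε m κ) {i : ℕ} (hi : i < m) (s : ℤ) :
    s ≤ M.dist (M.pt (P (i + 1)) (ε i * s)) (P (i + 1)) ∧
    s ≤ M.dist (M.pt (P (i + 1)) (-(ε i * s))) (P (i + 1)) := by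
  have hT : |s| ≤ M.T * |s| := le_mul_of_one_le_left (abs_nonneg _) M.one_le_T
  have hs := le_abs_self s
  rw [dist_pt_self, dist_pt_self, abs_neg, abs_mul]
  rcases C.sign_eq i hi with h | h <;> rw [h] <;> simp only [abs_neg, abs_one, one_mul] <;> omega

lemma excess_corner_le (C : M.ChordPath P ε m κ) {i : ℕ} (hi : i < m) :
    M.excess (P i) (P (i + 2)) (P (i + 1)) ≤ 2 * M.δ := by
  have hδ := M.one_le_δ
  have hκ := C.lt_length
  have hleft := C.excess_left_le i hi κ (by omega) le_rfl
  have hright := C.excess_right_le i hi κ (by omega) le_rfl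
  obtain ⟨hp', hp⟩ := C.le_dist_pt hi κ
  have hz : M.excess (M.pt (P (i + 1)) (-(ε i * κ))) (M.pt (P (i + 1)) (ε i * κ)) (P (i + 1))
      = 0 := by
    have h := M.excess_pt_eq_zero (a := P (i + 1)) (i := -κ) (t := 0) (j := κ) (by omega) (by omega)
    rw [M.pt_zero] at h
    rcases C.sign_eq i hi with hε | hε
    · simpa [hε] using h
    · simpa [hε, M.excess_comm] using h
  generalize M.pt (P (i + 1)) (-(ε i * κ)) = p at *
  generalize M.pt (P (i + 1)) (ε i * κ) = p' at *
  rcases M.excess_le_or_excess_le hz.le (P i) with h | h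
  · have := M.excess_add_excess (P i) p (P (i + 1))
    rw [M.excess_comm] at h
    omega
  rcases M.excess_le_or_excess_le h (P (i + 2)) with h | h
  · omega
  · have := M.excess_add_excess (P (i + 2)) p' (P (i + 1))
    rw [M.excess_comm] at hright
    omega

lemma length_sub_le_dist (C : M.ChordPath P ε m κ) {i : ℕ} (hi : i < m) :
    κ - M.δ ≤ M.dist (P i) (P (i + 1)) ∧ κ - M.δ ≤ M.dist (P (i + 1)) (P (i + 2)) := by
  have hδ := M.one_le_δ
  have hκ := C.lt_length
  have hleft := C.excess_left_le i hi κ (by omega) le_rfl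
  have hright := C.excess_right_le i hi κ (by omega) le_rfl
  have := C.le_dist_pt hi κ
  have := M.dist_nonneg (P i) (M.pt (P (i + 1)) (-(ε i * κ)))
  have := M.dist_nonneg (M.pt (P (i + 1)) (ε i * κ)) (P (i + 2))
  have := M.dist_comm (M.pt (P (i + 1)) (ε i * κ)) (P (i + 1))
  simp only [DiscreteHyperbolicMetric.excess] at hleft hright
  omega

lemma isLocalQuasigeodesic (C : M.ChordPath P ε m κ) : M.IsLocalQuasigeodesic P m where
  excess_le _ hi := C.excess_corner_le hi
  lt_dist i hi := by
    have := (C.length_sub_le_dist (i := i) (by omega)).2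
    have := C.lt_length
    omega

lemma mono (C : M.ChordPath P ε m κ) {k : ℕ} (hk : k ≤ m) : M.ChordPath P ε k κ where
  sign_eq i hi := C.sign_eq i (by omega)
  excess_left_le i hi := C.excess_left_le i (by omega)
  excess_right_le i hi := C.excess_right_le i (by omega)
  lt_length := C.lt_length

lemma start_ne_end (C : M.ChordPath P ε m κ) (hm : 0 < m) : P 0 ≠ P (m + 1) := by
  intro he
  have h := C.isLocalQuasigeodesic.excess_vertex_le (a := 0) (b := 1) (c := m + 1) (by omega)
    (by omega) le_rfl
  have hlong := (C.length_sub_le_dist (i := 0) hm).1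
  have := C.lt_length
  have := M.one_le_δ
  rw [← he, M.excess_self] at h
  simp only [zero_add] at hlong
  omega

lemma excess_chord_le (C : M.ChordPath P ε m κ) {i : ℕ} (hi : i < m) {s : ℤ} (h : -κ ≤ s)
    (h' : s ≤ κ) : M.excess (P 0) (P (m + 1)) (M.pt (P (i + 1)) s) ≤ 8 * M.δ := by
  have key : ∀ s, -κ ≤ s → s ≤ κ →
      M.excess (P 0) (P (m + 1)) (M.pt (P (i + 1)) (ε i * s)) ≤ 8 * M.δ := by
    intro s h h'
    rcases le_total 0 s with hs | hs
    · have := C.isLocalQuasigeodesic.excess_le_of_near_side (i := i + 1) (by omega)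
        (C.excess_right_le i hi s hs h')
      omega
    · have := C.excess_left_le i hi (-s) (by omega) (by omega)
      have := C.isLocalQuasigeodesic.excess_le_of_near_side (i := i) (by omega) this
      rw [mul_neg, neg_neg] at this
      omega
  rcases C.sign_eq i hi with hε | hε
  · simpa [hε] using key s h h'
  · simpa [hε] using key (-s) (by omega) (by omega)

lemma excess_prefix_le (C : M.ChordPath P ε m κ) {i : ℕ} (hi : i < m) :
    M.excess (P 0) (P (i + 1)) (M.pt (P (i + 1)) (-(ε i * κ))) ≤ 8 * M.δ := by
  have := M.one_le_δ
  have := C.lt_length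
  have := (C.mono hi.le).isLocalQuasigeodesic.excess_le_of_near_side le_rfl
    (C.excess_left_le i hi κ (by omega) le_rfl)
  omega

lemma excess_suffix_le (C : M.ChordPath P ε m κ) {i : ℕ} (hi : i < m) :
    M.excess (P (m + 1)) (P (i + 1)) (M.pt (P (i + 1)) (ε i * κ)) ≤ 8 * M.δ := by
  have := M.one_le_δ
  have := C.lt_length
  have h := (C.isLocalQuasigeodesic.shift (i + 1)).excess_le_of_near_side (Nat.zero_le _)
    (C.excess_right_le i hi κ (by omega) le_rfl)
  simp only [show i + 1 + (m - (i + 1) + 1) = m + 1 by omega, add_zero] at h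
  rw [M.excess_comm]
  omega

lemma excess_axis_le_of_dist_lt (C : M.ChordPath P ε m κ) {i : ℕ} (hi : i < m) {f : Γ} {e : ℤ}
    (hf : M.excess (P 0) (P (m + 1)) f ≤ e)
    (hd : 2 * M.dist (P (i + 1)) f + e + 10 * M.δ < 2 * κ) :
    M.excess (M.pt (P (i + 1)) (-κ)) (M.pt (P (i + 1)) κ) f ≤ e + 2 * M.δ := by
  have hδ := M.one_le_δ
  obtain ⟨hp', hp⟩ := C.le_dist_pt hi κ
  have hleft := C.excess_prefix_le hi
  have hright := C.excess_suffix_le hi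
  have key : M.excess (M.pt (P (i + 1)) (-(ε i * κ))) (M.pt (P (i + 1)) (ε i * κ)) f
      ≤ e + 2 * M.δ := by
    generalize M.pt (P (i + 1)) (-(ε i * κ)) = p at *
    generalize M.pt (P (i + 1)) (ε i * κ) = p' at *
    have := M.dist_comm f (P (i + 1))
    rcases M.excess_le_or_excess_le hf p with h | h
    · have := M.excess_le_add_dist (P 0) p f (P (i + 1))
      have := M.excess_add_excess (P 0) p (P (i + 1))
      omega
    rcases M.excess_le_or_excess_le h p' with h | h
    · omega
    · have := M.excess_le_add_dist (P (m + 1)) p' f (P (i + 1))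
      have := M.excess_add_excess (P (m + 1)) p' (P (i + 1))
      rw [M.excess_comm] at h
      omega
  rcases C.sign_eq i hi with h | h
  · simpa [h] using key
  · rw [h, M.excess_comm] at key
    simpa using key

lemma two_mul_dist_succ_le_of_two_sides (C : M.ChordPath P ε m κ) {l l' : ℕ} (hl : l < l')
    (hl' : l' ≤ m) {f : Γ} {e e' : ℤ}
    (hf : M.excess (P l) (P (l + 1)) f ≤ e) (hf' : M.excess (P l') (P (l' + 1)) f ≤ e') :
    2 * M.dist f (P (l + 1)) ≤ e + e' + 8 * M.δ := by
  have := M.two_mul_dist_le_excess_add (P l) (P (l + 1)) (P (l' + 1)) f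
  have := C.isLocalQuasigeodesic.excess_vertex_le (a := l) (b := l + 1) (c := l' + 1) (by omega)
    (by omega) (by omega)
  have := C.isLocalQuasigeodesic.excess_vertex_le (a := l + 1) (b := l') (c := l' + 1) (by omega)
    (by omega) (by omega)
  have := M.excess_le_add_right (P (l + 1)) (P l') (P (l' + 1)) f
  omega

end ChordPath
end AxialMetric

/-- A letter of a word in translations: a point `center` of the axis of the translation, an
element `base` from which the axis is reached, and the exponent of the translation. -/
structure Syllable (Γ : Type*) where
  center : Γ
  base : Γ
  exponent : ℤ

namespace Syllable
variable {Γ : Type*} [Group Γ]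

/-- The translate of a syllable by a group element. -/
def translate (x : Γ) (y : Syllable Γ) : Syllable Γ := ⟨x * y.center, x * y.base, y.exponent⟩

end Syllable

namespace AxisSystem
variable {Γ : Type*} [Group Γ]

/-- The axis of `p` is *new* for `H`: the translation by `n` along it is not in `H`, and `p` is the
foot on it of some `h ∈ H` at distance less than `r'`. -/
structure IsNewAxis (M : AxisSystem Γ) (n r' : ℤ) (H : Subgroup Γ) (p h : Γ) : Prop where
  mem : h ∈ H
  dist_lt : M.dist h p < r'
  not_mem : M.translation p n ∉ H
  isFoot : M.IsFoot h p

/-- The subgroup generated by `H` and the translations along its new axes. -/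
def nextWindmill (M : AxisSystem Γ) (n r' : ℤ) (H : Subgroup Γ) : Subgroup Γ :=
  Subgroup.closure (H ∪ {x | ∃ p h, M.IsNewAxis n r' H p h ∧ x = M.translation p n})

/-- The product of the translations of a word. -/
def wordValue (M : AxisSystem Γ) (n : ℤ) (l : List (Syllable Γ)) : Γ :=
  (l.map fun x => M.translation x.center (n * x.exponent)).prod

/-- All axes of the word are new, all exponents are nonzero, and consecutive axes are distinct. -/
structure IsReducedWord (M : AxisSystem Γ) (n r' : ℤ) (H : Subgroup Γ) (l : List (Syllable Γ)) :
    Prop where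
  isNewAxis : ∀ x ∈ l, M.IsNewAxis n r' H x.center x.base
  exponent_ne_zero : ∀ x ∈ l, x.exponent ≠ 0
  isChain : l.IsChain fun x y => ¬ M.Coaxial M.n₀ x.center y.center

variable {M : AxisSystem Γ} {n r' : ℤ} {H : Subgroup Γ} {l : List (Syllable Γ)}

lemma le_nextWindmill : H ≤ M.nextWindmill n r' H :=
  fun _ hx => Subgroup.subset_closure (Or.inl hx)

lemma coaxial_mul_left_iff {n₀ : ℤ} {x a b : Γ} :
    M.Coaxial n₀ (x * a) (x * b) ↔ M.Coaxial n₀ a b :=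
  ⟨fun h => by simpa using h.mul_left x⁻¹, fun h => h.mul_left x⟩

namespace IsNewAxis
variable {p h : Γ}

lemma translation_mem (A : M.IsNewAxis n r' H p h) : M.translation p n ∈ M.nextWindmill n r' H :=
  Subgroup.subset_closure (Or.inr ⟨p, h, A, rfl⟩)

lemma mul_left (A : M.IsNewAxis n r' H p h) {x : Γ} (hx : x ∈ H) :
    M.IsNewAxis n r' H (x * p) (x * h) where
  mem := H.mul_mem hx A.mem
  dist_lt := by rw [M.dist_mul_left]; exact A.dist_lt
  not_mem := by rw [translation_mul_mem_iff hx]; exact A.not_mem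
  isFoot t := by
    rw [← M.mul_pt, M.dist_mul_left, M.dist_mul_left]
    exact A.isFoot t

lemma isArm (A : M.IsNewAxis n r' H p h) (i : ℤ) : M.IsArm n r' H (M.pt p i) p h :=
  ⟨A.mem, A.dist_lt, Or.inr ⟨A.not_mem, A.isFoot, i, rfl⟩⟩

end IsNewAxis

lemma wordValue_nil : M.wordValue n [] = 1 := rfl

lemma wordValue_cons (x : Syllable Γ) (l : List (Syllable Γ)) :
    M.wordValue n (x :: l) = M.translation x.center (n * x.exponent) * M.wordValue n l :=
  List.prod_cons

lemma wordValue_take_succ {i : ℕ} (hi : i < l.length) :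
    M.wordValue n (l.take (i + 1)) =
      M.wordValue n (l.take i) * M.translation l[i].center (n * l[i].exponent) := by
  rw [List.take_add_one]
  simp [wordValue, hi]

lemma wordValue_map_translate (x : Γ) (l : List (Syllable Γ)) :
    M.wordValue n (l.map (.translate x)) = x * M.wordValue n l * x⁻¹ := by
  induction l with
  | nil => simp [wordValue_nil]
  | cons y l ih =>
    rw [List.map_cons, wordValue_cons, wordValue_cons, ih, Syllable.translate,
      M.translation_mul_left]
    group

namespace IsReducedWord

lemma nil : M.IsReducedWord n r' H [] := ⟨by simp, by simp, .nil⟩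

lemma tail {x : Syllable Γ} (h : M.IsReducedWord n r' H (x :: l)) : M.IsReducedWord n r' H l :=
  ⟨fun y hy => h.isNewAxis y (List.mem_cons_of_mem _ hy),
    fun y hy => h.exponent_ne_zero y (List.mem_cons_of_mem _ hy), h.isChain.tail⟩

lemma take (h : M.IsReducedWord n r' H l) (i : ℕ) : M.IsReducedWord n r' H (l.take i) :=
  ⟨fun y hy => h.isNewAxis y (List.mem_of_mem_take hy),
    fun y hy => h.exponent_ne_zero y (List.mem_of_mem_take hy), h.isChain.take i⟩

lemma cons {x : Syllable Γ} (h : M.IsReducedWord n r' H l)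
    (hx : M.IsNewAxis n r' H x.center x.base) (hx₀ : x.exponent ≠ 0)
    (hxl : ∀ y ∈ l.head?, ¬ M.Coaxial M.n₀ x.center y.center) : M.IsReducedWord n r' H (x :: l) :=
  ⟨List.forall_mem_cons.2 ⟨hx, h.isNewAxis⟩, List.forall_mem_cons.2 ⟨hx₀, h.exponent_ne_zero⟩,
    List.isChain_cons.2 ⟨hxl, h.isChain⟩⟩

lemma map_translate (h : M.IsReducedWord n r' H l) {x : Γ} (hx : x ∈ H) :
    M.IsReducedWord n r' H (l.map (.translate x)) where
  isNewAxis := List.forall_mem_map.2 fun y hy => (h.isNewAxis y hy).mul_left hx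
  exponent_ne_zero := List.forall_mem_map.2 h.exponent_ne_zero
  isChain := (List.isChain_map _).2 <| h.isChain.imp fun a b hab => by
    simpa [Syllable.translate, coaxial_mul_left_iff] using hab

lemma wordValue_mem (h : M.IsReducedWord n r' H l) : M.wordValue n l ∈ M.nextWindmill n r' H := by
  induction l with
  | nil => exact one_mem _
  | cons x l ih =>
    rw [wordValue_cons, ← M.translation_zpow]
    exact mul_mem (zpow_mem (h.isNewAxis x (by simp)).translation_mem _) (ih h.tail)

lemma exists_wordValue_eq_mul (hn : M.n₀ ∣ n) (h : M.IsReducedWord n r' H l) {p q : Γ}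
    (A : M.IsNewAxis n r' H p q) {e : ℤ} (he : e ≠ 0) :
    ∃ l', M.IsReducedWord n r' H l' ∧
      M.wordValue n l' = M.translation p (n * e) * M.wordValue n l := by
  rcases l with _ | ⟨x, l⟩
  · exact ⟨[⟨p, q, e⟩], nil.cons A he (by simp), wordValue_cons _ _⟩
  by_cases hpx : M.Coaxial M.n₀ p x.center
  · obtain ⟨e', he'⟩ : ∃ e', M.translation p (n * e) = M.translation x.center (n * e') := by
      rcases hpx.of_dvd hn with hpx | hpx
      · exact ⟨e, by rw [← M.translation_zpow, hpx, M.translation_zpow]⟩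
      · exact ⟨-e, by rw [← M.translation_zpow, hpx, M.translation_zpow, neg_mul, mul_neg]⟩
    have hmul : M.translation p (n * e) * M.wordValue n (x :: l) =
        M.translation x.center (n * (e' + x.exponent)) * M.wordValue n l := by
      rw [wordValue_cons, he', ← mul_assoc, ← M.translation_add, ← mul_add]
    rw [hmul]
    by_cases h₀ : e' + x.exponent = 0
    · exact ⟨l, h.tail, by rw [h₀, mul_zero, M.translation_zero, one_mul]⟩
    · exact ⟨⟨x.center, x.base, e' + x.exponent⟩ :: l,
        h.tail.cons (h.isNewAxis x (by simp)) h₀ (List.isChain_cons.1 h.isChain).1,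
        wordValue_cons _ _⟩
  · exact ⟨⟨p, q, e⟩ :: x :: l, h.cons A he (by simpa using hpx), wordValue_cons _ _⟩

end IsReducedWord

lemma exists_isReducedWord (hn : M.n₀ ∣ n) {w : Γ} (hw : w ∈ M.nextWindmill n r' H) :
    ∃ l, ∃ v ∈ H, M.IsReducedWord n r' H l ∧ w = M.wordValue n l * v := by
  have mul_left : ∀ x ∈ H, ∀ l, ∀ v ∈ H, M.IsReducedWord n r' H l →
      ∃ l', ∃ v' ∈ H, M.IsReducedWord n r' H l' ∧
        x * (M.wordValue n l * v) = M.wordValue n l' * v' := fun x hx l v hv hl =>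
    ⟨_, x * v, H.mul_mem hx hv, hl.map_translate hx, by rw [wordValue_map_translate]; group⟩
  induction hw using Subgroup.closure_induction_left with
  | one => exact ⟨[], 1, H.one_mem, .nil, by rw [wordValue_nil, one_mul]⟩
  | mul_left x hx y hy ih =>
    obtain ⟨l, v, hv, hl, rfl⟩ := ih
    rcases hx with hx | ⟨p, q, A, rfl⟩
    · exact mul_left x hx l v hv hl
    · obtain ⟨l', hl', hval⟩ := hl.exists_wordValue_eq_mul hn A one_ne_zero
      exact ⟨l', v, hv, hl', by rw [hval, mul_one, mul_assoc]⟩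
  | inv_mul_cancel x hx y hy ih =>
    obtain ⟨l, v, hv, hl, rfl⟩ := ih
    rcases hx with hx | ⟨p, q, A, rfl⟩
    · exact mul_left x⁻¹ (H.inv_mem hx) l v hv hl
    · obtain ⟨l', hl', hval⟩ := hl.exists_wordValue_eq_mul hn A (neg_ne_zero.2 one_ne_zero)
      exact ⟨l', v, hv, hl', by rw [hval, mul_neg_one, M.translation_neg, mul_assoc]⟩

end AxisSystem

/-- A path `base, foot, tip` leading from a point of a subgroup to a point on an axis. -/
structure Arm (Γ : Type*) where
  base : Γ
  foot : Γ
  tip : Γ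

namespace AxisSystem
variable {Γ : Type*} [Group Γ]

/-- A path of long chords from `1` to an element `w` of the next windmill. Its `i`-th side joins the
vertices `P i` and `P (i + 1)`, and up to the translation by `W i` it goes through the arms `left i`
and `right i`, whose bases lie in `H`. -/
structure ChordDecomposition (M : AxisSystem Γ) (n r' κ : ℤ) (H : Subgroup Γ) (w : Γ) where
  m : ℕ
  P : ℕ → Γ
  W : ℕ → Γ
  left : ℕ → Arm Γ
  right : ℕ → Arm Γ
  ε : ℕ → ℤ
  start_eq : P 0 = 1
  end_eq : P (m + 1) = w
  chordPath : M.ChordPath P ε m κ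
  W_mem : ∀ i, W i ∈ M.nextWindmill n r' H
  W_mul_left_tip : ∀ i, i ≤ m → W i * (left i).tip = P i
  W_mul_right_tip : ∀ i, W i * (right i).tip = P (i + 1)
  isArm_left : ∀ i, i ≤ m → M.IsArm n r' H (left i).tip (left i).foot (left i).base
  isArm_right : ∀ i, i ≤ m → M.IsArm n r' H (right i).tip (right i).foot (right i).base
  left_zero : (left 0).tip = (left 0).foot ∧ (left 0).foot = (left 0).base
  right_last : (right m).tip = (right m).foot ∧ (right m).foot = (right m).base
  not_coaxial : ∀ i, i ≤ m → (left i).tip = (left i).foot ∨ (right i).tip = (right i).foot ∨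
    ¬ M.Coaxial M.n₀ (left i).foot (right i).foot
  translation_mem : ∀ i, i < m → M.translation (P (i + 1)) n ∈ M.nextWindmill n r' H
  mem_of_length_eq_zero : m = 0 → w ∈ H

variable {M : AxisSystem Γ} {n n' r s K τ κ κ' : ℤ} {H : Subgroup Γ} {l : List (Syllable Γ)}

lemma isArm_const {h : Γ} {r' : ℤ} (hr : 0 < r') (hh : h ∈ H) : M.IsArm n r' H h h h :=
  ⟨hh, by rwa [M.dist_self], Or.inl ⟨rfl, rfl⟩⟩

lemma cornerBound_nonneg (hK : 0 ≤ K) (hs : 0 ≤ s) : 0 ≤ M.cornerBound K s := by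
  have := M.one_le_δ
  have := M.one_le_T
  have := cornerOverlap_nonneg (M := M) hK hs
  unfold cornerBound
  positivity

lemma excess_tip_midpoint_le (I : M.IsWindmill n K τ κ r H) (hK : 0 ≤ K) (hs : 0 ≤ s) (hn' : 0 < n')
    (hκ : κ' + M.cornerBound K s + M.δ < n') {z p h c b : Γ} (A : M.IsArm n (r + s) H z p h)
    (B : M.IsNewAxis n (r + s) H c b) (hzp : z = p ∨ ¬ M.Coaxial M.n₀ p c) {e : ℤ} (he : e ≠ 0)
    {t : ℤ} (ht₀ : 0 ≤ t) (ht : t ≤ κ') :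
    M.excess z (M.pt c (n' * e)) (M.pt (M.pt c (n' * e)) (-(e.sign * t))) ≤ M.δ := by
  have hlong : n' ≤ n' * |e| := le_mul_of_one_le_right hn'.le (Int.one_le_abs he)
  have hsign : e.sign = 1 ∨ e.sign = -1 := by
    rcases he.lt_or_gt with h | h
    · exact Or.inr (Int.sign_eq_neg_one_of_neg h)
    · exact Or.inl (Int.sign_eq_one_of_pos h)
  rw [← neg_mul]
  refine M.excess_pt_le_of_uniform (k := n' * |e|) (κ := κ') (K := M.cornerBound K s) (by omega)
    (fun i => ?_) (by omega) ht₀ ht (cornerBound_nonneg hK hs)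
  have hfoot : n' * e + -e.sign * (n' * |e|) = 0 := by
    rw [neg_mul, mul_left_comm, Int.sign_mul_abs, add_neg_cancel]
  rw [M.pt_pt, M.pt_pt, hfoot, M.pt_zero]
  exact excess_le_cornerBound I hK hs A B.mem B.not_mem B.isFoot hzp _

section WordPath

/-- The `i`-th syllable of a word, with a junk value if `i` is not less than its length. -/
def syllable (l : List (Syllable Γ)) (i : ℕ) : Syllable Γ := l.getD i ⟨1, 1, 0⟩

/-- The arm leaving the `i`-th corner of the path of a word with half exponent `n'`. -/
def leftArm (M : AxisSystem Γ) (n' : ℤ) (l : List (Syllable Γ)) : ℕ → Arm Γ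
  | 0 => ⟨1, 1, 1⟩
  | i + 1 => ⟨(syllable l i).base, (syllable l i).center,
      M.pt (syllable l i).center (n' * -(syllable l i).exponent)⟩

/-- The arm reaching the `i + 1`-st corner of the path of `wordValue l * v`. -/
def rightArm (M : AxisSystem Γ) (n' : ℤ) (l : List (Syllable Γ)) (v : Γ) (i : ℕ) : Arm Γ :=
  if i < l.length then ⟨(syllable l i).base, (syllable l i).center,
    M.pt (syllable l i).center (n' * (syllable l i).exponent)⟩
  else ⟨v, v, v⟩

/-- The vertices of the path of `wordValue l * v`: between its endpoints they are the midpoints of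
the translations of the word. -/
def wordVertex (M : AxisSystem Γ) (n n' : ℤ) (l : List (Syllable Γ)) (v : Γ) : ℕ → Γ
  | 0 => 1
  | i + 1 => M.wordValue n (l.take i) * (M.rightArm n' l v i).tip

variable {v : Γ} {i : ℕ}

lemma syllable_eq (hi : i < l.length) : syllable l i = l[i] := by simp [syllable, hi]

lemma rightArm_of_lt (hi : i < l.length) : M.rightArm n' l v i = ⟨(syllable l i).base,
    (syllable l i).center, M.pt (syllable l i).center (n' * (syllable l i).exponent)⟩ :=
  if_pos hi

lemma rightArm_length : M.rightArm n' l v l.length = ⟨v, v, v⟩ := if_neg (lt_irrefl _)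

lemma wordValue_mul_leftArm_tip (hn : n = 2 * n') (hi : i ≤ l.length) :
    M.wordValue n (l.take i) * (M.leftArm n' l i).tip = M.wordVertex n n' l v i := by
  rcases i with _ | i
  · simp [wordValue_nil, leftArm, wordVertex]
  · rw [wordValue_take_succ hi, mul_assoc, ← syllable_eq hi, leftArm, wordVertex,
      rightArm_of_lt hi, M.translation_mul_pt, hn]
    ring_nf

namespace IsReducedWord
variable {r' : ℤ}

lemma isNewAxis_syllable (h : M.IsReducedWord n r' H l) (hi : i < l.length) :
    M.IsNewAxis n r' H (syllable l i).center (syllable l i).base := by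
  rw [syllable_eq hi]
  exact h.isNewAxis _ (List.getElem_mem _)

lemma syllable_exponent_ne_zero (h : M.IsReducedWord n r' H l) (hi : i < l.length) :
    (syllable l i).exponent ≠ 0 := by
  rw [syllable_eq hi]
  exact h.exponent_ne_zero _ (List.getElem_mem _)

lemma not_coaxial_syllable (h : M.IsReducedWord n r' H l) (hi : i + 1 < l.length) :
    ¬ M.Coaxial M.n₀ (syllable l i).center (syllable l (i + 1)).center := by
  rw [syllable_eq hi, syllable_eq (Nat.lt_of_succ_lt hi)]
  exact List.isChain_iff_getElem.1 h.isChain i hi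

lemma isArm_left (h : M.IsReducedWord n r' H l) (hr : 0 < r') (hi : i ≤ l.length) :
    M.IsArm n r' H (M.leftArm n' l i).tip (M.leftArm n' l i).foot (M.leftArm n' l i).base := by
  rcases i with _ | i
  · exact isArm_const hr H.one_mem
  · exact (h.isNewAxis_syllable hi).isArm _

lemma isArm_right (h : M.IsReducedWord n r' H l) (hr : 0 < r') (hv : v ∈ H) (hi : i ≤ l.length) :
    M.IsArm n r' H (M.rightArm n' l v i).tip (M.rightArm n' l v i).foot
      (M.rightArm n' l v i).base := by
  rcases hi.eq_or_lt with rfl | hi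
  · rw [rightArm_length]
    exact isArm_const hr hv
  · rw [rightArm_of_lt hi]
    exact (h.isNewAxis_syllable hi).isArm _

lemma left_tip_eq_or_not_coaxial (h : M.IsReducedWord n r' H l) (hi : i < l.length) :
    (M.leftArm n' l i).tip = (M.leftArm n' l i).foot ∨
      ¬ M.Coaxial M.n₀ (M.leftArm n' l i).foot (syllable l i).center := by
  rcases i with _ | i
  · exact Or.inl rfl
  · exact Or.inr (h.not_coaxial_syllable hi)

lemma right_tip_eq_or_not_coaxial (h : M.IsReducedWord n r' H l) (hi : i < l.length) :
    (M.rightArm n' l v (i + 1)).tip = (M.rightArm n' l v (i + 1)).foot ∨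
      ¬ M.Coaxial M.n₀ (M.rightArm n' l v (i + 1)).foot (syllable l i).center := by
  rcases (Nat.succ_le_of_lt hi).eq_or_lt with heq | hi'
  · rw [Nat.succ_eq_add_one] at heq
    exact Or.inl (by rw [heq, rightArm_length])
  · rw [rightArm_of_lt hi']
    exact Or.inr fun hco => h.not_coaxial_syllable hi' hco.symm

lemma chordPath (hl : M.IsReducedWord n (r + s) H l) (hv : v ∈ H)
    (I : M.IsWindmill n K τ κ r H) (hK : 0 ≤ K) (hs : 0 ≤ s) (hrs : 0 < r + s) (hn : n = 2 * n')
    (hn' : 0 < n') (hκ₅ : 5 * M.δ < κ') (hκ : κ' + M.cornerBound K s + M.δ < n') :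
    M.ChordPath (M.wordVertex n n' l v) (fun i => (syllable l i).exponent.sign) l.length κ' where
  sign_eq i hi := by
    rcases (hl.syllable_exponent_ne_zero hi).lt_or_gt with h | h
    · exact Or.inr (Int.sign_eq_neg_one_of_neg h)
    · exact Or.inl (Int.sign_eq_one_of_pos h)
  excess_left_le i hi t ht₀ ht := by
    have := excess_tip_midpoint_le I hK hs hn' hκ (hl.isArm_left hrs hi.le)
      (hl.isNewAxis_syllable hi) (hl.left_tip_eq_or_not_coaxial (n' := n') hi)
      (hl.syllable_exponent_ne_zero hi) ht₀ ht
    rw [← M.excess_mul_left (M.wordValue n (l.take i)), wordValue_mul_leftArm_tip (v := v) hn hi.le,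
      M.mul_pt _ (M.pt _ _)] at this
    rwa [wordVertex, rightArm_of_lt hi]
  excess_right_le i hi t ht₀ ht := by
    have := excess_tip_midpoint_le I hK hs hn' hκ (hl.isArm_right hrs hv hi)
      (hl.isNewAxis_syllable hi) (hl.right_tip_eq_or_not_coaxial (n' := n') hi)
      (neg_ne_zero.2 (hl.syllable_exponent_ne_zero hi)) ht₀ ht
    rw [← M.excess_mul_left (M.wordValue n (l.take (i + 1))), Int.sign_neg, neg_mul, neg_neg,
      M.mul_pt _ (M.pt _ _)] at this
    rw [M.excess_comm, ← wordValue_mul_leftArm_tip hn hi]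
    exact this
  lt_length := hκ₅

/-- The decomposition of an element of the next windmill given by a reduced word. -/
def chordDecomposition (hl : M.IsReducedWord n (r + s) H l) (hv : v ∈ H)
    (I : M.IsWindmill n K τ κ r H) (hK : 0 ≤ K) (hs : 0 ≤ s) (hrs : 0 < r + s) (hn : n = 2 * n')
    (hn' : 0 < n') (hκ₅ : 5 * M.δ < κ') (hκ : κ' + M.cornerBound K s + M.δ < n') :
    M.ChordDecomposition n (r + s) κ' H (M.wordValue n l * v) where
  m := l.length
  P := M.wordVertex n n' l v
  W i := M.wordValue n (l.take i)
  left := M.leftArm n' l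
  right := M.rightArm n' l v
  ε i := (syllable l i).exponent.sign
  start_eq := rfl
  end_eq := by rw [wordVertex, rightArm_length, List.take_length]
  chordPath := hl.chordPath hv I hK hs hrs hn hn' hκ₅ hκ
  W_mem i := (hl.take i).wordValue_mem
  W_mul_left_tip _ := wordValue_mul_leftArm_tip hn
  W_mul_right_tip _ := rfl
  isArm_left _ := hl.isArm_left hrs
  isArm_right _ := hl.isArm_right hrs hv
  left_zero := ⟨rfl, rfl⟩
  right_last := by rw [rightArm_length]; exact ⟨rfl, rfl⟩
  not_coaxial i hi := by
    rcases hi.eq_or_lt with rfl | hi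
    · rw [rightArm_length]
      exact Or.inr (Or.inl rfl)
    · rw [rightArm_of_lt hi]
      exact (hl.left_tip_eq_or_not_coaxial hi).imp_right Or.inr
  translation_mem i hi := by
    rw [wordVertex, rightArm_of_lt hi, M.mul_pt, M.translation_pt,
      translation_mul_mem_iff (hl.take i).wordValue_mem]
    exact (hl.isNewAxis_syllable hi).translation_mem
  mem_of_length_eq_zero h₀ := by
    rwa [List.eq_nil_of_length_eq_zero h₀, wordValue_nil, one_mul]

end IsReducedWord
end WordPath

lemma nonempty_chordDecomposition (I : M.IsWindmill n K τ κ r H) (hK : 0 ≤ K) (hs : 0 ≤ s)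
    (hrs : 0 < r + s) (hn₀ : M.n₀ ∣ n) (hn : n = 2 * n') (hn' : 0 < n') (hκ₅ : 5 * M.δ < κ')
    (hκ : κ' + M.cornerBound K s + M.δ < n') {w : Γ} (hw : w ∈ M.nextWindmill n (r + s) H) :
    Nonempty (M.ChordDecomposition n (r + s) κ' H w) := by
  obtain ⟨l, v, hv, hl, rfl⟩ := exists_isReducedWord hn₀ hw
  exact ⟨hl.chordDecomposition hv I hK hs hrs hn hn' hκ₅ hκ⟩

end AxisSystem

namespace DiscreteHyperbolicMetric
variable {X : Type*} (M : DiscreteHyperbolicMetric X) {u v q₁ q₂ f₁ f₂ : X}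

lemma exists_near_beyond (h₁ : M.excess u v q₁ = 0) (h₂ : M.excess u v q₂ = 0)
    (h : M.dist u q₁ ≤ M.dist u q₂) : ∃ z, M.excess q₁ v z = 0 ∧ M.dist q₂ z ≤ M.δ := by
  have hq₂v := M.dist_nonneg q₂ v
  obtain ⟨z, hz, hz'⟩ := M.exists_between q₁ v (M.dist u q₂ - M.dist u q₁) (by omega)
    (by unfold excess at *; omega)
  have hq₁z : M.excess q₁ v z = 0 := by unfold excess; omega
  have huz : M.excess u v z ≤ 0 := by
    have := M.excess_le_add_right u q₁ v z
    omega
  have hdist : M.dist u z = M.dist u q₂ := by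
    have := M.dist_triangle u q₁ z
    have := M.dist_triangle u z v
    unfold excess at *
    omega
  have := M.dist_le_of_excess_le huz h₂.le hdist.ge
  exact ⟨z, hq₁z, by omega⟩

lemma exists_ordered_geodesic_points {E : ℤ} (h₁ : M.excess u v f₁ ≤ E)
    (h₂ : M.excess u v f₂ ≤ E) :
    (∃ q₁ q₂, M.excess u v q₁ = 0 ∧ M.excess q₁ v q₂ = 0 ∧ M.dist f₁ q₁ ≤ E + 2 * M.δ ∧
      M.dist f₂ q₂ ≤ E + 2 * M.δ) ∨
    ∃ q₁ q₂, M.excess v u q₁ = 0 ∧ M.excess q₁ u q₂ = 0 ∧ M.dist f₁ q₁ ≤ E + 2 * M.δ ∧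
      M.dist f₂ q₂ ≤ E + 2 * M.δ := by
  have hδ := M.one_le_δ
  obtain ⟨q₁, hq₁, hfq₁⟩ := M.exists_geodesic_point h₁
  obtain ⟨q₂, hq₂, hfq₂⟩ := M.exists_geodesic_point h₂
  rcases le_total (M.dist u q₁) (M.dist u q₂) with h | h
  · obtain ⟨z, hz, hq₂z⟩ := M.exists_near_beyond hq₁ hq₂ h
    have := M.dist_triangle f₂ q₂ z
    exact Or.inl ⟨q₁, z, hq₁, hz, by omega, by omega⟩
  · have hv : M.dist v q₁ ≤ M.dist v q₂ := by
      have := M.dist_comm v q₁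
      have := M.dist_comm v q₂
      unfold excess at hq₁ hq₂
      omega
    rw [M.excess_comm] at hq₁ hq₂
    obtain ⟨z, hz, hq₂z⟩ := M.exists_near_beyond hq₁ hq₂ hv
    have := M.dist_triangle f₂ q₂ z
    exact Or.inr ⟨q₁, z, hq₁, hz, by omega, by omega⟩

end DiscreteHyperbolicMetric

namespace AxisSystem
variable {Γ : Type*} [Group Γ] {M : AxisSystem Γ} {n K τ κ κ' r r' s : ℤ} {H : Subgroup Γ}

lemma IsWindmill.exists_axis_of_excess_le (I : M.IsWindmill n K τ κ r H) {u v : Γ} (hu : u ∈ H)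
    (hv : v ∈ H) {f₁ f₂ : Γ} {E : ℤ} (h₁ : M.excess u v f₁ ≤ E) (h₂ : M.excess u v f₂ ≤ E)
    (hfar : ∀ y, M.excess f₁ f₂ y ≤ 4 * E + 8 * M.δ → ∀ h ∈ H, r + τ ≤ M.dist h y) :
    ∃ a i j, M.translation a n ∈ H ∧ M.dist f₁ (M.pt a i) ≤ E + 6 * M.δ ∧
      M.dist f₂ (M.pt a j) ≤ E + 6 * M.δ := by
  have of_ordered : ∀ u ∈ H, ∀ v ∈ H, (∃ q₁ q₂, M.excess u v q₁ = 0 ∧ M.excess q₁ v q₂ = 0 ∧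
      M.dist f₁ q₁ ≤ E + 2 * M.δ ∧ M.dist f₂ q₂ ≤ E + 2 * M.δ) →
      ∃ a i j, M.translation a n ∈ H ∧ M.dist f₁ (M.pt a i) ≤ E + 6 * M.δ ∧
        M.dist f₂ (M.pt a j) ≤ E + 6 * M.δ := by
    rintro u hu v hv ⟨q₁, q₂, hq₁, hq₂, hfq₁, hfq₂⟩
    obtain ⟨a, i, j, ha, hi, hj⟩ := I.exists_axis_of_far u hu v hv q₁ q₂ hq₁ hq₂ fun y hy =>
      hfar y (by
        have := M.excess_le_add_dist_left q₁ f₁ q₂ y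
        have := M.excess_le_add_dist_right f₁ q₂ f₂ y
        have := M.dist_comm q₁ f₁
        have := M.dist_comm q₂ f₂
        omega)
    have := M.dist_triangle f₁ q₁ (M.pt a i)
    have := M.dist_triangle f₂ q₂ (M.pt a j)
    exact ⟨a, i, j, ha, by omega, by omega⟩
  rcases M.exists_ordered_geodesic_points h₁ h₂ with h | h
  · exact of_ordered u hu v hv h
  · exact of_ordered v hv u hu h

lemma translation_mem_nextWindmill {a : Γ} (ha : M.dist 1 a < r') :
    M.translation a n ∈ M.nextWindmill n r' H := by
  by_cases h : M.translation a n ∈ H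
  · exact le_nextWindmill h
  obtain ⟨i, hi⟩ := M.exists_isFoot 1 a
  have hdist := hi (-i)
  rw [M.pt_pt, add_neg_cancel, M.pt_zero] at hdist
  have A : M.IsNewAxis n r' H (M.pt a i) 1 :=
    ⟨H.one_mem, hdist.trans_lt ha, by rwa [M.translation_pt], hi⟩
  have := A.translation_mem
  rwa [M.translation_pt] at this

lemma le_dist_pt_of_translation_notMem {a : Γ} (ha : M.translation a n ∉ M.nextWindmill n r' H)
    {h : Γ} (hh : h ∈ M.nextWindmill n r' H) (k : ℤ) : r' ≤ M.dist h (M.pt a k) := by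
  by_contra! hlt
  rw [← M.dist_one_inv_mul] at hlt
  have := translation_mem_nextWindmill (n := n) (H := H) hlt
  rw [M.mul_pt, M.translation_pt, translation_mul_mem_iff (inv_mem hh)] at this
  exact ha this

lemma IsArm.eq_or_not_coaxial (hn : M.n₀ ∣ n) {z p h a : Γ} (A : M.IsArm n r' H z p h)
    (ha : M.translation a n ∉ M.nextWindmill n r' H) : z = p ∨ ¬ M.Coaxial M.n₀ p a := by
  rcases A.eq_or_isFoot with hz | ⟨hp, hfoot, -⟩
  · exact Or.inl hz.1
  · have N : M.IsNewAxis n r' H p h := ⟨A.mem, A.dist_lt, hp, hfoot⟩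
    exact Or.inr fun hpa => ha (translation_mem_of_coaxial hn hpa N.translation_mem)

/-- The number of periods along which the hull of a windmill can follow a foreign axis. -/
noncomputable def hullOverlap (M : AxisSystem Γ) : ℤ :=
  2 * (M.overlapBound (22 * M.δ) + 20 * M.δ) + 2 * (61 * M.δ) + M.overlapBound (26 * M.δ) + 4 +
    M.overlapBound (9 * M.δ)

lemma hullOverlap_nonneg : 0 ≤ M.hullOverlap := by
  have := M.one_le_δ
  have := M.overlapBound_nonneg (22 * M.δ)
  have := M.overlapBound_nonneg (26 * M.δ)
  have := M.overlapBound_nonneg (9 * M.δ)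
  unfold hullOverlap
  omega

lemma IsWindmill.abs_sub_le_overlapBound (I : M.IsWindmill n K τ κ r H) (hs : τ + 90 * M.δ ≤ s)
    (hn : M.n₀ ∣ n) {u v a : Γ} (hu : u ∈ H) (hv : v ∈ H)
    (ha : M.translation a n ∉ M.nextWindmill n (r + s) H) {i j : ℤ}
    (hi : M.excess u v (M.pt a i) ≤ 20 * M.δ) (hj : M.excess u v (M.pt a j) ≤ 20 * M.δ) :
    |i - j| ≤ M.overlapBound (26 * M.δ) := by
  by_contra! hlt
  obtain ⟨b, i', j', hb, hib, hjb⟩ := I.exists_axis_of_excess_le hu hv hi hj fun y hy h hh => by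
    obtain ⟨t, -, -, ht⟩ := M.exists_pt_near hy
    have := le_dist_pt_of_translation_notMem ha (le_nextWindmill hh) t
    have := M.dist_triangle h y (M.pt a t)
    omega
  rw [show 20 * M.δ + 6 * M.δ = 26 * M.δ by ring] at hib hjb
  exact ha (translation_mem_of_coaxial hn (M.coaxial_of_dist_le hjb hib hlt.le).symm
    (le_nextWindmill hb))

lemma IsWindmill.sub_add_overlapBound_le_hullOverlap (I : M.IsWindmill n K τ κ r H)
    (hs : τ + 90 * M.δ ≤ s) (hn : M.n₀ ∣ n) {z p h z' p' h' a : Γ}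
    (A : M.IsArm n (r + s) H z p h) (A' : M.IsArm n (r + s) H z' p' h')
    (ha : M.translation a n ∉ M.nextWindmill n (r + s) H) {i j : ℤ}
    (hij : ∀ t, i ≤ t → t ≤ j → M.excess z z' (M.pt a t) ≤ 17 * M.δ) :
    j - i + M.overlapBound (9 * M.δ) ≤ M.hullOverlap := by
  have hδ := M.one_le_δ
  have hθ := M.overlapBound_nonneg (22 * M.δ)
  have hθ' := M.overlapBound_nonneg (26 * M.δ)
  have leg : ∀ {z p h : Γ}, M.IsArm n (r + s) H z p h → ∀ x y,
      M.excess p z (M.pt a x) ≤ 20 * M.δ → M.excess p z (M.pt a y) ≤ 20 * M.δ →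
      |x - y| ≤ M.overlapBound (22 * M.δ) + 20 * M.δ := fun A x y hx hy => by
    have := A.abs_sub_le (A.eq_or_not_coaxial hn ha) hx hy
    rwa [show 20 * M.δ + 2 * M.δ = 22 * M.δ by ring] at this
  have shank : ∀ {z p h : Γ}, M.IsArm n (r + s) H z p h → ∀ x y,
      M.excess h p (M.pt a x) ≤ 20 * M.δ → M.excess h p (M.pt a y) ≤ 20 * M.δ →
      |x - y| ≤ 61 * M.δ := fun A x y hx hy => by
    have far := le_dist_pt_of_translation_notMem ha (le_nextWindmill A.mem)
    have := M.dist_le_of_excess_le_of_le_dist hx hy (far x) (far y) A.dist_lt.le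
    have := M.abs_sub_le_dist_pt a x y
    omega
  let near (u v : Γ) (t : ℤ) : Prop := M.excess u v (M.pt a t) ≤ 20 * M.δ
  have hcover := sub_lt_sum_of_cover (i := i) (j := j)
    (P := ![near p z, near h p, near h h', near h' p', near p' z'])
    (B := ![M.overlapBound (22 * M.δ) + 20 * M.δ, 61 * M.δ, M.overlapBound (26 * M.δ), 61 * M.δ,
      M.overlapBound (22 * M.δ) + 20 * M.δ]) ?_ ?_ ?_
  · simp only [Fin.sum_univ_five, Matrix.cons_val] at hcover
    unfold hullOverlap
    omega
  · intro k
    fin_cases k <;> simp only [Fin.mk_one, Fin.zero_eta, Fin.reduceFinMk, Matrix.cons_val] <;> omega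
  · intro t hit htj
    have hside := M.excess_le_side_of_hexagon (p := p) (h := h) (h' := h') (p' := p')
      (hij t hit htj)
    rw [show 17 * M.δ + 3 * M.δ = 20 * M.δ by ring] at hside
    rcases hside with hside | hside | hside | hside | hside
    exacts [⟨0, hside⟩, ⟨1, hside⟩, ⟨2, hside⟩, ⟨3, hside⟩, ⟨4, hside⟩]
  · intro k
    fin_cases k
    exacts [leg A, shank A, fun x y => I.abs_sub_le_overlapBound hs hn A.mem A'.mem ha, shank A',
      leg A']

lemma translation_mul_notMem {w a : Γ} (hw : w ∈ M.nextWindmill n r' H)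
    (ha : M.translation a n ∉ M.nextWindmill n r' H) :
    M.translation (w⁻¹ * a) n ∉ M.nextWindmill n r' H := by
  rwa [translation_mul_mem_iff (inv_mem hw)]

namespace ChordDecomposition
variable {w : Γ}

lemma excess_tips_mul (Q : M.ChordDecomposition n r' κ' H w) {l : ℕ} (hl : l ≤ Q.m) (f : Γ) :
    M.excess (Q.left l).tip (Q.right l).tip ((Q.W l)⁻¹ * f) = M.excess (Q.P l) (Q.P (l + 1)) f := by
  rw [← M.excess_mul_left (Q.W l), Q.W_mul_left_tip l hl, Q.W_mul_right_tip, mul_inv_cancel_left]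

/-- Near a corner, a long part of the axis of `a` would follow the chord at this corner. -/
lemma lt_dist_corner (Q : M.ChordDecomposition n r' κ' H w) (hn : M.n₀ ∣ n)
    (hκ : 59 * M.δ + 2 * (M.T * (M.hullOverlap + 1)) < 2 * κ') {a : Γ}
    (ha : M.translation a n ∉ M.nextWindmill n r' H) {i j t : ℤ} (hit : i ≤ t) (htj : t ≤ j)
    (hij : j = i + M.hullOverlap + 1)
    (hnear : ∀ t, i ≤ t → t ≤ j → M.excess (Q.P 0) (Q.P (Q.m + 1)) (M.pt a t) ≤ 5 * M.δ)
    {l : ℕ} (hl : l < Q.m) : 22 * M.δ < M.dist (Q.P (l + 1)) (M.pt a t) := by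
  by_contra! hlt
  have hδ := M.one_le_δ
  have chord : ∀ t', i ≤ t' → t' ≤ j →
      M.excess (M.pt (Q.P (l + 1)) (-κ')) (M.pt (Q.P (l + 1)) κ') (M.pt a t') ≤ 7 * M.δ := by
    intro t' hit' htj'
    have hdist := M.dist_triangle (Q.P (l + 1)) (M.pt a t) (M.pt a t')
    rw [M.dist_pt_pt] at hdist
    have habs : M.T * |t - t'| ≤ M.T * (M.hullOverlap + 1) :=
      mul_le_mul_of_nonneg_left (abs_le.2 ⟨by omega, by omega⟩) (zero_le_one.trans M.one_le_T)
    have := Q.chordPath.excess_axis_le_of_dist_lt hl (hnear t' hit' htj') (by omega)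
    omega
  have hco : ¬ M.Coaxial M.n₀ a (Q.P (l + 1)) := fun hco =>
    ha (translation_mem_of_coaxial hn hco.symm (Q.translation_mem l hl))
  have hlt := M.abs_sub_lt_of_not_coaxial hco (chord i le_rfl (by omega))
    (chord j (by omega) le_rfl)
  rw [show 7 * M.δ + 2 * M.δ = 9 * M.δ by ring, abs_of_nonneg (by omega)] at hlt
  have := M.overlapBound_nonneg (22 * M.δ)
  have := M.overlapBound_nonneg (26 * M.δ)
  unfold hullOverlap at hij
  omega

lemma exists_side_near_axis (Q : M.ChordDecomposition n r' κ' H w) {a : Γ} {i j : ℤ}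
    (hij : i ≤ j)
    (hcorner : ∀ t, i ≤ t → t ≤ j → ∀ l, l < Q.m → 22 * M.δ < M.dist (Q.P (l + 1)) (M.pt a t))
    (hnear : ∀ t, i ≤ t → t ≤ j → M.excess (Q.P 0) (Q.P (Q.m + 1)) (M.pt a t) ≤ 5 * M.δ) :
    ∃ l ≤ Q.m, ∀ t, i ≤ t → t ≤ j → M.excess (Q.P l) (Q.P (l + 1)) (M.pt a t) ≤ 17 * M.δ := by
  have hδ := M.one_le_δ
  have side : ∀ t, i ≤ t → t ≤ j →
      ∃ l ≤ Q.m, M.excess (Q.P l) (Q.P (l + 1)) (M.pt a t) ≤ 17 * M.δ := by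
    intro t hit htj
    obtain ⟨l, hl, hlt⟩ :=
      Q.chordPath.isLocalQuasigeodesic.exists_near_side (by omega) (hnear t hit htj)
    exact ⟨l, hl, by omega⟩
  obtain ⟨l, hl, hli⟩ := side i le_rfl hij
  refine ⟨l, hl, fun t hit => ?_⟩
  induction t, hit using Int.leInduction with
  | base => exact fun _ => hli
  | succ t hit ih =>
  intro htj
  specialize ih (by omega)
  obtain ⟨l', hl', hlt'⟩ := side (t + 1) (by omega) htj
  have hstep := M.excess_le_add_dist (Q.P l') (Q.P (l' + 1)) (M.pt a (t + 1)) (M.pt a t)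
  have hdist := M.dist_pt_succ_le a t
  rw [M.dist_comm] at hdist
  have hne := hcorner t hit (by omega)
  rcases lt_trichotomy l l' with h | rfl | h
  · have := Q.chordPath.two_mul_dist_succ_le_of_two_sides h hl' ih (e' := 19 * M.δ) (by omega)
    have := hne l (by omega)
    rw [M.dist_comm] at this
    omega
  · exact hlt'
  · have := Q.chordPath.two_mul_dist_succ_le_of_two_sides h hl (e := 19 * M.δ) (by omega) ih
    have := hne l' (by omega)
    rw [M.dist_comm] at this
    omega

lemma sub_le_hullOverlap (Q : M.ChordDecomposition n (r + s) κ' H w)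
    (I : M.IsWindmill n K τ κ r H) (hs : τ + 90 * M.δ ≤ s) (hn : M.n₀ ∣ n)
    (hκ : 59 * M.δ + 2 * (M.T * (M.hullOverlap + 1)) < 2 * κ') {a : Γ}
    (ha : M.translation a n ∉ M.nextWindmill n (r + s) H) {i j : ℤ}
    (hi : M.excess 1 w (M.pt a i) ≤ 2 * M.δ) (hj : M.excess 1 w (M.pt a j) ≤ 2 * M.δ) :
    j - i ≤ M.hullOverlap := by
  by_contra! hlt
  have hδ := M.one_le_δ
  have hO := M.hullOverlap_nonneg
  set j' := i + M.hullOverlap + 1 with hj'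
  have hnear : ∀ t, i ≤ t → t ≤ j' → M.excess (Q.P 0) (Q.P (Q.m + 1)) (M.pt a t) ≤ 5 * M.δ := by
    intro t hit htj
    rw [Q.start_eq, Q.end_eq]
    have := M.excess_le_of_endpoints hi hj (by omega) (by omega)
      (M.excess_pt_eq_zero (a := a) hit (by omega : t ≤ j)).le
    omega
  obtain ⟨l, hl, hside⟩ := Q.exists_side_near_axis (by omega)
    (fun t hit htj l hl => Q.lt_dist_corner hn hκ ha hit htj hj' hnear hl) hnear
  have := I.sub_add_overlapBound_le_hullOverlap hs hn (Q.isArm_left l hl) (Q.isArm_right l hl)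
    (translation_mul_notMem (Q.W_mem l) ha) fun t hit htj => by
      rw [← M.mul_pt, Q.excess_tips_mul hl]
      exact hside t hit htj
  have := M.overlapBound_nonneg (9 * M.δ)
  omega

lemma abs_sub_le_hullOverlap (Q : M.ChordDecomposition n (r + s) κ' H w)
    (I : M.IsWindmill n K τ κ r H) (hs : τ + 90 * M.δ ≤ s) (hn : M.n₀ ∣ n)
    (hκ : 59 * M.δ + 2 * (M.T * (M.hullOverlap + 1)) < 2 * κ') {a : Γ}
    (ha : M.translation a n ∉ M.nextWindmill n (r + s) H) {i j : ℤ}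
    (hi : M.excess 1 w (M.pt a i) ≤ 2 * M.δ) (hj : M.excess 1 w (M.pt a j) ≤ 2 * M.δ) :
    |i - j| ≤ M.hullOverlap :=
  abs_sub_le_iff.2 ⟨Q.sub_le_hullOverlap I hs hn hκ ha hj hi,
    Q.sub_le_hullOverlap I hs hn hκ ha hi hj⟩

lemma exists_long_axis (Q : M.ChordDecomposition n r' κ' H w) (hm : 0 < Q.m) :
    ∃ a, ∀ t, 0 ≤ t → t ≤ 2 * κ' → M.excess 1 w (M.pt a t) ≤ 8 * M.δ := by
  refine ⟨M.pt (Q.P 1) (-κ'), fun t ht₀ ht => ?_⟩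
  have := Q.chordPath.excess_chord_le hm (s := -κ' + t) (by omega) (by omega)
  rwa [Q.start_eq, Q.end_eq, zero_add, ← M.pt_pt] at this

end ChordDecomposition
end AxisSystem

namespace DiscreteHyperbolicMetric
variable {X : Type*} (M : DiscreteHyperbolicMetric X) {u v w q₁ q₂ : X}

lemma geodesic_induction {p : X → Prop} (hu : p u)
    (step : ∀ y y', M.excess u v y = 0 → M.excess u v y' = 0 → M.dist y y' ≤ 1 → p y → p y') :
    p v := by
  suffices key : ∀ k : ℕ, ∀ y, M.dist y v = k → M.excess u v y = 0 → p y → p v from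
    key (M.dist u v).toNat u (Int.toNat_of_nonneg (M.dist_nonneg u v)).symm (M.excess_left_self u v)
      hu
  intro k
  induction k with
  | zero =>
    intro y hy _ hpy
    rwa [← M.eq_of_dist_eq_zero y v hy]
  | succ k ih =>
    intro y hy hexcess hpy
    obtain ⟨z, hyz, hzv⟩ := M.exists_between y v 1 (by omega) (by omega)
    have hz : M.excess u v z = 0 := by
      have := M.excess_nonneg u v z
      have := M.dist_triangle u y z
      unfold excess at *
      omega
    exact ih z (by omega) hz (step y z hexcess hz (by omega) hpy)

lemma exists_extension {c : ℤ} (h₁ : M.excess u w q₁ = 0) (h₂ : M.excess q₁ w q₂ = 0) (hc : 0 ≤ c)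
    (hu : c ≤ M.dist u q₁) (hw : c ≤ M.dist q₂ w) :
    ∃ y₁ y₂, M.dist q₁ y₁ = c ∧ M.dist q₂ y₂ = c ∧ c ≤ M.dist q₁ y₂ ∧ c ≤ M.dist q₂ y₁ ∧
      M.excess y₁ y₂ q₁ = 0 ∧ M.excess y₁ y₂ q₂ = 0 ∧
      ∀ y, M.excess y₁ y₂ y = 0 → M.excess u w y = 0 := by
  have hq₁u := M.dist_comm q₁ u
  obtain ⟨y₁, h₁y, hy₁u⟩ := M.exists_between q₁ u c hc (by omega)
  obtain ⟨y₂, h₂y, hy₂w⟩ := M.exists_between q₂ w c hc hw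
  have := M.dist_comm q₁ y₁
  have := M.dist_comm y₂ q₂
  have := M.dist_comm y₁ u
  have := M.dist_triangle u y₁ w
  have := M.dist_triangle y₁ y₂ w
  have := M.dist_triangle y₁ q₁ y₂
  have := M.dist_triangle q₁ q₂ y₂
  have := M.dist_triangle y₁ q₂ y₂
  have := M.dist_triangle y₁ q₁ q₂
  have hchain : M.dist y₁ y₂ = c + M.dist q₁ q₂ + c ∧
      M.dist u w = M.dist u y₁ + M.dist y₁ y₂ + M.dist y₂ w := by
    unfold excess at h₁ h₂
    omega
  have := M.dist_nonneg q₁ q₂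
  have := M.dist_comm y₁ q₂
  refine ⟨y₁, y₂, h₁y, h₂y, by omega, by omega, ?_, ?_, fun y hy => ?_⟩
  · unfold excess; omega
  · unfold excess; omega
  · have := M.dist_triangle u y₁ y
    have := M.dist_triangle y y₂ w
    have := M.excess_nonneg u w y
    unfold excess at *
    omega

lemma exists_near_of_extension {c : ℤ} {y₁ y₂ y : X} (hc : 2 * M.δ ≤ c) (h₁ : M.dist q₁ y₁ = c)
    (h₂ : M.dist q₂ y₂ = c) (hy : M.excess y₁ y₂ y = 0) :
    ∃ y', M.excess q₁ q₂ y' = 0 ∧ M.dist y y' ≤ c + 2 * M.δ := by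
  have hδ := M.one_le_δ
  rcases M.excess_le_or_excess_le hy.le q₁ with h | h
  · have := M.dist_comm q₁ y
    have := M.dist_comm q₁ y₁
    have := M.dist_nonneg y₁ y
    exact ⟨q₁, M.excess_left_self q₁ q₂, by unfold excess at h; omega⟩
  · rcases M.excess_le_or_excess_le h q₂ with h' | h'
    · obtain ⟨y', hy', hdist⟩ := M.exists_geodesic_point h'
      exact ⟨y', hy', by omega⟩
    · have := M.dist_comm q₂ y
      have := M.dist_nonneg y y₂
      exact ⟨q₂, M.excess_right_self q₁ q₂, by unfold excess at h'; omega⟩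

end DiscreteHyperbolicMetric

namespace AxisSystem
variable {Γ : Type*} [Group Γ]

/-- How far beyond the `r'`-neighbourhood of a windmill the parts of a path of arms can be close to
each other. -/
noncomputable def farDepth (M : AxisSystem Γ) (K : ℤ) : ℤ :=
  10 * M.δ + M.armDepth K (32 * M.δ) + M.twoArmsDepth K (32 * M.δ)

variable {M : AxisSystem Γ} {n K τ κ κ' r r' : ℤ} {H : Subgroup Γ} {w x y : Γ}

lemma armDepth_nonneg (hK : 0 ≤ K) : 0 ≤ M.armDepth K (32 * M.δ) := by
  have := M.one_le_δ
  have := M.one_le_T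
  unfold armDepth
  positivity

lemma twoArmsDepth_nonneg (hK : 0 ≤ K) : 0 ≤ M.twoArmsDepth K (32 * M.δ) := by
  have := M.one_le_δ
  have := M.one_le_T
  have := armOverlap_nonneg (M := M) hK (by omega : 0 ≤ 32 * M.δ)
  unfold twoArmsDepth
  positivity

lemma le_farDepth (hK : 0 ≤ K) : 10 * M.δ ≤ M.farDepth K ∧
    M.armDepth K (32 * M.δ) ≤ M.farDepth K ∧ M.twoArmsDepth K (32 * M.δ) ≤ M.farDepth K := by
  have := M.one_le_δ
  have := armDepth_nonneg (M := M) hK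
  have := twoArmsDepth_nonneg (M := M) hK
  unfold farDepth
  omega

lemma IsArm.exists_pt_near {z p h f : Γ} (A : M.IsArm n r' H z p h) {E : ℤ}
    (hf : M.excess p z f ≤ E) : ∃ t, M.dist f (M.pt z t) ≤ E + 2 * M.δ := by
  rcases A.eq_or_isFoot with ⟨rfl, -⟩ | ⟨-, -, l, rfl⟩
  · exact M.exists_pt_near_of_excess_self_pt (l := 0) (by rwa [M.pt_zero])
  · obtain ⟨t, ht⟩ := M.exists_pt_near_of_excess_self_pt hf
    exact ⟨t - l, by rwa [M.pt_pt, add_sub_cancel]⟩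

namespace ChordDecomposition

/-- The point `x` is `E`-close to one of the three long parts of the path of arms replacing the
`l`-th side: the left axis, the side in the translated windmill, the right axis. -/
def NearPart (Q : M.ChordDecomposition n r' κ' H w) (E : ℤ) (x : Γ) (l : ℕ) : Fin 3 → Prop
  | 0 => M.excess (Q.left l).foot (Q.left l).tip ((Q.W l)⁻¹ * x) ≤ E
  | 1 => M.excess (Q.left l).base (Q.right l).base ((Q.W l)⁻¹ * x) ≤ E
  | 2 => M.excess (Q.right l).foot (Q.right l).tip ((Q.W l)⁻¹ * x) ≤ E

/-- The point `x` is `E`-close to the `l`-th side and to its `k`-th part, where `c = 2 * l + k`.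
In this numbering the two parts on the axis of the vertex `P j` have the common label `2 * j`. -/
def HasLabel (Q : M.ChordDecomposition n r' κ' H w) (E : ℤ) (x : Γ) (c : ℕ) : Prop :=
  ∃ l ≤ Q.m, ∃ k : Fin 3, c = 2 * l + k ∧ M.excess (Q.P l) (Q.P (l + 1)) x ≤ E ∧ Q.NearPart E x l k

variable {Q : M.ChordDecomposition n r' κ' H w} {E E' : ℤ} {l l' c c' j : ℕ} {k k' : Fin 3}

lemma NearPart.mono (h : Q.NearPart E x l k) (hE : E + 2 * M.dist x y ≤ E') :
    Q.NearPart E' y l k := by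
  rw [← M.dist_mul_left (Q.W l)⁻¹] at hE
  fin_cases k <;> exact (M.excess_le_add_dist _ _ _ _).trans ((add_le_add_left h _).trans hE)

lemma HasLabel.mono (h : Q.HasLabel E x c) (hE : E + 2 * M.dist x y ≤ E') :
    Q.HasLabel E' y c := by
  obtain ⟨l, hl, k, hc, hside, hpart⟩ := h
  have := M.excess_le_add_dist (Q.P l) (Q.P (l + 1)) x y
  exact ⟨l, hl, k, hc, by omega, hpart.mono hE⟩

lemma le_dist_base (hx : ∀ h ∈ M.nextWindmill n r' H, r' + M.farDepth K ≤ M.dist h x) {h : Γ}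
    (hh : h ∈ H) : r' + M.farDepth K ≤ M.dist h ((Q.W l)⁻¹ * x) := by
  rw [← M.dist_mul_left (Q.W l), mul_inv_cancel_left]
  exact hx _ (mul_mem (Q.W_mem l) (le_nextWindmill hh))

lemma NearPart.eq (I : M.IsWindmill n K τ κ r H) (hK : 0 ≤ K)
    (hx : ∀ h ∈ M.nextWindmill n r' H, r' + M.farDepth K ≤ M.dist h x) (hl : l ≤ Q.m)
    (h : Q.NearPart (32 * M.δ) x l k) (h' : Q.NearPart (32 * M.δ) x l k') : k = k' := by
  have A := Q.isArm_left l hl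
  have A' := Q.isArm_right l hl
  have far := le_dist_base (Q := Q) (l := l) hx A.mem
  have far' := le_dist_base (Q := Q) (l := l) hx A'.mem
  obtain ⟨-, harm, htwo⟩ := le_farDepth (M := M) hK
  have left_base : ¬ (Q.NearPart (32 * M.δ) x l 0 ∧ Q.NearPart (32 * M.δ) x l 1) := by
    rintro ⟨h₀, h₁⟩
    rw [NearPart, M.excess_comm] at h₁
    have := dist_lt_add_armDepth I hK A A'.mem h₀ h₁
    omega
  have base_right : ¬ (Q.NearPart (32 * M.δ) x l 1 ∧ Q.NearPart (32 * M.δ) x l 2) := by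
    rintro ⟨h₁, h₂⟩
    have := dist_lt_add_armDepth I hK A' A.mem h₂ h₁
    omega
  have left_right : ¬ (Q.NearPart (32 * M.δ) x l 0 ∧ Q.NearPart (32 * M.δ) x l 2) := by
    rintro ⟨h₀, h₂⟩
    have := dist_lt_add_twoArmsDepth I hK A A' (Q.not_coaxial l hl) h₀ h₂
    omega
  wlog hlt : k < k' generalizing k k'
  · rcases (not_lt.1 hlt).eq_or_lt with heq | hgt
    · exact heq.symm
    · exact (this h' h hgt).symm
  fin_cases k <;> fin_cases k'
  exacts [rfl, absurd ⟨h, h'⟩ left_base, absurd ⟨h, h'⟩ left_right, absurd hlt (by decide), rfl,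
    absurd ⟨h, h'⟩ base_right, absurd hlt (by decide), absurd hlt (by decide), rfl]

lemma exists_hasLabel (Q : M.ChordDecomposition n r' κ' H w) (hK : 0 ≤ K)
    (hx : ∀ h ∈ M.nextWindmill n r' H, r' + M.farDepth K ≤ M.dist h x)
    (hxw : M.excess 1 w x = 0) : ∃ c, Q.HasLabel (10 * M.δ) x c := by
  have hδ := M.one_le_δ
  obtain ⟨hdepth, -, -⟩ := le_farDepth (M := M) hK
  have hpath : M.excess (Q.P 0) (Q.P (Q.m + 1)) x ≤ 0 := by rw [Q.start_eq, Q.end_eq, hxw]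
  obtain ⟨l, hl, hside⟩ := Q.chordPath.isLocalQuasigeodesic.exists_near_side le_rfl hpath
  have not_shank : ∀ {z p h : Γ}, M.IsArm n r' H z p h →
      7 * M.δ + 3 * M.δ < M.excess h p ((Q.W l)⁻¹ * x) := by
    intro z p h A
    have := A.dist_lt
    have := le_dist_base (Q := Q) (l := l) hx A.mem
    have := M.dist_nonneg ((Q.W l)⁻¹ * x) p
    unfold DiscreteHyperbolicMetric.excess
    omega
  suffices ∃ k, Q.NearPart (7 * M.δ + 3 * M.δ) x l k by
    obtain ⟨k, hk⟩ := this
    rw [show 7 * M.δ + 3 * M.δ = 10 * M.δ by ring] at hk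
    exact ⟨_, l, hl, k, rfl, by omega, hk⟩
  rw [mul_zero, zero_add, ← Q.excess_tips_mul hl] at hside
  rcases M.excess_le_side_of_hexagon (p := (Q.left l).foot) (h := (Q.left l).base)
    (h' := (Q.right l).base) (p' := (Q.right l).foot) hside with h | h | h | h | h
  · exact ⟨0, h⟩
  · exact absurd h (not_shank (Q.isArm_left l hl)).not_ge
  · exact ⟨1, h⟩
  · exact absurd h (not_shank (Q.isArm_right l hl)).not_ge
  · exact ⟨2, h⟩

lemma eq_succ_of_two_sides (Q : M.ChordDecomposition n r' κ' H w) (hκ : 43 * M.δ < κ')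
    (hlt : l < l') (hl' : l' ≤ Q.m) (h : M.excess (Q.P l) (Q.P (l + 1)) x ≤ 12 * M.δ)
    (h' : M.excess (Q.P l') (Q.P (l' + 1)) x ≤ 12 * M.δ) :
    l' = l + 1 ∧ M.dist x (Q.P (l + 1)) ≤ 16 * M.δ := by
  have hnear := Q.chordPath.two_mul_dist_succ_le_of_two_sides hlt hl' h h'
  refine ⟨?_, by omega⟩
  by_contra hne
  have := M.dist_comm x (Q.P (l + 1))
  have hvertex := M.excess_le_dist_left (Q.P (l + 1)) (Q.P (l + 1 + 1)) x
  have := Q.chordPath.two_mul_dist_succ_le_of_two_sides (l := l + 1) (l' := l') (by omega) hl'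
    (e := 32 * M.δ) (by omega) h'
  have := (Q.chordPath.length_sub_le_dist (i := l) (by omega)).2
  have := M.dist_triangle (Q.P (l + 1)) x (Q.P (l + 2))
  rw [show l + 1 + 1 = l + 2 from rfl] at *
  omega

lemma nearPart_two_of_dist_le (h : M.dist x (Q.P (l + 1)) ≤ 16 * M.δ) :
    Q.NearPart (32 * M.δ) x l 2 := by
  rw [M.dist_comm, ← Q.W_mul_right_tip, ← M.dist_mul_left (Q.W l)⁻¹, inv_mul_cancel_left] at h
  have := M.excess_le_dist_right (Q.right l).foot (Q.right l).tip ((Q.W l)⁻¹ * x)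
  rw [NearPart]
  omega

lemma nearPart_zero_of_dist_le (hl : l ≤ Q.m) (h : M.dist x (Q.P l) ≤ 16 * M.δ) :
    Q.NearPart (32 * M.δ) x l 0 := by
  rw [M.dist_comm, ← Q.W_mul_left_tip l hl, ← M.dist_mul_left (Q.W l)⁻¹, inv_mul_cancel_left] at h
  have := M.excess_le_dist_right (Q.left l).foot (Q.left l).tip ((Q.W l)⁻¹ * x)
  rw [NearPart]
  omega

lemma HasLabel.eq (I : M.IsWindmill n K τ κ r H) (hK : 0 ≤ K) (hκ : 43 * M.δ < κ')
    (hx : ∀ h ∈ M.nextWindmill n r' H, r' + M.farDepth K ≤ M.dist h x)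
    (h : Q.HasLabel (12 * M.δ) x c) (h' : Q.HasLabel (12 * M.δ) x c') : c = c' := by
  have hδ := M.one_le_δ
  obtain ⟨l, hl, k, rfl, hside, hpart⟩ := h
  obtain ⟨l', hl', k', rfl, hside', hpart'⟩ := h'
  wlog hle : l ≤ l' generalizing l l' k k'
  · exact (this l' hl' k' hside' hpart' l hl k hside hpart (by omega)).symm
  have hself : 12 * M.δ + 2 * M.dist x x ≤ 32 * M.δ := by rw [M.dist_self]; omega
  rcases hle.eq_or_lt with rfl | hlt
  · rw [(hpart.mono hself).eq I hK hx hl (hpart'.mono hself)]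
  · obtain ⟨rfl, hvertex⟩ := Q.eq_succ_of_two_sides hκ hlt hl' hside hside'
    rw [(hpart.mono hself).eq I hK hx hl (nearPart_two_of_dist_le hvertex),
      (hpart'.mono hself).eq I hK hx hl' (nearPart_zero_of_dist_le hl' hvertex)]
    simp only [Fin.val_two, Fin.val_zero]
    omega

lemma not_nearPart_of_tip_eq (hK : 0 ≤ K) (hr : 0 ≤ r')
    (hx : ∀ h ∈ M.nextWindmill n r' H, r' + M.farDepth K ≤ M.dist h x) {A : Arm Γ}
    (hA : A.tip = A.foot ∧ A.foot = A.base) (hbase : A.base ∈ H) :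
    ¬ M.excess A.foot A.tip ((Q.W l)⁻¹ * x) ≤ 10 * M.δ := by
  have hδ := M.one_le_δ
  have := le_dist_base (Q := Q) (l := l) hx hbase
  obtain ⟨hdepth, -, -⟩ := le_farDepth (M := M) hK
  rw [hA.1, hA.2, M.excess_self]
  omega

lemma HasLabel.exists_pt_near (hK : 0 ≤ K) (hr : 0 ≤ r')
    (hx : ∀ h ∈ M.nextWindmill n r' H, r' + M.farDepth K ≤ M.dist h x)
    (h : Q.HasLabel (10 * M.δ) x (2 * j)) :
    M.translation (Q.P j) n ∈ M.nextWindmill n r' H ∧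
      ∃ t, M.dist x (M.pt (Q.P j) t) ≤ 12 * M.δ := by
  obtain ⟨l, hl, k, hc, -, hpart⟩ := h
  have near_axis : ∀ {A : Arm Γ} {i : ℕ}, M.IsArm n r' H A.tip A.foot A.base →
      Q.W l * A.tip = Q.P i → M.excess A.foot A.tip ((Q.W l)⁻¹ * x) ≤ 10 * M.δ →
      ∃ t, M.dist x (M.pt (Q.P i) t) ≤ 12 * M.δ := by
    intro A i hA htip hx
    obtain ⟨t, ht⟩ := hA.exists_pt_near hx
    rw [← M.dist_mul_left (Q.W l), mul_inv_cancel_left, M.mul_pt, htip] at ht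
    exact ⟨t, by omega⟩
  fin_cases k
  · obtain rfl : j = l := by dsimp only at hc; omega
    rcases j with _ | i
    · exact absurd hpart
        (not_nearPart_of_tip_eq hK hr hx Q.left_zero (Q.isArm_left 0 hl).mem)
    · exact ⟨Q.translation_mem i hl, near_axis (Q.isArm_left _ hl) (Q.W_mul_left_tip _ hl) hpart⟩
  · dsimp only at hc
    omega
  · obtain rfl : j = l + 1 := by dsimp only at hc; omega
    rcases hl.eq_or_lt with rfl | hlt
    · exact absurd hpart
        (not_nearPart_of_tip_eq hK hr hx Q.right_last (Q.isArm_right _ le_rfl).mem)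
    · exact ⟨Q.translation_mem l hlt, near_axis (Q.isArm_right l hl) (Q.W_mul_right_tip l) hpart⟩

lemma HasLabel.excess_le (h : Q.HasLabel E x (2 * j + 1)) :
    j ≤ Q.m ∧ M.excess (Q.left j).base (Q.right j).base ((Q.W j)⁻¹ * x) ≤ E := by
  obtain ⟨l, hl, k, hc, -, hpart⟩ := h
  fin_cases k
  · dsimp only at hc
    omega
  · obtain rfl : j = l := by dsimp only at hc; omega
    exact ⟨hl, hpart⟩
  · dsimp only at hc
    omega

lemma exists_hasLabel_of_far (Q : M.ChordDecomposition n r' κ' H w)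
    (I : M.IsWindmill n K τ κ r H) (hK : 0 ≤ K) (hκ : 43 * M.δ < κ') {y₁ y₂ : Γ}
    (hfar : ∀ y, M.excess y₁ y₂ y = 0 →
      ∀ h ∈ M.nextWindmill n r' H, r' + M.farDepth K ≤ M.dist h y)
    (hw : ∀ y, M.excess y₁ y₂ y = 0 → M.excess 1 w y = 0) :
    ∃ c, Q.HasLabel (10 * M.δ) y₁ c ∧ Q.HasLabel (10 * M.δ) y₂ c := by
  have hδ := M.one_le_δ
  have h₁ := M.excess_left_self y₁ y₂
  obtain ⟨c, hc⟩ := Q.exists_hasLabel hK (hfar y₁ h₁) (hw y₁ h₁)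
  refine ⟨c, hc, M.geodesic_induction (u := y₁) (p := (Q.HasLabel (10 * M.δ) · c)) hc
    fun y y' hy hy' hyy' hlabel => ?_⟩
  obtain ⟨c', hc'⟩ := Q.exists_hasLabel hK (hfar y' hy') (hw y' hy')
  rw [M.dist_comm] at hyy'
  have heq : c = c' := HasLabel.eq I hK hκ (hfar y hy)
    (hlabel.mono (by rw [M.dist_self]; omega)) (hc'.mono (by omega))
  rwa [heq]

lemma exists_axis_of_hasLabel (I : M.IsWindmill n K τ κ r H) (hK : 0 ≤ K) (hr : 0 ≤ r') {R : ℤ}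
    (hR : r' + M.farDepth K ≤ R) (hRτ : r + τ + 49 * M.δ ≤ R) {y₁ y₂ : Γ}
    (hfar : ∀ y, M.excess y₁ y₂ y = 0 → ∀ h ∈ M.nextWindmill n r' H, R ≤ M.dist h y)
    (h₁ : Q.HasLabel (10 * M.δ) y₁ c) (h₂ : Q.HasLabel (10 * M.δ) y₂ c) :
    ∃ a i j, M.translation a n ∈ M.nextWindmill n r' H ∧ M.dist y₁ (M.pt a i) ≤ 16 * M.δ ∧
      M.dist y₂ (M.pt a j) ≤ 16 * M.δ := by
  have hδ := M.one_le_δ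
  rcases Nat.even_or_odd' c with ⟨j, rfl | rfl⟩
  · obtain ⟨hmem, t₁, ht₁⟩ := h₁.exists_pt_near hK hr fun h hh =>
      hR.trans (hfar y₁ (M.excess_left_self y₁ y₂) h hh)
    obtain ⟨-, t₂, ht₂⟩ := h₂.exists_pt_near hK hr fun h hh =>
      hR.trans (hfar y₂ (M.excess_right_self y₁ y₂) h hh)
    exact ⟨Q.P j, t₁, t₂, hmem, by omega, by omega⟩
  · obtain ⟨hj, h₁⟩ := h₁.excess_le
    obtain ⟨-, h₂⟩ := h₂.excess_le
    obtain ⟨a, t₁, t₂, ha, ht₁, ht₂⟩ := I.exists_axis_of_excess_le (Q.isArm_left j hj).mem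
      (Q.isArm_right j hj).mem h₁ h₂ fun y hy h hh => by
        rw [← M.excess_mul_left (Q.W j), mul_inv_cancel_left, mul_inv_cancel_left] at hy
        obtain ⟨y', hy', hyy'⟩ := M.exists_geodesic_point hy
        have := hfar y' hy' (Q.W j * h) (mul_mem (Q.W_mem j) (le_nextWindmill hh))
        have := M.dist_triangle (Q.W j * h) (Q.W j * y) y'
        rw [M.dist_mul_left] at this
        omega
    refine ⟨Q.W j * a, t₁, t₂, ?_, ?_, ?_⟩
    · rw [translation_mul_mem_iff (Q.W_mem j)]
      exact le_nextWindmill ha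
    · rw [← M.mul_pt, ← M.dist_mul_left (Q.W j)⁻¹, inv_mul_cancel_left]
      omega
    · rw [← M.mul_pt, ← M.dist_mul_left (Q.W j)⁻¹, inv_mul_cancel_left]
      omega

end ChordDecomposition

lemma exists_pt_near_of_far_endpoints {a y₁ y₂ q : Γ} {i j : ℤ}
    (h₁ : M.dist y₁ (M.pt a i) ≤ 16 * M.δ) (h₂ : M.dist y₂ (M.pt a j) ≤ 16 * M.δ)
    (hq : M.excess y₁ y₂ q = 0) (hqy₁ : 20 * M.δ ≤ M.dist q y₁) (hqy₂ : 20 * M.δ ≤ M.dist q y₂) :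
    ∃ t, M.dist q (M.pt a t) ≤ 4 * M.δ := by
  have hδ := M.one_le_δ
  rw [M.dist_comm] at h₁ h₂
  have he₁ := M.excess_le_dist_left (M.pt a i) (M.pt a j) y₁
  have he₂ := M.excess_le_dist_right (M.pt a i) (M.pt a j) y₂
  obtain ⟨t, -, -, ht⟩ := M.exists_pt_near (M.excess_le_of_far_endpoints (u := M.pt a i)
    (v := M.pt a j) (ε := 32 * M.δ) (by omega) (by omega) hq.le (by omega) (by omega))
  exact ⟨t, by omega⟩

lemma ChordDecomposition.exists_axis_of_far (Q : M.ChordDecomposition n r' κ' H w)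
    (I : M.IsWindmill n K τ κ r H) (hw : w ∈ M.nextWindmill n r' H) (hK : 0 ≤ K)
    (hκ : 43 * M.δ < κ') (hr' : 0 ≤ r') (hτ : M.farDepth K + 23 * M.δ ≤ τ)
    (hr : r + 72 * M.δ ≤ r') {q₁ q₂ : Γ} (h₁ : M.excess 1 w q₁ = 0) (h₂ : M.excess q₁ w q₂ = 0)
    (hfar : ∀ y, M.excess q₁ q₂ y = 0 → ∀ h ∈ M.nextWindmill n r' H, r' + τ ≤ M.dist h y) :
    ∃ a i j, M.translation a n ∈ M.nextWindmill n r' H ∧ M.dist q₁ (M.pt a i) ≤ 4 * M.δ ∧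
      M.dist q₂ (M.pt a j) ≤ 4 * M.δ := by
  have hδ := M.one_le_δ
  obtain ⟨hdepth, -, -⟩ := le_farDepth (M := M) hK
  have h1q₁ := hfar q₁ (M.excess_left_self q₁ q₂) 1 (one_mem _)
  have hwq₂ := hfar q₂ (M.excess_right_self q₁ q₂) w hw
  rw [M.dist_comm] at hwq₂
  obtain ⟨y₁, y₂, hq₁y₁, hq₂y₂, hq₁y₂, hq₂y₁, hq₁, hq₂, hy⟩ :=
    M.exists_extension (c := 20 * M.δ) h₁ h₂ (by omega) (by omega) (by omega)
  have far : ∀ y, M.excess y₁ y₂ y = 0 → ∀ h ∈ M.nextWindmill n r' H,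
      r' + τ - 23 * M.δ ≤ M.dist h y := by
    intro y hy h hh
    obtain ⟨y', hy', hyy'⟩ := M.exists_near_of_extension (by omega) hq₁y₁ hq₂y₂ hy
    have := hfar y' hy' h hh
    have := M.dist_triangle h y y'
    omega
  obtain ⟨c, hc₁, hc₂⟩ := Q.exists_hasLabel_of_far I hK hκ
    (fun y hy h hh => le_trans (by omega) (far y hy h hh)) hy
  obtain ⟨a, i, j, ha, hi, hj⟩ :=
    exists_axis_of_hasLabel I hK hr' (by omega) (by omega) far hc₁ hc₂
  obtain ⟨t₁, ht₁⟩ := exists_pt_near_of_far_endpoints hi hj hq₁ hq₁y₁.ge hq₁y₂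
  obtain ⟨t₂, ht₂⟩ := exists_pt_near_of_far_endpoints hi hj hq₂ hq₂y₁ hq₂y₂.ge
  exact ⟨a, t₁, t₂, ha, ht₁, ht₂⟩

end AxisSystem

namespace AxisSystem
variable {Γ : Type*} [Group Γ]

/-- The distance from a windmill at which its hull consists of single axes. -/
noncomputable def thickness (M : AxisSystem Γ) : ℤ := M.farDepth M.hullOverlap + 23 * M.δ

/-- The growth of the radius from a windmill to the next one. -/
noncomputable def radiusStep (M : AxisSystem Γ) : ℤ := M.thickness + 90 * M.δ

/-- Half of the defect, against `n`, of the long axis pieces of elements of a windmill. -/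
noncomputable def lengthDefect (M : AxisSystem Γ) : ℤ :=
  M.cornerBound M.hullOverlap M.radiusStep + M.δ + 1

/-- The normal closure of `g ^ (2 * n')` is a union of windmills once `n'` exceeds this bound. -/
noncomputable def minHalfExponent (M : AxisSystem Γ) : ℤ :=
  102 * M.δ + 2 * (M.T * (M.hullOverlap + 1)) + M.lengthDefect

/-- The sequence of windmills exhausting the normal closure of `g ^ n`. -/
noncomputable def windmill (M : AxisSystem Γ) (n : ℤ) : ℕ → Subgroup Γ
  | 0 => ⊥
  | k + 1 => M.nextWindmill n (M.radiusStep * (k + 1 : ℕ)) (windmill M n k)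

variable {M : AxisSystem Γ} {n n' r : ℤ} {H : Subgroup Γ}

lemma thickness_pos : 0 < M.thickness := by
  have := M.one_le_δ
  have := (le_farDepth (M := M) (hullOverlap_nonneg (M := M))).1
  unfold thickness
  omega

lemma radiusStep_pos : 0 < M.radiusStep := by
  have := M.one_le_δ
  have := thickness_pos (M := M)
  unfold radiusStep
  omega

lemma isWindmill_bot (n : ℤ) :
    M.IsWindmill n M.hullOverlap M.thickness (2 * M.lengthDefect) 0 ⊥ where
  translation_mem a ha := absurd ha (M.dist_nonneg 1 a).not_gt
  abs_sub_le a _ v hv i j hi hj := by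
    rw [Subgroup.mem_bot.1 hv, M.excess_self] at hi hj
    have := M.dist_triangle (M.pt a i) 1 (M.pt a j)
    have := M.abs_sub_le_dist_pt a i j
    have := M.dist_comm 1 (M.pt a i)
    have := M.one_le_δ
    have := M.overlapBound_nonneg (22 * M.δ)
    have := M.overlapBound_nonneg (26 * M.δ)
    have := M.overlapBound_nonneg (9 * M.δ)
    unfold hullOverlap
    omega
  exists_axis_of_far u hu v hv q₁ q₂ hq₁ _ hfar := by
    rw [Subgroup.mem_bot.1 hu, Subgroup.mem_bot.1 hv, M.excess_self] at hq₁
    have := hfar q₁ (M.excess_left_self q₁ q₂) 1 (one_mem _)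
    have := thickness_pos (M := M)
    omega
  exists_long_axis v hv hv₁ := absurd (Subgroup.mem_bot.1 hv) hv₁

lemma IsWindmill.nextWindmill
    (I : M.IsWindmill n M.hullOverlap M.thickness (2 * M.lengthDefect) r H) (hr : 0 ≤ r)
    (hn₀ : M.n₀ ∣ n) (hn : n = 2 * n') (hn' : M.minHalfExponent < n') :
    M.IsWindmill n M.hullOverlap M.thickness (2 * M.lengthDefect) (r + M.radiusStep)
      (M.nextWindmill n (r + M.radiusStep) H) := by
  have hδ := M.one_le_δ
  have hK := hullOverlap_nonneg (M := M)
  have hstep := radiusStep_pos (M := M)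
  have hτ := thickness_pos (M := M)
  have hstep_eq : M.radiusStep = M.thickness + 90 * M.δ := rfl
  have hdefect_eq : M.lengthDefect = M.cornerBound M.hullOverlap M.radiusStep + M.δ + 1 := rfl
  have hdefect := cornerBound_nonneg (M := M) hK hstep.le
  have hTK : 0 ≤ M.T * (M.hullOverlap + 1) :=
    mul_nonneg (zero_le_one.trans M.one_le_T) (by omega)
  unfold minHalfExponent at hn'
  have hdecomp : ∀ w ∈ M.nextWindmill n (r + M.radiusStep) H,
      Nonempty (M.ChordDecomposition n (r + M.radiusStep) (n' - M.lengthDefect) H w) := fun w hw =>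
    nonempty_chordDecomposition I hK hstep.le (by omega) hn₀ hn (by omega) (by omega) (by omega) hw
  refine ⟨fun a ha => translation_mem_nextWindmill ha, fun a ha v hv i j hi hj => ?_,
    fun u hu v hv q₁ q₂ h₁ h₂ hfar => ?_, fun v hv hv₁ => ?_⟩
  · obtain ⟨Q⟩ := hdecomp v hv
    exact Q.abs_sub_le_hullOverlap I (by omega) hn₀ (by omega) ha hi hj
  · have huv := mul_mem (inv_mem hu) hv
    obtain ⟨Q⟩ := hdecomp _ huv
    rw [← M.excess_one_inv_mul] at h₁
    rw [← M.excess_mul_left u⁻¹] at h₂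
    obtain ⟨a, i, j, ha, hi, hj⟩ := Q.exists_axis_of_far I huv hK (by omega) (by omega) le_rfl
      (by omega) h₁ h₂ fun y hy h hh => by
        rw [← M.excess_mul_left u, mul_inv_cancel_left, mul_inv_cancel_left] at hy
        have := hfar _ hy (u * h) (mul_mem hu hh)
        rwa [M.dist_mul_left] at this
    refine ⟨u * a, i, j, (translation_mul_mem_iff hu).2 ha, ?_, ?_⟩
    · rwa [← M.mul_pt, ← M.dist_mul_left u⁻¹, inv_mul_cancel_left]
    · rwa [← M.mul_pt, ← M.dist_mul_left u⁻¹, inv_mul_cancel_left]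
  · obtain ⟨Q⟩ := hdecomp v hv
    rcases Nat.eq_zero_or_pos Q.m with hm | hm
    · exact I.exists_long_axis v (Q.mem_of_length_eq_zero hm) hv₁
    · obtain ⟨a, ha⟩ := Q.exists_long_axis hm
      exact ⟨a, fun t ht₀ ht => (ha t ht₀ (by omega)).trans (by omega)⟩

lemma isWindmill_windmill (hn₀ : M.n₀ ∣ n) (hn : n = 2 * n') (hn' : M.minHalfExponent < n')
    (k : ℕ) : M.IsWindmill n M.hullOverlap M.thickness (2 * M.lengthDefect) (M.radiusStep * k)
      (M.windmill n k) := by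
  induction k with
  | zero => simpa only [windmill, Nat.cast_zero, mul_zero] using isWindmill_bot n
  | succ k ih =>
    rw [windmill, Nat.cast_succ, mul_add_one]
    exact ih.nextWindmill (mul_nonneg radiusStep_pos.le k.cast_nonneg) hn₀ hn hn'

lemma monotone_windmill (n : ℤ) : Monotone (M.windmill n) :=
  monotone_nat_of_le_succ fun _ => le_nextWindmill

lemma normalClosure_le_iSup_windmill (hn₀ : M.n₀ ∣ n) (hn : n = 2 * n')
    (hn' : M.minHalfExponent < n') : Subgroup.normalClosure {M.g ^ n} ≤ ⨆ k, M.windmill n k := by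
  rw [Subgroup.normalClosure, Subgroup.closure_le]
  intro x hx
  rw [Group.conjugatesOfSet, Set.biUnion_singleton] at hx
  obtain ⟨c, rfl⟩ := isConj_iff.1 hx
  refine Subgroup.mem_iSup_of_mem ((M.dist 1 c).toNat + 1)
    ((isWindmill_windmill hn₀ hn hn' _).translation_mem c ?_)
  rw [Nat.cast_succ, Int.toNat_of_nonneg (M.dist_nonneg 1 c)]
  have := M.dist_nonneg 1 c
  have := radiusStep_pos (M := M)
  nlinarith

/-- An analogue of Greendlinger's lemma. -/
lemma exists_long_axis_of_mem_normalClosure (hn₀ : M.n₀ ∣ n) (hn : n = 2 * n')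
    (hn' : M.minHalfExponent < n') {w : Γ} (hw : w ∈ Subgroup.normalClosure {M.g ^ n})
    (hw₁ : w ≠ 1) :
    ∃ a, ∀ t, 0 ≤ t → t ≤ n - 2 * M.lengthDefect → M.excess 1 w (M.pt a t) ≤ 10 * M.δ := by
  obtain ⟨k, hk⟩ := (Subgroup.mem_iSup_of_directed (monotone_windmill n).directed_le).1
    (normalClosure_le_iSup_windmill hn₀ hn hn' hw)
  exact (isWindmill_windmill hn₀ hn hn' k).exists_long_axis w hk hw₁

end AxisSystem

/-! ### Word metrics -/

/-- A finite symmetric generating set. -/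
structure IsSymmGenSet {G : Type*} [Group G] (S : Set G) : Prop where
  finite : S.Finite
  inv_mem : ∀ s ∈ S, s⁻¹ ∈ S
  closure_eq_top : Subgroup.closure S = ⊤

/-- The word metric of `S`, as an integer. -/
noncomputable def wordDist {G : Type*} [Group G] (S : Set G) (x y : G) : ℤ :=
  wordLength S (x⁻¹ * y)

/-- The four-point inequality for the word metric of `S`, in the form used in
`DiscreteHyperbolicMetric`. -/
def FourPointInequality {G : Type*} [Group G] (S : Set G) (δ : ℤ) : Prop := ∀ u v w q : G,
  wordDist S u q + wordDist S q w - wordDist S u w ≤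
      wordDist S u q + wordDist S q v - wordDist S u v + δ ∨
    wordDist S w q + wordDist S q v - wordDist S w v ≤
      wordDist S u q + wordDist S q v - wordDist S u v + δ

section WordDist

variable {G : Type*} [Group G] {S : Set G}

lemma wordLength_prod_le {l : List G} (hl : ∀ x ∈ l, x ∈ S) : wordLength S l.prod ≤ l.length :=
  Nat.sInf_le ⟨l, hl, rfl, rfl⟩

lemma wordLength_one : wordLength S (1 : G) = 0 :=
  Nat.le_zero.1 (wordLength_prod_le (l := []) fun _ h => absurd h List.not_mem_nil)

lemma wordDist_self (x : G) : wordDist S x x = 0 := by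
  rw [wordDist, inv_mul_cancel, wordLength_one, Nat.cast_zero]

lemma wordDist_one_left (x : G) : wordDist S 1 x = wordLength S x := by
  rw [wordDist, inv_one, one_mul]

lemma wordDist_nonneg (x y : G) : 0 ≤ wordDist S x y := Int.natCast_nonneg _

lemma wordDist_mul_left (a x y : G) : wordDist S (a * x) (a * y) = wordDist S x y := by
  rw [wordDist, wordDist, mul_inv_rev, mul_assoc, inv_mul_cancel_left]

lemma wordDist_mul_right_self (x y : G) : wordDist S x (x * y) = wordLength S y := by
  rw [wordDist, inv_mul_cancel_left]

lemma wordDist_mul_prod_le (x : G) {l : List G} (hl : ∀ s ∈ l, s ∈ S) :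
    wordDist S x (x * l.prod) ≤ l.length := by
  rw [wordDist_mul_right_self]
  exact_mod_cast wordLength_prod_le hl

lemma prod_take_mul_prod_drop_take (l : List G) {i j : ℕ} (hij : i ≤ j) :
    (l.take i).prod * ((l.drop i).take (j - i)).prod = (l.take j).prod := by
  rw [← List.prod_append, ← List.take_add, Nat.add_sub_cancel' hij]

lemma wordDist_prod_take_le (x : G) {l : List G} (hl : ∀ s ∈ l, s ∈ S) {i j : ℕ} (hij : i ≤ j) :
    wordDist S (x * (l.take i).prod) (x * (l.take j).prod) ≤ j - i := by
  rw [← prod_take_mul_prod_drop_take l hij, ← mul_assoc]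
  have := wordDist_mul_prod_le (x * (l.take i).prod) (l := (l.drop i).take (j - i))
    fun s hs => hl s (List.mem_of_mem_drop (List.mem_of_mem_take hs))
  have := List.length_take_le (j - i) (l.drop i)
  omega

end WordDist

namespace IsSymmGenSet

variable {G : Type*} [Group G] {S : Set G} (hS : IsSymmGenSet S)
include hS

lemma exists_list_length_eq (g : G) :
    ∃ l : List G, (∀ x ∈ l, x ∈ S) ∧ l.length = wordLength S g ∧ l.prod = g := by
  have hg : g ∈ Submonoid.closure S := by
    have : S⁻¹ ⊆ S := fun s hs => by simpa using hS.inv_mem _ hs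
    rw [← Set.union_eq_self_of_subset_right this, ← Subgroup.closure_toSubmonoid,
      hS.closure_eq_top]
    exact Submonoid.mem_top g
  obtain ⟨l, hl, hprod⟩ := Submonoid.exists_list_of_mem_closure hg
  have hne : {k | ∃ l : List G, (∀ x ∈ l, x ∈ S) ∧ l.length = k ∧ l.prod = g}.Nonempty :=
    ⟨l.length, l, hl, rfl, hprod⟩
  exact Nat.sInf_mem hne

lemma wordLength_mul_le (g h : G) :
    wordLength S (g * h) ≤ wordLength S g + wordLength S h := by
  obtain ⟨l, hl, hlen, hprod⟩ := hS.exists_list_length_eq g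
  obtain ⟨l', hl', hlen', hprod'⟩ := hS.exists_list_length_eq h
  rw [← hlen, ← hlen', ← List.length_append, ← hprod, ← hprod', ← List.prod_append]
  exact wordLength_prod_le (List.forall_mem_append.2 ⟨hl, hl'⟩)

lemma wordLength_inv_le (g : G) : wordLength S g⁻¹ ≤ wordLength S g := by
  obtain ⟨l, hl, hlen, rfl⟩ := hS.exists_list_length_eq g
  rw [← hlen, List.prod_inv_reverse]
  refine (wordLength_prod_le fun x hx => ?_).trans (by rw [List.length_reverse, List.length_map])
  obtain ⟨y, hy, rfl⟩ := List.mem_map.1 (List.mem_reverse.1 hx)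
  exact hS.inv_mem y (hl y hy)

lemma wordLength_inv (g : G) : wordLength S g⁻¹ = wordLength S g :=
  (hS.wordLength_inv_le g).antisymm (by simpa only [inv_inv] using hS.wordLength_inv_le g⁻¹)

lemma eq_one_of_wordLength_eq_zero {g : G} (h : wordLength S g = 0) : g = 1 := by
  obtain ⟨l, -, hlen, rfl⟩ := hS.exists_list_length_eq g
  rw [List.length_eq_zero_iff.1 (hlen.trans h), List.prod_nil]

lemma wordDist_comm (x y : G) : wordDist S x y = wordDist S y x := by
  rw [wordDist, ← hS.wordLength_inv, mul_inv_rev, inv_inv, wordDist]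

lemma wordDist_triangle (x y z : G) : wordDist S x z ≤ wordDist S x y + wordDist S y z := by
  have := hS.wordLength_mul_le (x⁻¹ * y) (y⁻¹ * z)
  rw [mul_assoc, mul_inv_cancel_left] at this
  unfold wordDist
  exact_mod_cast this

lemma exists_path (x y : G) : ∃ (n : ℕ) (p : ℕ → G), wordDist S x y = n ∧ p 0 = x ∧ p n = y ∧
    ∀ i j, i ≤ j → j ≤ n → wordDist S (p i) (p j) = j - i := by
  obtain ⟨l, hl, hlen, hprod⟩ := hS.exists_list_length_eq (x⁻¹ * y)
  set p : ℕ → G := fun i => x * (l.take i).prod with hp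
  have hp₀ : p 0 = x := mul_one x
  have hpn : p l.length = y := by
    simp only [hp, List.take_length, hprod, mul_inv_cancel_left]
  have hxy : wordDist S x y = l.length := by rw [hlen, wordDist]
  refine ⟨l.length, p, hxy, hp₀, hpn, fun i j hij hj => ?_⟩
  have h₀i := wordDist_prod_take_le x hl i.zero_le
  have hij' := wordDist_prod_take_le x hl hij
  have hjn := wordDist_prod_take_le x hl hj
  change wordDist S (p 0) (p i) ≤ _ at h₀i
  change wordDist S (p j) (p l.length) ≤ _ at hjn
  rw [hp₀] at h₀i
  rw [hpn] at hjn
  have := hS.wordDist_triangle x (p i) y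
  have := hS.wordDist_triangle (p i) (p j) y
  exact le_antisymm hij' (by omega)

lemma exists_between (x y : G) (k : ℤ) (hk₀ : 0 ≤ k) (hk : k ≤ wordDist S x y) :
    ∃ z, wordDist S x z = k ∧ wordDist S z y = wordDist S x y - k := by
  obtain ⟨n, p, hxy, rfl, rfl, hp⟩ := hS.exists_path x y
  lift k to ℕ using hk₀
  have hkn : k ≤ n := by omega
  exact ⟨p k, by simpa using hp 0 k k.zero_le hkn, by rw [hxy, hp k n hkn le_rfl]⟩

lemma exists_mul_eq {g : G} {k : ℕ} (hk : k ≤ wordLength S g) :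
    ∃ u v, u * v = g ∧ wordLength S u = k ∧ wordLength S v = wordLength S g - k := by
  obtain ⟨u, hu, hv⟩ := hS.exists_between 1 g k k.cast_nonneg
    (by rw [wordDist_one_left]; exact_mod_cast hk)
  rw [wordDist_one_left] at hu hv
  rw [wordDist] at hv
  exact ⟨u, u⁻¹ * g, mul_inv_cancel_left u g, by omega, by omega⟩

lemma finite_setOf_wordLength_le (k : ℕ) : {g | wordLength S g ≤ k}.Finite := by
  induction k with
  | zero =>
    exact (Set.finite_singleton (1 : G)).subset fun g hg =>
      hS.eq_one_of_wordLength_eq_zero (Nat.le_zero.1 hg)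
  | succ k ih =>
    refine (ih.union (ih.mul hS.finite)).subset fun g hg => ?_
    rw [Set.mem_ofPred_eq] at hg
    rcases Nat.lt_or_ge k (wordLength S g) with hk | hk
    · obtain ⟨u, v, rfl, hu, hv⟩ := hS.exists_mul_eq hk.le
      obtain ⟨l, hl, hlen, rfl⟩ := hS.exists_list_length_eq v
      obtain ⟨s, rfl⟩ := List.length_eq_one_iff.1 (by omega : l.length = 1)
      rw [List.prod_singleton]
      exact Or.inr (Set.mul_mem_mul hu.le (hl s (List.mem_singleton_self s)))
    · exact Or.inl hk

lemma two_mul_wordGromovProduct (w x y : G) :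
    2 * wordGromovProduct S w x y =
      ((wordDist S x w + wordDist S w y - wordDist S x y : ℤ) : ℝ) := by
  rw [hS.wordDist_comm w y, wordGromovProduct, wordDist, wordDist, wordDist]
  push_cast
  ring

/-- The word metric of a hyperbolic group as a `HyperbolicGroupMetric`. -/
noncomputable def wordMetric {δ : ℤ} (hδ : 1 ≤ δ) (h : FourPointInequality S δ) :
    HyperbolicGroupMetric G where
  dist := wordDist S
  δ := δ
  dist_self := wordDist_self
  dist_comm := hS.wordDist_comm
  dist_triangle := hS.wordDist_triangle
  eq_of_dist_eq_zero x y hxy := by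
    rw [wordDist, Nat.cast_eq_zero] at hxy
    exact inv_mul_eq_one.1 (hS.eq_one_of_wordLength_eq_zero hxy)
  exists_between := hS.exists_between
  four_point := h
  one_le_δ := hδ
  dist_mul_left := wordDist_mul_left
  finite_ball r := (hS.finite_setOf_wordLength_le r.toNat).subset fun x hx => by
    rw [Set.mem_ofPred_eq, wordDist_one_left] at hx
    rw [Set.mem_ofPred_eq]
    omega

lemma fourPointInequality {δ : ℝ} (h : ∀ x y z w : G, wordGromovProduct S w x z ≥
      min (wordGromovProduct S w x y) (wordGromovProduct S w y z) - δ) :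
    FourPointInequality S ⌈2 * δ⌉ := by
  intro u v w q
  have hδ := Int.le_ceil (2 * δ)
  have huv := hS.two_mul_wordGromovProduct q u v
  have huw := hS.two_mul_wordGromovProduct q u w
  have hwv := hS.two_mul_wordGromovProduct q w v
  refine (min_le_iff.1 (sub_le_iff_le_add.1 (h u w v q))).imp (fun hle => ?_) fun hle => ?_
  all_goals
    rw [← Int.cast_le (R := ℝ), Int.cast_add]
    linarith

lemma isHyperbolicGroup {δ : ℤ} (hδ : 0 ≤ δ) (h : FourPointInequality S δ) :
    IsHyperbolicGroup G := by
  refine ⟨S, hS.finite, hS.inv_mem, hS.closure_eq_top, δ, by exact_mod_cast hδ,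
    fun x y z w => sub_le_iff_le_add.2 (min_le_iff.2 ?_)⟩
  have hxz := hS.two_mul_wordGromovProduct w x z
  have hxy := hS.two_mul_wordGromovProduct w x y
  have hyz := hS.two_mul_wordGromovProduct w y z
  have hδ' : (0 : ℝ) ≤ δ := by exact_mod_cast hδ
  refine (h x z y w).imp (fun hle => ?_) fun hle => ?_
  all_goals
    rw [← Int.cast_le (R := ℝ), Int.cast_add] at hle
    linarith

end IsSymmGenSet

lemma FourPointInequality.mono {G : Type*} [Group G] {S : Set G} {δ δ' : ℤ}
    (h : FourPointInequality S δ) (hδ : δ ≤ δ') : FourPointInequality S δ' := fun u v w q =>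
  (h u v w q).imp (fun h => by omega) fun h => by omega

/-! ### An element with a geodesic axis -/

/-- Cannon's `k`-tail of `x`: the short elements by which `x` can be shortened. -/
def shortTail {G : Type*} [Group G] (S : Set G) (k : ℕ) (x : G) : Set G :=
  {h | wordLength S h ≤ k ∧ wordLength S (x * h) < wordLength S x}

namespace IsSymmGenSet

variable {G : Type*} [Group G] {S : Set G} {δ : ℤ} (hS : IsSymmGenSet S)
include hS

lemma exists_mem_shortTail (hδ : 1 ≤ δ) (h : FourPointInequality S δ) {x y : G} (hx : x ≠ 1)
    (hxy : wordLength S x + wordLength S y ≤ wordLength S (x * y) + 2) :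
    ∃ t ∈ shortTail S (δ + 3).toNat x,
      wordLength S (t⁻¹ * y) + wordLength S x = wordLength S (x * y) + 1 := by
  have hx₀ : wordLength S x ≠ 0 := fun h₀ => hx (hS.eq_one_of_wordLength_eq_zero h₀)
  have hx_le := hS.wordLength_mul_le (x * y) y⁻¹
  rw [mul_inv_cancel_right, hS.wordLength_inv] at hx_le
  obtain ⟨u, v, huv, hu, hv⟩ := hS.exists_mul_eq (g := x * y) (k := wordLength S x - 1) (by omega)
  have hv_eq : v = u⁻¹ * (x * y) := by rw [← huv, inv_mul_cancel_left]
  have hdist : wordDist S u x ≤ δ + 3 := by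
    have hx_excess : (hS.wordMetric hδ h).excess 1 (x * y) x ≤ 2 := by
      change wordDist S 1 x + wordDist S x (x * y) - wordDist S 1 (x * y) ≤ 2
      rw [wordDist_one_left, wordDist_one_left, wordDist_mul_right_self]
      omega
    have hu_excess : (hS.wordMetric hδ h).excess 1 (x * y) u ≤ 0 := by
      change wordDist S 1 u + wordDist S u (x * y) - wordDist S 1 (x * y) ≤ 0
      rw [wordDist_one_left, wordDist_one_left, ← huv, wordDist_mul_right_self, huv]
      omega
    have hle : wordDist S u x ≤ 2 + 0 + δ + wordDist S 1 x - wordDist S 1 u :=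
      (hS.wordMetric hδ h).dist_le_of_excess_le hx_excess hu_excess <| by
        change wordDist S 1 u ≤ wordDist S 1 x
        rw [wordDist_one_left, wordDist_one_left]
        omega
    rw [wordDist_one_left, wordDist_one_left] at hle
    omega
  refine ⟨x⁻¹ * u, ⟨?_, ?_⟩, ?_⟩
  · rw [hS.wordDist_comm, wordDist] at hdist
    omega
  · rw [mul_inv_cancel_left]
    omega
  · rw [mul_inv_rev, inv_inv, mul_assoc, ← hv_eq]
    omega

/-- Cannon's theorem that tails determine cone types. -/
lemma wordLength_mul_of_shortTail_eq (hδ : 1 ≤ δ) (h : FourPointInequality S δ) {x x' : G}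
    (ht : shortTail S (δ + 3).toNat x = shortTail S (δ + 3).toNat x') {y : G}
    (hy : wordLength S (x * y) = wordLength S x + wordLength S y) :
    wordLength S (x' * y) = wordLength S x' + wordLength S y := by
  induction hk : wordLength S y generalizing y with
  | zero => rw [hS.eq_one_of_wordLength_eq_zero hk, mul_one, add_zero]
  | succ k ih =>
    obtain ⟨y', s, rfl, hy', hs⟩ := hS.exists_mul_eq (g := y) (k := k) (by omega)
    have hxy's := hS.wordLength_mul_le (x * y') s
    have hxy' := hS.wordLength_mul_le x y'
    rw [mul_assoc] at hxy's
    have hx'y' := ih (y := y') (by omega) hy'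
    have hle := hS.wordLength_mul_le x' (y' * s)
    have hx'y's := hS.wordLength_mul_le (x' * (y' * s)) s⁻¹
    rw [← mul_assoc, mul_inv_cancel_right, mul_assoc, hS.wordLength_inv] at hx'y's
    by_contra! hne
    have hx' : x' ≠ 1 := by
      rintro rfl
      rw [one_mul, wordLength_one] at hne
      omega
    obtain ⟨t, htx', htlen⟩ := hS.exists_mem_shortTail hδ h hx' (y := y' * s) (by omega)
    rw [← ht] at htx'
    have htx := htx'.2
    have hsplit := hS.wordLength_mul_le (x * t) (t⁻¹ * (y' * s))
    rw [mul_assoc, mul_inv_cancel_left] at hsplit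
    omega

lemma exists_lt_wordLength [Infinite G] (k : ℕ) : ∃ g : G, k < wordLength S g := by
  by_contra! h
  exact Set.infinite_univ ((hS.finite_setOf_wordLength_le k).subset fun x _ => h x)

/-- Two points of a long geodesic have the same tail, hence the same cone type, so that the word
between them can be repeated. -/
lemma exists_lt_shortTail_eq [Infinite G] (k : ℕ) : ∃ x y : G,
    shortTail S k x = shortTail S k (x * y) ∧ y ≠ 1 ∧
      wordLength S (x * y) = wordLength S x + wordLength S y := by
  have hfin : (𝒫 {g : G | wordLength S g ≤ k}).Finite :=
    (hS.finite_setOf_wordLength_le k).finite_subsets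
  obtain ⟨w, hw⟩ := hS.exists_lt_wordLength hfin.toFinset.card
  obtain ⟨n, p, hn, hp₀, -, hp⟩ := hS.exists_path 1 w
  rw [wordDist_one_left] at hn
  have hp_len : ∀ i ≤ n, (wordLength S (p i) : ℤ) = i := fun i hi => by
    have := hp 0 i i.zero_le hi
    rwa [hp₀, wordDist_one_left, Nat.cast_zero, sub_zero] at this
  obtain ⟨i, hi, j, hj, hij, heq⟩ := Finset.exists_ne_map_eq_of_card_lt_of_maps_to
    (s := Finset.range (n + 1)) (t := hfin.toFinset) (f := fun i => shortTail S k (p i))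
    (by rw [Finset.card_range]; omega)
    fun i _ => hfin.mem_toFinset.2 fun x hx => hx.1
  rw [Finset.mem_range] at hi hj
  wlog hlt : i < j generalizing i j
  · exact this j hj i hi hij.symm heq.symm (by omega)
  have hlen_i := hp_len i (by omega)
  have hlen_j := hp_len j (by omega)
  have hlen_ij := hp i j hlt.le (by omega)
  rw [wordDist] at hlen_ij
  refine ⟨p i, (p i)⁻¹ * p j, by rwa [mul_inv_cancel_left], fun h₁ => ?_, ?_⟩
  · rw [h₁, wordLength_one] at hlen_ij
    omega
  · rw [mul_inv_cancel_left]
    omega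

lemma exists_wordLength_pow_eq [Infinite G] (hδ : 1 ≤ δ) (h : FourPointInequality S δ) :
    ∃ g : G, g ≠ 1 ∧ ∀ m : ℕ, wordLength S (g ^ m) = m * wordLength S g := by
  obtain ⟨x, g, ht, hg, hxg⟩ := hS.exists_lt_shortTail_eq (δ + 3).toNat
  have key : ∀ m : ℕ, wordLength S (g ^ m) = m * wordLength S g ∧
      wordLength S (x * g ^ m) = wordLength S x + m * wordLength S g := by
    intro m
    induction m with
    | zero => simp [wordLength_one]
    | succ m ih =>
      have hcone := hS.wordLength_mul_of_shortTail_eq hδ h ht (y := g ^ m) (by omega)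
      rw [mul_assoc, ← pow_succ'] at hcone
      have := hS.wordLength_mul_le x (g ^ (m + 1))
      have := hS.wordLength_mul_le g (g ^ m)
      rw [← pow_succ'] at this
      rw [add_one_mul]
      omega
  exact ⟨g, hg, fun m => (key m).1⟩

lemma exists_axialMetric [Infinite G] (h : FourPointInequality S δ) :
    ∃ M : AxialMetric G, M.dist = wordDist S := by
  obtain ⟨g, hg, hpow⟩ := hS.exists_wordLength_pow_eq (le_max_right δ 1) (h.mono (le_max_left _ _))
  have hzpow : ∀ i : ℤ, (wordLength S (g ^ i) : ℤ) = wordLength S g * |i| := by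
    intro i
    obtain ⟨m, rfl | rfl⟩ := i.eq_nat_or_neg
    · rw [zpow_natCast, hpow, Nat.abs_cast, mul_comm, Nat.cast_mul]
    · rw [zpow_neg, zpow_natCast, hS.wordLength_inv, hpow, abs_neg, Nat.abs_cast, mul_comm,
        Nat.cast_mul]
  have hg₁ : 1 ≤ wordLength S g :=
    Nat.one_le_iff_ne_zero.2 fun h₀ => hg (hS.eq_one_of_wordLength_eq_zero h₀)
  refine ⟨{ hS.wordMetric (δ := max (max δ 1) (wordLength S g)) (by omega) (h.mono (by omega)) with
    g := g
    T := wordLength S g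
    one_le_T := by exact_mod_cast hg₁
    T_le_δ := le_max_right _ _
    dist_zpow := fun i j => ?_ }, rfl⟩
  change wordDist S (g ^ i) (g ^ j) = _
  rw [wordDist, ← zpow_neg, ← zpow_add, hzpow, neg_add_eq_sub, abs_sub_comm]

end IsSymmGenSet

/-! ### The Dehn property of the quotient -/

/-- The points `x 0, …, x n` form an `L`-local geodesic for `d`. -/
def IsLocalGeodesic {X : Type*} (d : X → X → ℤ) (L n : ℕ) (x : ℕ → X) : Prop :=
  ∀ i j, i ≤ j → j ≤ n → j ≤ i + L → d (x i) (x j) = j - i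

lemma exists_subdivision {l n : ℕ} (hl : 0 < l) (hln : l ≤ n) :
    ∃ (k : ℕ) (c : ℕ → ℕ), c 0 = 0 ∧ c (k + 1) = n ∧ (∀ i, c i ≤ n) ∧
      ∀ i ≤ k, c i + l ≤ c (i + 1) ∧ c (i + 1) < c i + 2 * l := by
  have hdiv : 1 ≤ n / l := (Nat.one_le_div_iff hl).2 hln
  have hmod := Nat.div_add_mod n l
  have hmod_lt := Nat.mod_lt n hl
  refine ⟨n / l - 1, fun i => if i ≤ n / l - 1 then i * l else n, by simp, by simp,
    fun i => ?_, fun i hi => ?_⟩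
  · dsimp only
    split_ifs with hi
    · exact (Nat.mul_le_mul_right l (hi.trans (Nat.sub_le _ _))).trans (Nat.div_mul_le_self n l)
    · exact le_rfl
  · simp only [hi, if_true]
    rcases hi.eq_or_lt with rfl | hlt
    · rw [if_neg (by omega), Nat.sub_mul, one_mul, mul_comm (n / l)]
      have := Nat.le_mul_of_pos_right l hdiv
      omega
    · rw [if_pos (by omega), add_one_mul]
      omega

namespace IsLocalGeodesic

variable {X : Type*} {d : X → X → ℤ} {L n : ℕ} {x : ℕ → X}

lemma shift (h : IsLocalGeodesic d L n x) {k m : ℕ} (hkm : k + m ≤ n) :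
    IsLocalGeodesic d L m (fun i => x (k + i)) := fun i j hij hj hjL => by
  rw [h (k + i) (k + j) (by omega) (by omega) (by omega)]
  push_cast
  ring

lemma of_map {Y : Type*} {d' : Y → Y → ℤ} {f : X → Y} (h : IsLocalGeodesic d' L n (f ∘ x))
    (hf : ∀ p q, d' (f p) (f q) ≤ d p q)
    (hx : ∀ i j, i ≤ j → d (x i) (x j) ≤ j - i) : IsLocalGeodesic d L n x :=
  fun i j hij hj hjL => (hx i j hij).antisymm ((h i j hij hj hjL).ge.trans (hf _ _))

variable {M : DiscreteHyperbolicMetric X} {l : ℕ}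

lemma exists_isLocalQuasigeodesic (h : IsLocalGeodesic M.dist (4 * l) n x) (hl : 4 * M.δ < l)
    (hln : l ≤ n) : ∃ (k : ℕ) (c : ℕ → ℕ), c 0 = 0 ∧ c (k + 1) = n ∧ (∀ i, c i ≤ n) ∧
      (∀ i ≤ k, c i + l ≤ c (i + 1) ∧ c (i + 1) < c i + 2 * l) ∧
      M.IsLocalQuasigeodesic (fun i => x (c i)) k := by
  have := M.one_le_δ
  obtain ⟨k, c, hc₀, hck, hcn, hc⟩ := exists_subdivision (l := l) (by omega) hln
  refine ⟨k, c, hc₀, hck, hcn, hc, ⟨fun i hi => ?_, fun i hi => ?_⟩⟩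
  · obtain ⟨hi₁, hi₁'⟩ := hc i hi.le
    obtain ⟨hi₂, hi₂'⟩ : c (i + 1) + l ≤ c (i + 2) ∧ c (i + 2) < c (i + 1) + 2 * l := hc (i + 1) hi
    have := hcn (i + 2)
    rw [DiscreteHyperbolicMetric.excess, h _ _ (by omega) (by omega) (by omega),
      h _ _ (by omega) (by omega) (by omega), h _ _ (by omega) (by omega) (by omega)]
    omega
  · obtain ⟨hi₂, hi₂'⟩ : c (i + 1) + l ≤ c (i + 2) ∧ c (i + 2) < c (i + 1) + 2 * l :=
      hc (i + 1) (by omega)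
    have := hcn (i + 2)
    rw [h _ _ (by omega) (by omega) (by omega)]
    omega

lemma le_dist (h : IsLocalGeodesic M.dist (4 * l) n x) (hl : 4 * M.δ < l) (hln : l ≤ n) :
    l - 4 * M.δ ≤ M.dist (x 0) (x n) := by
  obtain ⟨k, c, hc₀, hck, hcn, hc, hquasi⟩ := h.exists_isLocalQuasigeodesic hl hln
  have hle := hquasi.excess_vertex_le (b := 1) (Nat.zero_le _) (Nat.succ_le_succ k.zero_le) le_rfl
  have hc₁ := hc 0 k.zero_le
  rw [zero_add] at hc₁
  rw [hc₀, hck, DiscreteHyperbolicMetric.excess, h 0 (c 1) (Nat.zero_le _) (hcn 1) (by omega)]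
    at hle
  have := M.dist_nonneg (x (c 1)) (x n)
  omega

lemma exists_dist_le_of_mem_side (h : IsLocalGeodesic M.dist L n x) {i j : ℕ} (hij : i ≤ j)
    (hj : j ≤ n) (hjL : j ≤ i + L) {q : X} {ε : ℤ} (hq : M.excess (x i) (x j) q ≤ ε) :
    ∃ t ≤ n, M.dist q (x t) ≤ ε + M.δ := by
  have := M.one_le_δ
  have hij_dist := h i j hij hj hjL
  rcases le_or_gt (M.dist (x i) q) (j - i) with hle | hlt
  · obtain ⟨r, hr⟩ := Int.eq_ofNat_of_zero_le (M.dist_nonneg (x i) q)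
    have hir := h i (i + r) (by omega) (by omega) (by omega)
    have hrj := h (i + r) j (by omega) hj (by omega)
    push_cast at hir hrj
    have hexcess : M.excess (x i) (x j) (x (i + r)) ≤ 0 := by
      unfold DiscreteHyperbolicMetric.excess
      omega
    have := M.dist_le_of_excess_le hexcess hq (by omega)
    exact ⟨i + r, by omega, by omega⟩
  · refine ⟨j, hj, ?_⟩
    unfold DiscreteHyperbolicMetric.excess at hq
    omega

lemma exists_dist_le (h : IsLocalGeodesic M.dist (4 * l) n x) (hl : 4 * M.δ < l) (hln : l ≤ n)
    {q : X} {ε : ℤ} (hε : 0 ≤ ε) (hq : M.excess (x 0) (x n) q ≤ ε) :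
    ∃ t ≤ n, M.dist q (x t) ≤ 2 * ε + 8 * M.δ := by
  obtain ⟨k, c, hc₀, hck, hcn, hc, hquasi⟩ := h.exists_isLocalQuasigeodesic hl hln
  obtain ⟨i, hi, hle⟩ := hquasi.exists_near_side (q := q) hε (by rwa [hc₀, hck])
  have := hc i hi
  obtain ⟨t, ht, hdist⟩ :=
    h.exists_dist_le_of_mem_side (by omega) (hcn (i + 1)) (by omega) hle
  exact ⟨t, ht, hdist.trans (by omega)⟩

end IsLocalGeodesic

/-- Dehn's algorithm for the word problem: every nonempty word over `S` representing `1` has a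
subword of length at most `L` that is not geodesic. -/
def DehnProperty {G : Type*} [Group G] (S : Set G) (L : ℕ) : Prop :=
  ∀ l : List G, (∀ x ∈ l, x ∈ S) → l ≠ [] → l.prod = 1 →
    ∃ l₁ v l₂, l = l₁ ++ v ++ l₂ ∧ v.length ≤ L ∧ wordLength S v.prod < v.length

section Map

variable {G Q : Type*} [Group G] [Group Q] {S : Set G}

lemma IsSymmGenSet.image (hS : IsSymmGenSet S) {f : G →* Q} (hf : Function.Surjective f) :
    IsSymmGenSet (f '' S) where
  finite := hS.finite.image f
  inv_mem := by
    rintro _ ⟨s, hs, rfl⟩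
    exact ⟨s⁻¹, hS.inv_mem s hs, map_inv f s⟩
  closure_eq_top := by
    rw [← MonoidHom.map_closure, hS.closure_eq_top, Subgroup.map_top_of_surjective f hf]

lemma IsSymmGenSet.wordLength_image_le (hS : IsSymmGenSet S) (f : G →* Q) (g : G) :
    wordLength (f '' S) (f g) ≤ wordLength S g := by
  obtain ⟨l, hl, hlen, rfl⟩ := hS.exists_list_length_eq g
  rw [← hlen, map_list_prod, ← List.length_map (f := f) (as := l)]
  exact wordLength_prod_le (List.forall_mem_map.2 fun y hy => Set.mem_image_of_mem f (hl y hy))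

lemma IsSymmGenSet.wordDist_image_le (hS : IsSymmGenSet S) (f : G →* Q) (x y : G) :
    wordDist (f '' S) (f x) (f y) ≤ wordDist S x y := by
  unfold wordDist
  rw [← map_inv, ← map_mul]
  exact_mod_cast hS.wordLength_image_le f _

lemma exists_list_map_eq {f : G →* Q} {l : List Q} (hl : ∀ x ∈ l, x ∈ f '' S) :
    ∃ l' : List G, (∀ x ∈ l', x ∈ S) ∧ l'.map f = l := by
  obtain ⟨l', rfl⟩ : l ∈ Set.range (List.map (Subtype.restrict (· ∈ S) f)) := by
    rw [Set.range_list_map]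
    rintro x hx
    obtain ⟨s, hs, rfl⟩ := hl x hx
    exact ⟨⟨s, hs⟩, rfl⟩
  refine ⟨l'.map (↑), fun x hx => ?_, by rw [List.map_map]; rfl⟩
  obtain ⟨s, -, rfl⟩ := List.mem_map.1 hx
  exact s.2

lemma isLocalGeodesic_prod_take {L : ℕ} {l : List G} (hl : ∀ x ∈ l, x ∈ S)
    (h : ∀ l₁ v l₂, l = l₁ ++ v ++ l₂ → v.length ≤ L → v.length ≤ wordLength S v.prod) :
    IsLocalGeodesic (wordDist S) L l.length (fun i => (l.take i).prod) := by
  intro i j hij hj hjL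
  refine le_antisymm (by simpa only [one_mul] using wordDist_prod_take_le 1 hl hij) ?_
  have hlen : ((l.drop i).take (j - i)).length = j - i := by
    rw [List.length_take, List.length_drop]
    omega
  have := h (l.take i) ((l.drop i).take (j - i)) (l.drop j)
    (by rw [← List.take_add, Nat.add_sub_cancel' hij, List.take_append_drop]) (by omega)
  change (j : ℤ) - i ≤ wordDist S (l.take i).prod (l.take j).prod
  rw [← prod_take_mul_prod_drop_take l hij, wordDist_mul_right_self]
  omega

end Map

namespace AxisSystem

variable {Γ : Type*} [Group Γ] {M : AxisSystem Γ}

/-- The quotient by the normal closure of `g ^ (2 * n')` has the Dehn property once `n'` exceeds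
this bound. -/
noncomputable def dehnHalfExponent (M : AxisSystem Γ) : ℤ :=
  M.minHalfExponent + 2 * M.lengthDefect + 56 * M.δ

lemma lengthDefect_nonneg : 0 ≤ M.lengthDefect := by
  have := M.one_le_δ
  have := cornerBound_nonneg (M := M) (hullOverlap_nonneg (M := M))
    (radiusStep_pos (M := M)).le
  unfold lengthDefect
  omega

lemma lengthDefect_lt_minHalfExponent : M.lengthDefect < M.minHalfExponent := by
  have := M.one_le_δ
  have := M.one_le_T
  have := hullOverlap_nonneg (M := M)
  have : 0 ≤ M.T * (M.hullOverlap + 1) := by positivity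
  unfold minHalfExponent
  omega

variable {S : Set Γ} {Q : Type*} [Group Q] {f : Γ →* Q} {l m : ℕ} {x : ℕ → Γ}

lemma dist_le_wordDist_map (hS : IsSymmGenSet S) (hM : M.dist = wordDist S)
    (hf : Function.Surjective f) (hx : IsLocalGeodesic M.dist (4 * l) m x)
    (hfx : IsLocalGeodesic (wordDist (f '' S)) (4 * l) m (f ∘ x)) {p q : Γ} {ε : ℤ}
    {i j : ℕ} (hε : 0 ≤ ε) (hi : i ≤ m) (hj : j ≤ m) (hp : M.dist p (x i) ≤ ε)
    (hq : M.dist q (x j) ≤ ε) (hl : M.dist p q + 2 * ε + 4 * M.δ < l) :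
    M.dist p q ≤ wordDist (f '' S) (f p) (f q) + 4 * ε := by
  have hfS := hS.image hf
  wlog hij : i ≤ j generalizing i j p q
  · rw [M.dist_comm, hfS.wordDist_comm]
    exact this hj hi hq hp (by rwa [M.dist_comm]) (le_of_not_ge hij)
  have := M.dist_comm p (x i)
  have := M.dist_comm q (x j)
  have := M.dist_triangle (x i) p (x j)
  have := M.dist_triangle p q (x j)
  have := M.dist_nonneg p q
  have hclose : j ≤ i + 4 * l := by
    by_contra! hfar
    have := (hx.shift (k := i) (m := j - i) (by omega)).le_dist (by omega) (by omega)
    rw [add_zero, Nat.add_sub_cancel' hij] at this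
    omega
  have := M.dist_triangle p (x i) q
  have := M.dist_triangle (x i) (x j) q
  have := hx i j hij hj hclose
  have : wordDist (f '' S) (f (x i)) (f (x j)) = j - i := hfx i j hij hj hclose
  have := hfS.wordDist_triangle (f (x i)) (f p) (f (x j))
  have := hfS.wordDist_triangle (f p) (f q) (f (x j))
  have himage_p := hS.wordDist_image_le f (x i) p
  have himage_q := hS.wordDist_image_le f q (x j)
  rw [← hM] at himage_p himage_q
  omega

lemma wordDist_map_pt_le (hS : IsSymmGenSet S) (hM : M.dist = wordDist S) {n k : ℤ}
    (hn : f (M.g ^ n) = 1) (hk : 0 ≤ k) (a : Γ) :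
    wordDist (f '' S) (f (M.pt a 0)) (f (M.pt a (n - k))) ≤ M.T * k := by
  have hpt : f (M.pt a 0) = f (M.pt a n) := by
    rw [M.pt_zero, AxialMetric.pt, map_mul, hn, mul_one]
  have := hS.wordDist_image_le f (M.pt a n) (M.pt a (n - k))
  rw [← hM, M.dist_comm, M.dist_pt_pt_of_le (by omega), sub_sub_cancel] at this
  rwa [hpt]

/-- A long piece of an axis close to `x` would be collapsed by `f` although `x` is a local geodesic
in the quotient. -/
lemma eq_zero_of_isLocalGeodesic_map {n n' : ℤ} (hS : IsSymmGenSet S) (hM : M.dist = wordDist S)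
    (hn₀ : M.n₀ ∣ n) (hn : n = 2 * n') (hn' : M.dehnHalfExponent < n')
    (hf : Function.Surjective f) (hker : f.ker = Subgroup.normalClosure {M.g ^ n})
    (hx : IsLocalGeodesic M.dist (4 * l) m x)
    (hfx : IsLocalGeodesic (wordDist (f '' S)) (4 * l) m (f ∘ x))
    (hl : M.T * (n - 2 * M.lengthDefect) + 60 * M.δ < l) (hx₀ : x 0 = 1) (hxm : f (x m) = 1) :
    m = 0 := by
  have := M.one_le_δ
  have := lengthDefect_nonneg (M := M)
  have := lengthDefect_lt_minHalfExponent (M := M)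
  have := M.one_le_T
  unfold dehnHalfExponent at hn'
  have hlen : 0 ≤ n - 2 * M.lengthDefect := by omega
  have : 0 ≤ M.T * (n - 2 * M.lengthDefect) := mul_nonneg (by omega) hlen
  have hgap : n - 4 * M.lengthDefect ≤ M.T * (n - 4 * M.lengthDefect) :=
    le_mul_of_one_le_left (by omega) M.one_le_T
  have hT : M.T * (n - 2 * M.lengthDefect) =
      M.T * (n - 4 * M.lengthDefect) + M.T * (2 * M.lengthDefect) := by ring
  by_contra hm
  have hlm : 4 * l < m := by
    by_contra! hlt
    have := hfx 0 m m.zero_le le_rfl (by omega)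
    rw [Function.comp_apply, Function.comp_apply, hxm, hx₀, map_one, wordDist_self] at this
    omega
  have hxm₁ : x m ≠ 1 := fun h => by
    have := hx.le_dist (by omega) (by omega)
    rw [hx₀, h, M.dist_self] at this
    omega
  obtain ⟨a, ha⟩ :=
    exists_long_axis_of_mem_normalClosure hn₀ hn (by omega) (hker ▸ hxm : x m ∈ _) hxm₁
  rw [← hx₀] at ha
  obtain ⟨i, hi, hpi⟩ := hx.exists_dist_le (by omega) (by omega) (by omega) (ha 0 le_rfl hlen)
  obtain ⟨j, hj, hqj⟩ := hx.exists_dist_le (by omega) (by omega) (by omega) (ha _ hlen le_rfl)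
  have hpq := M.dist_pt_pt_of_le (a := a) hlen
  rw [sub_zero] at hpq
  have hle := dist_le_wordDist_map hS hM hf hx hfx (by omega) hi hj hpi hqj (by omega)
  have hgn : M.g ^ n ∈ f.ker := hker ▸ Subgroup.subset_normalClosure rfl
  have := wordDist_map_pt_le hS hM hgn (k := 2 * M.lengthDefect) (by omega) a
  omega

theorem exists_dehnProperty {n n' : ℤ} (hS : IsSymmGenSet S) (hM : M.dist = wordDist S)
    (hn₀ : M.n₀ ∣ n) (hn : n = 2 * n') (hn' : M.dehnHalfExponent < n')
    (hf : Function.Surjective f) (hker : f.ker = Subgroup.normalClosure {M.g ^ n}) :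
    ∃ L, DehnProperty (f '' S) L := by
  obtain ⟨l, hl⟩ : ∃ l : ℕ, M.T * (n - 2 * M.lengthDefect) + 60 * M.δ < l :=
    ⟨(M.T * (n - 2 * M.lengthDefect) + 60 * M.δ + 1).toNat, by omega⟩
  refine ⟨4 * l, fun w hw hw₀ hprod => ?_⟩
  by_contra! hdehn
  obtain ⟨w, hwS, rfl⟩ := exists_list_map_eq hw
  set x : ℕ → Γ := fun i => (w.take i).prod with hx
  have hfx : IsLocalGeodesic (wordDist (f '' S)) (4 * l) w.length (f ∘ x) := by
    have := isLocalGeodesic_prod_take hw hdehn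
    rwa [List.length_map, show (fun i => ((w.map f).take i).prod) = f ∘ x by
      funext i; rw [← List.map_take, ← map_list_prod]; rfl] at this
  have hx' : IsLocalGeodesic M.dist (4 * l) w.length x := hM ▸
    hfx.of_map (hS.wordDist_image_le f) fun i j hij => by
      simpa only [one_mul] using wordDist_prod_take_le 1 hwS hij
  refine hw₀ (List.map_eq_nil_iff.2 (List.length_eq_zero_iff.1 ?_))
  refine eq_zero_of_isLocalGeodesic_map hS hM hn₀ hn hn' hf hker hx' hfx hl
    List.prod_nil ?_
  simp only [hx, List.take_length, map_list_prod, hprod]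

end AxisSystem

/-! ### Winding integrals -/

/-- The integral of the discrete one-form `2 φ dh` along the path that starts at `x` and spells the
given word. -/
def wordIntegral {G : Type*} [Group G] (φ h : G → ℤ) : G → List G → ℤ
  | _, [] => 0
  | x, s :: w => (φ x + φ (x * s)) * (h (x * s) - h x) + wordIntegral φ h (x * s) w

/-- `φ` is `1`-Lipschitz on the Cayley graph of `S`. -/
def IsCayleyLipschitz {G : Type*} [Group G] (S : Set G) (φ : G → ℤ) : Prop :=
  ∀ x, ∀ s ∈ S, |φ (x * s) - φ x| ≤ 1

section WordIntegral

variable {G : Type*} [Group G] {S : Set G} {φ h : G → ℤ}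

lemma wordIntegral_append (φ h : G → ℤ) (x : G) (u v : List G) :
    wordIntegral φ h x (u ++ v) = wordIntegral φ h x u + wordIntegral φ h (x * u.prod) v := by
  induction u generalizing x with
  | nil => rw [List.nil_append, List.prod_nil, mul_one, wordIntegral, zero_add]
  | cons s u ih =>
    rw [List.cons_append, wordIntegral, wordIntegral, ih, List.prod_cons, mul_assoc, add_assoc]

lemma wordIntegral_sub_const (φ h : G → ℤ) (c : ℤ) (x : G) (w : List G) :
    wordIntegral (fun y => φ y - c) h x w =
      wordIntegral φ h x w - 2 * c * (h (x * w.prod) - h x) := by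
  induction w generalizing x with
  | nil => simp only [wordIntegral, List.prod_nil, mul_one, sub_self, mul_zero]
  | cons s w ih =>
    simp only [wordIntegral, ih, List.prod_cons, mul_assoc]
    ring

lemma wordIntegral_eq_zero {w : List G} {x : G} (hx : ∀ i, φ (x * (w.take i).prod) = 0) :
    wordIntegral φ h x w = 0 := by
  induction w generalizing x with
  | nil => rfl
  | cons s w ih =>
    have hx₀ : φ x = 0 := by simpa using hx 0
    have hx₁ : φ (x * s) = 0 := by simpa using hx 1
    have := ih (x := x * s) fun i => by simpa [mul_assoc] using hx (i + 1)
    simp only [wordIntegral, hx₀, hx₁, this, add_zero, zero_mul]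

lemma IsCayleyLipschitz.sub_const (hφ : IsCayleyLipschitz S φ) (c : ℤ) :
    IsCayleyLipschitz S (fun x => φ x - c) := fun x s hs => by
  rw [sub_sub_sub_cancel_right]
  exact hφ x s hs

lemma IsCayleyLipschitz.le_add_length (hh : IsCayleyLipschitz S h) {w : List G}
    (hw : ∀ s ∈ w, s ∈ S) (x : G) : h (x * w.prod) ≤ h x + w.length := by
  induction w generalizing x with
  | nil => simp
  | cons s w ih =>
    rw [List.forall_mem_cons] at hw
    have := ih hw.2 (x * s)
    have := (abs_le.1 (hh x s hw.1)).2
    rw [List.prod_cons, ← mul_assoc, List.length_cons]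
    push_cast
    omega

lemma abs_wordIntegral_le (hφ : IsCayleyLipschitz S φ) (hh : IsCayleyLipschitz S h) {w : List G}
    (hw : ∀ s ∈ w, s ∈ S) {x : G} {k : ℤ} (hk : |φ x| ≤ k) :
    |wordIntegral φ h x w| ≤ w.length * (2 * (k + w.length)) := by
  induction w generalizing x k with
  | nil => simp [wordIntegral]
  | cons s w ih =>
    rw [List.forall_mem_cons] at hw
    have hφs := hφ x s hw.1
    have hhs := hh x s hw.1
    have hrest := ih hw.2 (x := x * s) (k := k + 1) (by rw [abs_le] at *; omega)
    have hsum : |φ x + φ (x * s)| ≤ 2 * k + 1 := by rw [abs_le] at *; omega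
    have hfirst : |(φ x + φ (x * s)) * (h (x * s) - h x)| ≤ 2 * k + 1 := by
      rw [abs_mul]
      exact (mul_le_of_le_one_right (abs_nonneg _) hhs).trans hsum
    have := (abs_add_le _ _).trans (add_le_add hfirst hrest)
    rw [wordIntegral, List.length_cons]
    push_cast
    have := abs_nonneg (φ x)
    nlinarith

/-- After subtracting a multiple of the exact form `dh` we may assume `φ x = 0`. -/
lemma abs_wordIntegral_sub_le (hφ : IsCayleyLipschitz S φ) (hh : IsCayleyLipschitz S h)
    {w : List G} (hw : ∀ s ∈ w, s ∈ S) (x : G) :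
    |wordIntegral φ h x w - 2 * φ x * (h (x * w.prod) - h x)| ≤ 2 * (w.length : ℤ) ^ 2 := by
  rw [← wordIntegral_sub_const]
  refine (abs_wordIntegral_le (hφ.sub_const (φ x)) hh hw (k := 0) ?_).trans_eq (by ring)
  rw [sub_self, abs_zero]

lemma abs_wordIntegral_sub_wordIntegral_le (hφ : IsCayleyLipschitz S φ)
    (hh : IsCayleyLipschitz S h) {v w : List G} (hv : ∀ s ∈ v, s ∈ S) (hw : ∀ s ∈ w, s ∈ S)
    (hvw : v.prod = w.prod) {L : ℕ} (hvL : v.length ≤ L) (hwL : w.length ≤ L) (x : G) :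
    |wordIntegral φ h x v - wordIntegral φ h x w| ≤ 4 * L ^ 2 := by
  have hv' := abs_wordIntegral_sub_le hφ hh hv x
  have hw' := abs_wordIntegral_sub_le hφ hh hw x
  have hvL' : (v.length : ℤ) ^ 2 ≤ L ^ 2 := by gcongr
  have hwL' : (w.length : ℤ) ^ 2 ≤ L ^ 2 := by gcongr
  rw [hvw] at hv'
  rw [abs_le] at *
  omega

lemma wordIntegral_nonneg_and_sq_sub_sq_le (hφ : IsCayleyLipschitz S φ)
    (hh : IsCayleyLipschitz S h) (hφ₀ : ∀ x, 0 ≤ φ x) {w : List G} (hw : ∀ s ∈ w, s ∈ S) {x : G}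
    (hx : h (x * w.prod) = h x + w.length) :
    0 ≤ wordIntegral φ h x w ∧ φ (x * w.prod) ^ 2 - φ x ^ 2 ≤ wordIntegral φ h x w := by
  induction w generalizing x with
  | nil => simp [wordIntegral]
  | cons s w ih =>
    rw [List.forall_mem_cons] at hw
    have hw_le := hh.le_add_length hw.2 (x * s)
    have hhs := (abs_le.1 (hh x s hw.1)).2
    have hφs := (abs_le.1 (hφ x s hw.1)).2
    rw [List.prod_cons, ← mul_assoc, List.length_cons, Nat.cast_succ] at hx
    obtain ⟨hnonneg, hsq⟩ := ih hw.2 (x := x * s) (by omega)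
    have hstep : h (x * s) - h x = 1 := by omega
    rw [List.prod_cons, ← mul_assoc, wordIntegral, hstep, mul_one]
    have := hφ₀ x
    have := hφ₀ (x * s)
    have : φ (x * s) ^ 2 - φ x ^ 2 ≤ φ x + φ (x * s) := by nlinarith
    exact ⟨by omega, by omega⟩

/-- A Dehn step changes the integral of `2 φ dh` by a bounded amount, so closed words satisfy a
linear isoperimetric inequality. -/
lemma DehnProperty.abs_wordIntegral_le_of_prod_eq_one {L : ℕ} (hL : DehnProperty S L)
    (hS : IsSymmGenSet S) (hφ : IsCayleyLipschitz S φ) (hh : IsCayleyLipschitz S h) {w : List G}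
    (hw : ∀ s ∈ w, s ∈ S) (hprod : w.prod = 1) (x : G) :
    |wordIntegral φ h x w| ≤ 4 * L ^ 2 * w.length := by
  induction hk : w.length using Nat.strong_induction_on generalizing w with
  | _ k ih =>
    by_cases hnil : w = []
    · rw [hnil, wordIntegral, abs_zero]
      positivity
    obtain ⟨l₁, v, l₂, rfl, hvL, hv_short⟩ := hL w hw hnil hprod
    obtain ⟨v', hv', hv'_len, hv'_prod⟩ := hS.exists_list_length_eq v.prod
    simp only [List.length_append] at hk
    simp only [List.forall_mem_append] at hw
    have hih := ih (w := l₁ ++ v' ++ l₂) (k - v.length + v'.length) (by omega)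
      (by simpa only [List.forall_mem_append] using ⟨⟨hw.1.1, hv'⟩, hw.2⟩)
      (by simpa only [List.prod_append, hv'_prod] using hprod)
      (by simp only [List.length_append]; omega)
    have hreplace := abs_wordIntegral_sub_wordIntegral_le hφ hh hw.1.2 hv' hv'_prod.symm hvL
      (by omega) (x * l₁.prod)
    have hlen : 4 * (L : ℤ) ^ 2 * (k - v.length + v'.length : ℕ) ≤ 4 * L ^ 2 * (k - 1) := by
      gcongr
      omega
    rw [wordIntegral_append, wordIntegral_append, List.prod_append, hv'_prod] at hih
    rw [wordIntegral_append, wordIntegral_append, List.prod_append]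
    rw [mul_sub_one] at hlen
    rw [abs_le] at *
    omega

end WordIntegral

/-! ### Paths avoiding a ball -/

/-- `x` and `y` are joined in the Cayley graph of `S` by a path of length at most `k` that avoids
the open ball of radius `ρ` about `p`. -/
def JoinedOutsideBall {G : Type*} [Group G] (S : Set G) (ρ : ℤ) (p x y : G) (k : ℤ) : Prop :=
  ∃ w : List G, (∀ s ∈ w, s ∈ S) ∧ x * w.prod = y ∧ w.length ≤ k ∧
    ∀ i, ρ ≤ wordDist S p (x * (w.take i).prod)

lemma JoinedOutsideBall.mono {G : Type*} [Group G] {S : Set G} {ρ k k' : ℤ} {p x y : G}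
    (hxy : JoinedOutsideBall S ρ p x y k) (hk : k ≤ k') : JoinedOutsideBall S ρ p x y k' :=
  hxy.imp fun _ ⟨hw, hy, hwk, hwρ⟩ => ⟨hw, hy, hwk.trans hk, hwρ⟩

lemma JoinedOutsideBall.trans {G : Type*} [Group G] {S : Set G} {ρ k k' : ℤ} {p x y z : G}
    (hxy : JoinedOutsideBall S ρ p x y k) (hyz : JoinedOutsideBall S ρ p y z k') :
    JoinedOutsideBall S ρ p x z (k + k') := by
  obtain ⟨v, hv, rfl, hvk, hvρ⟩ := hxy
  obtain ⟨w, hw, rfl, hwk, hwρ⟩ := hyz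
  refine ⟨v ++ w, List.forall_mem_append.2 ⟨hv, hw⟩, by rw [List.prod_append, mul_assoc], ?_,
    fun i => ?_⟩
  · rw [List.length_append]
    omega
  · rw [List.take_append, List.prod_append, ← mul_assoc]
    rcases le_total i v.length with hi | hi
    · rw [Nat.sub_eq_zero_of_le hi, List.take_zero, List.prod_nil, mul_one]
      exact hvρ i
    · rw [List.take_of_length_le hi]
      exact hwρ _

namespace IsSymmGenSet

variable {G : Type*} [Group G] {S : Set G} (hS : IsSymmGenSet S) {ρ k : ℤ} {p x y : G}
include hS

lemma joinedOutsideBall_of_forall_between (hk : wordDist S x y ≤ k)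
    (h : ∀ q, wordDist S x q + wordDist S q y = wordDist S x y → ρ ≤ wordDist S p q) :
    JoinedOutsideBall S ρ p x y k := by
  obtain ⟨l, hl, hlen, hprod⟩ := hS.exists_list_length_eq (x⁻¹ * y)
  have hy : x * l.prod = y := by rw [hprod, mul_inv_cancel_left]
  have hlen' : (l.length : ℤ) = wordDist S x y := by rw [hlen, wordDist]
  refine ⟨l, hl, hy, by omega, fun i => h _ ?_⟩
  rcases le_total i l.length with hi | hi
  · have hxi := wordDist_prod_take_le x hl i.zero_le
    have hiy := wordDist_prod_take_le x hl hi
    rw [List.take_zero, List.prod_nil, mul_one] at hxi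
    rw [List.take_length, hy] at hiy
    have := hS.wordDist_triangle x (x * (l.take i).prod) y
    omega
  · rw [List.take_of_length_le hi, hy, wordDist_self, add_zero]

lemma joinedOutsideBall_of_le_left (hk : wordDist S x y ≤ k) (h : ρ + k ≤ wordDist S p x) :
    JoinedOutsideBall S ρ p x y k :=
  hS.joinedOutsideBall_of_forall_between hk fun q hq => by
    have := hS.wordDist_triangle p q x
    have := hS.wordDist_comm x q
    have := wordDist_nonneg (S := S) q y
    omega

lemma joinedOutsideBall_of_le_right (hk : wordDist S x y ≤ k) (h : ρ + k ≤ wordDist S p y) :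
    JoinedOutsideBall S ρ p x y k :=
  hS.joinedOutsideBall_of_forall_between hk fun q hq => by
    have := hS.wordDist_triangle p q y
    have := wordDist_nonneg (S := S) x q
    omega

lemma isCayleyLipschitz_wordDist (a : G) : IsCayleyLipschitz S (wordDist S a) := fun x s hs => by
  have := hS.wordDist_triangle a x (x * s)
  have := hS.wordDist_triangle a (x * s) x
  have hle := wordDist_mul_prod_le x (l := [s]) (List.forall_mem_singleton.2 hs)
  rw [List.prod_singleton, List.length_singleton] at hle
  have := hS.wordDist_comm x (x * s)
  rw [abs_le]
  omega

lemma isCayleyLipschitz_max_sub_wordDist (ρ : ℤ) (p : G) :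
    IsCayleyLipschitz S (fun x => max 0 (ρ - wordDist S p x)) := fun x s hs => by
  have := hS.isCayleyLipschitz_wordDist p x s hs
  dsimp only
  rw [abs_le] at *
  omega

lemma exists_word_sq_le_wordIntegral {φ : G → ℤ} {a b : G} (hφ : IsCayleyLipschitz S φ)
    (hφ₀ : ∀ x, 0 ≤ φ x) (hφa : φ a = 0)
    (hp : wordDist S a p + wordDist S p b = wordDist S a b) :
    ∃ u : List G, (∀ s ∈ u, s ∈ S) ∧ a * u.prod = b ∧ u.length = wordDist S a b ∧
      φ p ^ 2 ≤ wordIntegral φ (wordDist S a) a u := by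
  obtain ⟨u, hu, hu_len, hu_prod⟩ := hS.exists_list_length_eq (a⁻¹ * p)
  obtain ⟨v, hv, hv_len, hv_prod⟩ := hS.exists_list_length_eq (p⁻¹ * b)
  have hup : a * u.prod = p := by rw [hu_prod, mul_inv_cancel_left]
  have hvb : p * v.prod = b := by rw [hv_prod, mul_inv_cancel_left]
  have hu_dist : (u.length : ℤ) = wordDist S a p := by rw [hu_len, wordDist]
  have hv_dist : (v.length : ℤ) = wordDist S p b := by rw [hv_len, wordDist]
  have hh := hS.isCayleyLipschitz_wordDist a
  have hu_int := (wordIntegral_nonneg_and_sq_sub_sq_le hφ hh hφ₀ hu (x := a)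
    (by rw [hup, wordDist_self]; omega)).2
  have hv_int := (wordIntegral_nonneg_and_sq_sub_sq_le hφ hh hφ₀ hv (x := p)
    (by rw [hvb]; omega)).1
  rw [hup, hφa] at hu_int
  refine ⟨u ++ v, List.forall_mem_append.2 ⟨hu, hv⟩, ?_, ?_, ?_⟩
  · rw [List.prod_append, ← mul_assoc, hup, hvb]
  · rw [List.length_append]
    omega
  · rw [wordIntegral_append, hup]
    omega

/-- Integrate `2 φ dh` along the bigon formed by the geodesic through `p` and the path avoiding the
ball, where `φ` is the height of a cone of radius `ρ` at `p` and `h` is the distance from `a`. -/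
lemma sq_le_of_joinedOutsideBall {L : ℕ} (hL : DehnProperty S L) (hρ : 0 ≤ ρ) {a b : G}
    (hp : wordDist S a p + wordDist S p b = wordDist S a b)
    (hba : JoinedOutsideBall S ρ p b a k) : ρ ^ 2 ≤ 8 * L ^ 2 * k := by
  obtain ⟨w, hw, hwa, hwk, hwρ⟩ := hba
  set φ : G → ℤ := fun x => max 0 (ρ - wordDist S p x) with hφ
  have hφ_lip : IsCayleyLipschitz S φ := hS.isCayleyLipschitz_max_sub_wordDist ρ p
  have hφ_zero : ∀ i, φ (b * (w.take i).prod) = 0 := fun i =>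
    max_eq_left (sub_nonpos.2 (hwρ i))
  have hφ_p : φ p = ρ := by
    simp only [hφ, wordDist_self]
    omega
  have hφ_a : φ a = 0 := by simpa only [List.take_length, hwa] using hφ_zero w.length
  obtain ⟨u, hu, hub, hu_len, hu_int⟩ :=
    hS.exists_word_sq_le_wordIntegral hφ_lip (fun _ => le_max_left _ _) hφ_a hp
  have hw_len : wordDist S a b ≤ w.length := by
    rw [hS.wordDist_comm, ← hwa]
    exact wordDist_mul_prod_le b hw
  have hclosed := hL.abs_wordIntegral_le_of_prod_eq_one hS hφ_lip
    (hS.isCayleyLipschitz_wordDist a) (w := u ++ w) (List.forall_mem_append.2 ⟨hu, hw⟩)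
    ((mul_eq_left (a := a)).1 (by rw [List.prod_append, ← mul_assoc, hub, hwa])) a
  rw [wordIntegral_append, hub, wordIntegral_eq_zero hφ_zero, add_zero] at hclosed
  calc ρ ^ 2 ≤ wordIntegral φ (wordDist S a) a u := hφ_p ▸ hu_int
    _ ≤ 4 * L ^ 2 * (u ++ w).length := (le_abs_self _).trans hclosed
    _ ≤ 4 * L ^ 2 * (2 * k) := by
      gcongr
      rw [List.length_append]
      omega
    _ = 8 * L ^ 2 * k := by ring

end IsSymmGenSet

/-! ### Thin triangles -/

/-- `q` lies on a geodesic from `x` to `y`. -/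
abbrev IsBetween {G : Type*} [Group G] (S : Set G) (x q y : G) : Prop :=
  wordDist S x q + wordDist S q y = wordDist S x y

/-- `q` lies on a geodesic from `a` to `c` or on one from `c` to `b`. -/
abbrev OnTwoSides {G : Type*} [Group G] (S : Set G) (a c b q : G) : Prop :=
  IsBetween S a q c ∨ IsBetween S c q b

/-- In geodesic triangles of perimeter at most `ℓ`, every side is contained in the
`T`-neighbourhood of the union of the intervals spanned by the other two. -/
def ThinTriangles {G : Type*} [Group G] (S : Set G) (ℓ T : ℤ) : Prop := ∀ a b c p : G,
  wordDist S a b + wordDist S b c + wordDist S c a ≤ ℓ → IsBetween S a p b →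
    ∃ q, OnTwoSides S a c b q ∧ wordDist S p q ≤ T

namespace IsSymmGenSet

variable {G : Type*} [Group G] {S : Set G} (hS : IsSymmGenSet S) {ℓ T : ℤ} {a b c p : G}

lemma isBetween_left (x y : G) : IsBetween S x x y := by rw [IsBetween, wordDist_self, zero_add]

lemma isBetween_right (x y : G) : IsBetween S x y y := by rw [IsBetween, wordDist_self, add_zero]

include hS

lemma isBetween_comm {x q y : G} : IsBetween S x q y ↔ IsBetween S y q x := by
  rw [IsBetween, IsBetween, hS.wordDist_comm x q, hS.wordDist_comm q y, hS.wordDist_comm x y,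
    add_comm]

lemma onTwoSides_comm {q : G} : OnTwoSides S a c b q ↔ OnTwoSides S b c a q :=
  or_comm.trans (or_congr hS.isBetween_comm hS.isBetween_comm)

lemma isBetween_trans {x z q y : G} (hz : IsBetween S x z y) (hq : IsBetween S z q y) :
    IsBetween S x q y := by
  have := hS.wordDist_triangle x z q
  have := hS.wordDist_triangle x q y
  omega

lemma onTwoSides_of_isBetween {z q : G} (hz : OnTwoSides S a c b z) (hq : IsBetween S z q c) :
    OnTwoSides S a c b q :=
  hz.imp (fun hz => hS.isBetween_trans hz hq) fun hz =>
    hS.isBetween_comm.1 (hS.isBetween_trans (hS.isBetween_comm.1 hz) hq)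

lemma exists_side_point (h : ThinTriangles S ℓ T) (hT : 0 ≤ T)
    (hℓ : wordDist S a b + wordDist S b c + wordDist S c a ≤ ℓ) (hp : IsBetween S a p b)
    (hfar : ∀ q, OnTwoSides S a c b q → T ≤ wordDist S p q) :
    ∃ a' a'', IsBetween S a a' p ∧ wordDist S a' p ≤ 10 * T ∧ wordDist S a' a'' ≤ T ∧
      OnTwoSides S a c b a'' ∧
      JoinedOutsideBall S T p a'' a' T ∧ JoinedOutsideBall S T p a' a'' T := by
  rcases le_or_gt (wordDist S a p) (10 * T) with hc | hc
  · have hjoin : JoinedOutsideBall S T p a a T :=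
      hS.joinedOutsideBall_of_forall_between (by rwa [wordDist_self]) fun q hq => by
        have := hfar a (Or.inl (isBetween_left a c))
        have := hS.wordDist_triangle p q a
        have := wordDist_nonneg (S := S) a q
        have := wordDist_nonneg (S := S) q a
        rw [wordDist_self] at hq
        omega
    exact ⟨a, a, isBetween_left a p, hc, by rwa [wordDist_self], Or.inl (isBetween_left a c),
      hjoin, hjoin⟩
  · have := hS.wordDist_comm a p
    obtain ⟨a', hpa', ha'a⟩ := hS.exists_between p a (10 * T) (by omega) (by omega)
    have := hS.wordDist_comm p a'
    have := hS.wordDist_comm a a'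
    have := hS.wordDist_triangle a a' b
    have := hS.wordDist_triangle a' p b
    obtain ⟨a'', ha'', hdist⟩ := h a b c a' hℓ (by omega)
    exact ⟨a', a'', by omega, by omega, hdist, ha'',
      hS.joinedOutsideBall_of_le_right (by rwa [hS.wordDist_comm]) (by omega),
      hS.joinedOutsideBall_of_le_left hdist (by omega)⟩

lemma joinedOutsideBall_of_isBetween {k : ℤ} {x y : G}
    (hfar : ∀ q, OnTwoSides S a c b q → T ≤ wordDist S p q) (hx : OnTwoSides S a c b x)
    (hy : IsBetween S x y c) (hk : wordDist S x y ≤ k) :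
    JoinedOutsideBall S T p x y k ∧ JoinedOutsideBall S T p y x k := by
  have hbetween {q : G} (hq : IsBetween S x q y) : T ≤ wordDist S p q :=
    hfar q (hS.onTwoSides_of_isBetween hx (hS.isBetween_comm.1
      (hS.isBetween_trans (hS.isBetween_comm.1 hy) (hS.isBetween_comm.1 hq))))
  exact ⟨hS.joinedOutsideBall_of_forall_between hk fun q hq => hbetween hq,
    hS.joinedOutsideBall_of_forall_between (by rwa [hS.wordDist_comm]) fun q hq =>
      hbetween (hS.isBetween_comm.1 hq)⟩

lemma perimeter_le_of_onTwoSides {x y : G}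
    (hℓ : wordDist S a b + wordDist S b c + wordDist S c a ≤ ℓ) (hx : OnTwoSides S a c b x)
    (hy : OnTwoSides S a c b y) : wordDist S x c + wordDist S c y + wordDist S y x ≤ ℓ := by
  have := hS.wordDist_comm a b
  have := hS.wordDist_comm b c
  have := hS.wordDist_comm c a
  have := hS.wordDist_comm a x
  have := hS.wordDist_comm c x
  have := hS.wordDist_comm b x
  have := hS.wordDist_comm a y
  have := hS.wordDist_comm c y
  have := hS.wordDist_comm b y
  have := hS.wordDist_comm x y
  have := hS.wordDist_triangle x a y
  have := hS.wordDist_triangle x b y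
  have := hS.wordDist_triangle a b y
  have := hS.wordDist_triangle b a y
  have := hS.wordDist_triangle a c b
  have := hS.wordDist_triangle a b c
  have := hS.wordDist_triangle b a c
  omega

/-- The path goes from `y` towards the vertex `c` and back to `x`, taking a shortcut when `c` is
far away. -/
lemma joinedOutsideBall_of_onTwoSides (h : ThinTriangles S ℓ T) (hT : 0 < T)
    (hℓ : wordDist S a b + wordDist S b c + wordDist S c a ≤ ℓ)
    (hfar : ∀ q, OnTwoSides S a c b q → T ≤ wordDist S p q) {x y : G}
    (hx : OnTwoSides S a c b x) (hy : OnTwoSides S a c b y) (hxp : wordDist S x p ≤ 11 * T)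
    (hxy : wordDist S x y ≤ 22 * T) : JoinedOutsideBall S T p y x (224 * T) := by
  have := hS.wordDist_comm x y
  rcases le_or_gt (wordDist S x c) (100 * T) with hc | hc
  · have hyc := (hS.joinedOutsideBall_of_isBetween (k := 122 * T) hfar hy (isBetween_right y c)
      (by have := hS.wordDist_triangle y x c; omega)).1
    have hcx := (hS.joinedOutsideBall_of_isBetween hfar hx (isBetween_right x c) hc).2
    exact (hyc.trans hcx).mono (by omega)
  · obtain ⟨u, hxu, huc⟩ := hS.exists_between x c (100 * T) (by omega) hc.le
    obtain ⟨v, hxv | hyv, huv⟩ := h x c y u (hS.perimeter_le_of_onTwoSides hℓ hx hy) (by omega)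
    · have := hS.wordDist_triangle x v u
      have := hS.wordDist_comm u v
      have := wordDist_nonneg (S := S) v y
      omega
    · have := hS.wordDist_comm u v
      have hyv_join := (hS.joinedOutsideBall_of_isBetween (k := 123 * T) hfar hy hyv (by
        have := hS.wordDist_triangle y x v
        have := hS.wordDist_triangle x u v
        omega)).1
      have hvu_join : JoinedOutsideBall S T p v u T :=
        hS.joinedOutsideBall_of_le_right (by omega) (by
          have := hS.wordDist_comm x p
          have := hS.wordDist_triangle x p u
          omega)
      have hux_join := (hS.joinedOutsideBall_of_isBetween hfar hx (y := u) (by omega) hxu.le).2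
      exact ((hyv_join.trans hvu_join).trans hux_join).mono (by omega)

/-- Near `p`, both halves of the side through `p` are joined to the other two sides, so if those
stay outside the ball of radius `T`, then the side has a detour around this ball of length
`226 T`, which is too short if `1808 L ^ 2 = 8 L ^ 2 * 226 < T`. -/
lemma thinTriangles_sub_one {L : ℕ} (hL : DehnProperty S L) (h : ThinTriangles S ℓ T)
    (hT : 1808 * L ^ 2 < T) : ThinTriangles S ℓ (T - 1) := by
  have hT₀ : 0 < T := lt_of_le_of_lt (by positivity) hT
  intro a b c p hℓ hp
  by_contra! hcon
  have hfar : ∀ q, OnTwoSides S a c b q → T ≤ wordDist S p q := fun q hq => by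
    have := hcon q hq
    omega
  obtain ⟨a', a'', ha', ha'p, ha'', ha''_side, ha''_join, -⟩ :=
    hS.exists_side_point h hT₀.le hℓ hp hfar
  obtain ⟨b', b'', hb', hb'p, hb'', hb''_side, -, hb''_join⟩ :=
    hS.exists_side_point (a := b) (b := a) (c := c) h hT₀.le
      (by rwa [hS.wordDist_comm b a, hS.wordDist_comm a c, hS.wordDist_comm c b, add_right_comm])
      (hS.isBetween_comm.1 hp) fun q hq => hfar q (hS.onTwoSides_comm.1 hq)
  have := hS.wordDist_comm p b'
  have hp' : IsBetween S a' p b' := by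
    have := hS.wordDist_comm b b'
    have := hS.wordDist_comm b p
    have := hS.wordDist_triangle a a' b
    have := hS.wordDist_triangle a' b' b
    have := hS.wordDist_triangle a' p b'
    omega
  have hmid := hS.joinedOutsideBall_of_onTwoSides h hT₀ hℓ hfar ha''_side
    (hS.onTwoSides_comm.1 hb''_side)
    (by
      have := hS.wordDist_comm a' a''
      have := hS.wordDist_triangle a'' a' p
      omega)
    (by
      have := hS.wordDist_comm a' a''
      have := hS.wordDist_triangle a'' a' b''
      have := hS.wordDist_triangle a' b' b''
      omega)
  have hsq := hS.sq_le_of_joinedOutsideBall hL hT₀.le hp'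
    (((hb''_join.trans hmid).trans ha''_join).mono (k' := 226 * T) (by omega))
  nlinarith

lemma thinTriangles {L : ℕ} (hL : DehnProperty S L) (ℓ : ℤ) :
    ThinTriangles S ℓ (1808 * L ^ 2) := by
  have hdescent : ∀ k : ℕ,
      ThinTriangles S ℓ (1808 * L ^ 2 + k) → ThinTriangles S ℓ (1808 * L ^ 2) := by
    intro k
    induction k with
    | zero => exact fun h => by simpa only [Nat.cast_zero, add_zero] using h
    | succ k ih =>
      refine fun h => ih ?_
      have := hS.thinTriangles_sub_one hL h (by omega)
      rwa [Nat.cast_succ, ← add_assoc, add_sub_cancel_right] at this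
  refine hdescent ℓ.toNat fun a b c p hℓ hp => ⟨a, Or.inl (isBetween_left a c), ?_⟩
  have := hS.wordDist_comm a p
  have := wordDist_nonneg (S := S) p b
  have := wordDist_nonneg (S := S) b c
  have := wordDist_nonneg (S := S) c a
  have : (0 : ℤ) ≤ 1808 * L ^ 2 := by positivity
  omega

lemma exists_transition (h : ∀ ℓ, ThinTriangles S ℓ T) (hT : 0 ≤ T) (u v q : G) :
    ∃ p p' y z, IsBetween S u p v ∧ wordDist S p p' ≤ 1 ∧ IsBetween S u y q ∧
      wordDist S p y ≤ T ∧ IsBetween S q z v ∧ wordDist S p' z ≤ T := by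
  obtain ⟨n, γ, hn, hγ₀, hγ₁, hγ⟩ := hS.exists_path u v
  have hmem {i : ℕ} (hi : i ≤ n) : IsBetween S u (γ i) v := by
    have h₁ := hγ 0 i i.zero_le hi
    have h₂ := hγ i n hi le_rfl
    rw [hγ₀] at h₁
    rw [hγ₁] at h₂
    omega
  have hex : ∃ i ≤ n, ∃ z, IsBetween S q z v ∧ wordDist S (γ i) z ≤ T :=
    ⟨n, le_rfl, v, isBetween_right q v, by rwa [hγ₁, wordDist_self]⟩
  classical
  obtain ⟨hi, z, hz, hiz⟩ := Nat.find_spec hex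
  rcases hfind : Nat.find hex with _ | i
  · rw [hfind, hγ₀] at hiz
    exact ⟨u, u, u, z, isBetween_left u v, by rw [wordDist_self]; exact zero_le_one,
      isBetween_left u q, by rwa [wordDist_self], hz, hiz⟩
  · obtain ⟨y, hy | hy, hiy⟩ := h _ u v q (γ i) le_rfl (hmem (by omega))
    · have := hγ i (i + 1) (by omega) (by omega)
      push_cast at this
      rw [hfind] at hiz
      exact ⟨γ i, γ (i + 1), y, z, hmem (by omega), by omega, hy, hiy, hz, hiz⟩
    · exact absurd ⟨by omega, y, hy, hiy⟩ (Nat.find_min hex (m := i) (by omega))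

lemma exists_isBetween_two_mul_wordDist_le (h : ∀ ℓ, ThinTriangles S ℓ T) (hT : 0 ≤ T)
    (u v q : G) : ∃ p, IsBetween S u p v ∧
      2 * wordDist S p q ≤ wordDist S u q + wordDist S q v - wordDist S u v + 4 * T + 2 := by
  obtain ⟨p, p', y, z, hp, hpp', hy, hpy, hz, hp'z⟩ := hS.exists_transition h hT u v q
  refine ⟨p, hp, ?_⟩
  have := hS.wordDist_triangle u y p
  have := hS.wordDist_triangle p y q
  have := hS.wordDist_comm p y
  have := hS.wordDist_triangle p p' z
  have := hS.wordDist_triangle p z v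
  have := hS.wordDist_triangle q z p
  have := hS.wordDist_comm p z
  have := hS.wordDist_comm p q
  omega

lemma exists_fourPointInequality {L : ℕ} (hL : DehnProperty S L) :
    ∃ D : ℤ, 0 ≤ D ∧ FourPointInequality S D := by
  set T : ℤ := 1808 * L ^ 2
  have hT : 0 ≤ T := by positivity
  have hthin := hS.thinTriangles hL
  refine ⟨6 * T + 2, by omega, fun u v w q => ?_⟩
  obtain ⟨p, hp, hpq⟩ := hS.exists_isBetween_two_mul_wordDist_le hthin hT u v q
  obtain ⟨y, hy | hy, hpy⟩ := hthin _ u v w p le_rfl hp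
  all_goals
    have := hS.wordDist_comm p q
    have := hS.wordDist_triangle q p y
    have := hS.wordDist_comm q y
  · left
    have := hS.wordDist_triangle u y q
    have := hS.wordDist_triangle q y w
    omega
  · right
    have := hS.wordDist_triangle w y q
    have := hS.wordDist_triangle q y v
    omega

end IsSymmGenSet

/-! ### Quotients are non-elementary -/

namespace DiscreteHyperbolicMetric

variable {X : Type*} {M : DiscreteHyperbolicMetric X}

lemma excess_le_of_dist_le_of_dist_le {u v p p' f : X} {e η : ℤ} (hp : M.excess u v p ≤ e)
    (hp' : M.excess u v p' ≤ e) (hf : M.excess u v f ≤ η) (hpf : M.dist u p ≤ M.dist u f)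
    (hfp' : M.dist u f ≤ M.dist u p') : M.excess p p' f ≤ 2 * (e + η + M.δ) := by
  have := M.dist_le_of_excess_le hf hp hpf
  have := M.dist_le_of_excess_le hp' hf hfp'
  have := M.dist_triangle u p p'
  simp only [excess]
  omega

lemma IsLocalQuasigeodesic.exists_consecutive_vertices {P : ℕ → X} {k : ℕ}
    (h : M.IsLocalQuasigeodesic P k) {B r : ℤ} (hB : ∀ i ≤ k, M.dist (P i) (P (i + 1)) ≤ B)
    (hr : 0 ≤ r) (hrB : r + 2 * B < M.dist (P 0) (P (k + 1))) :
    ∃ i, i + 1 < k ∧ r < M.dist (P 0) (P (i + 1)) ∧ M.dist (P 0) (P (i + 1)) ≤ r + B ∧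
      r < M.dist (P 0) (P (i + 2)) ∧ M.dist (P 0) (P (i + 2)) ≤ r + 2 * B := by
  have hB₀ : 0 ≤ B := (M.dist_nonneg _ _).trans (hB 0 k.zero_le)
  have hex : ∃ j, r < M.dist (P 0) (P j) := ⟨k + 1, by omega⟩
  classical
  have hspec := Nat.find_spec hex
  have hle : Nat.find hex ≤ k + 1 := Nat.find_le (by omega)
  rcases hfind : Nat.find hex with _ | i
  · rw [hfind, M.dist_self] at hspec
    omega
  rw [hfind] at hspec hle
  have hmin : M.dist (P 0) (P i) ≤ r := not_lt.1 (Nat.find_min hex (by omega))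
  have hi_step := hB i (by omega)
  have := M.dist_triangle (P 0) (P i) (P (i + 1))
  have hik : i < k := by
    by_contra! hki
    obtain rfl : i = k := by omega
    omega
  have : M.dist (P (i + 1)) (P (i + 2)) ≤ B := hB (i + 1) (by omega)
  have htri := M.dist_triangle (P 0) (P (i + 1)) (P (i + 2))
  have hik' : i + 1 < k := by
    by_contra! hki
    obtain rfl : k = i + 1 := by omega
    exact absurd hrB (not_lt.2 (htri.trans (by omega)))
  have hlong : 4 * M.δ < M.dist (P (i + 1)) (P (i + 2)) := h.lt_dist i (by omega)
  have hvertex := h.excess_vertex_le (a := 0) (b := i + 1) (c := i + 2) (by omega) (by omega)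
    (by omega)
  simp only [excess] at hvertex
  exact ⟨i, hik', hspec, by omega, by omega, by omega⟩

end DiscreteHyperbolicMetric

namespace AxisSystem

variable {Γ : Type*} [Group Γ] {M : AxisSystem Γ}

lemma excess_pt_le_of_not_coaxial {y y' : Γ} {j₀ c t k l : ℤ} (hyy' : ¬ M.Coaxial M.n₀ y y')
    (hy : M.dist y (M.pt y' j₀) ≤ c) (h₀ : min 0 k ≤ t) (hk : t ≤ max 0 k)
    (ht : M.overlapBound (3 * M.δ + 2 * c) ≤ |t|) :
    M.excess (M.pt y k) (M.pt y' l) (M.pt y t) ≤ M.δ := by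
  have := M.one_le_δ
  have hc : 0 ≤ c := (M.dist_nonneg _ _).trans hy
  rcases M.excess_le_or_excess_le (M.excess_self_pt_eq_zero (a := y) h₀ hk).le (M.pt y' l)
    with h | h
  · have := M.excess_le_add_dist_left y (M.pt y' j₀) (M.pt y' l) (M.pt y t)
    obtain ⟨t', -, -, ht'⟩ := M.exists_pt_near (a := y') (i := j₀) (j := l) (q := M.pt y t)
      (e := M.δ + 2 * c) (by omega)
    exact absurd (M.coaxial_of_dist_le (c := 3 * M.δ + 2 * c) (i₀ := 0) (i₁ := t) (j₁ := t')
      (by rw [M.pt_zero]; exact hy.trans (by omega)) (by omega) (by rwa [sub_zero])) hyy'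
  · rw [M.excess_comm]
    omega

section ChordPath

variable {P : ℕ → Γ} {ε : ℕ → ℤ} {m : ℕ} {κ B r s : ℤ} {a : Γ}

lemma coaxial_of_chordPath (C : M.ChordPath P ε m κ) (hκ : M.overlapBound (40 * M.δ) ≤ κ)
    (hr : M.excess (P 0) (P (m + 1)) (M.pt a r) ≤ 10 * M.δ)
    (hs : M.excess (P 0) (P (m + 1)) (M.pt a s) ≤ 10 * M.δ) {i : ℕ} (hi : i < m)
    (hlow : M.dist (P 0) (M.pt a r) + M.T * κ ≤ M.dist (P 0) (P (i + 1)))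
    (hup : M.dist (P 0) (P (i + 1)) + M.T * κ ≤ M.dist (P 0) (M.pt a s)) :
    M.Coaxial M.n₀ (P (i + 1)) a := by
  have := M.one_le_δ
  have hκ₀ : 0 ≤ κ := (M.overlapBound_nonneg _).trans hκ
  have hnear : ∀ t, 0 ≤ t → t ≤ κ → ∃ t', M.dist (M.pt (P (i + 1)) t) (M.pt a t') ≤ 40 * M.δ := by
    intro t ht₀ htκ
    have hlen := M.dist_pt_self (P (i + 1)) t
    rw [abs_of_nonneg ht₀] at hlen
    have : M.T * t ≤ M.T * κ := mul_le_mul_of_nonneg_left htκ (by have := M.one_le_T; omega)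
    have := M.dist_triangle (P 0) (P (i + 1)) (M.pt (P (i + 1)) t)
    have := M.dist_triangle (P 0) (M.pt (P (i + 1)) t) (P (i + 1))
    have := M.dist_comm (P (i + 1)) (M.pt (P (i + 1)) t)
    obtain ⟨t', -, -, ht'⟩ := M.exists_pt_near (M.excess_le_of_dist_le_of_dist_le hr hs
      (C.excess_chord_le hi (by omega) htκ) (by omega) (by omega))
    exact ⟨t', by omega⟩
  obtain ⟨t₀, ht₀⟩ := hnear 0 le_rfl hκ₀
  obtain ⟨t₁, ht₁⟩ := hnear κ hκ₀ le_rfl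
  exact M.coaxial_of_dist_le ht₀ ht₁ (by rw [sub_zero]; exact hκ.trans (le_abs_self _))

lemma dist_pt_pt_le_of_chordPath (C : M.ChordPath P ε m κ)
    (hκ : M.overlapBound (40 * M.δ) ≤ κ) (hB : ∀ i ≤ m, M.dist (P i) (P (i + 1)) ≤ B)
    (hP : ∀ i, i + 1 < m → ¬ M.Coaxial M.n₀ (P (i + 1)) (P (i + 2)))
    (hr : M.excess (P 0) (P (m + 1)) (M.pt a r) ≤ 10 * M.δ)
    (hs : M.excess (P 0) (P (m + 1)) (M.pt a s) ≤ 10 * M.δ) :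
    M.dist (M.pt a r) (M.pt a s) ≤ 31 * M.δ + 2 * (M.T * κ) + 2 * B := by
  wlog hrs : M.dist (P 0) (M.pt a r) ≤ M.dist (P 0) (M.pt a s) generalizing r s
  · rw [M.dist_comm]
    exact this hs hr (by omega)
  by_contra! hlong
  have := M.one_le_δ
  have : 0 ≤ M.T * κ := mul_nonneg (by have := M.one_le_T; omega) (by have := C.lt_length; omega)
  have := M.dist_nonneg (P 0) (M.pt a r)
  have := M.dist_le_of_excess_le hs hr hrs
  have : M.dist (P 0) (M.pt a s) - 10 * M.δ ≤ M.dist (P 0) (P (m + 1)) := by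
    have := M.dist_nonneg (M.pt a s) (P (m + 1))
    simp only [DiscreteHyperbolicMetric.excess] at hs
    omega
  have : 0 ≤ B := (M.dist_nonneg _ _).trans (hB 0 m.zero_le)
  obtain ⟨i, him, hi_low, hi_up, hi_low', hi_up'⟩ :=
    C.isLocalQuasigeodesic.exists_consecutive_vertices hB
      (r := M.dist (P 0) (M.pt a r) + M.T * κ) (by omega) (by omega)
  have hi := coaxial_of_chordPath C hκ hr hs (i := i) (by omega) hi_low.le (by omega)
  have hi' := coaxial_of_chordPath C hκ hr hs (i := i + 1) him hi_low'.le
    (by change M.dist (P 0) (P (i + 2)) + _ ≤ _; omega)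
  exact hP i him (hi.trans hi'.symm)

end ChordPath

end AxisSystem

lemma prod_map_range_add {G : Type*} [Monoid G] {z : ℕ → G} {a : G} {m n : ℕ}
    (hz : ∀ i, m ≤ i → i < m + n → z i = a) :
    ((List.range (m + n)).map z).prod = ((List.range m).map z).prod * a ^ n := by
  have hpow := List.prod_eq_pow_card ((List.range n).map fun i => z (m + i)) a fun b hb => by
    obtain ⟨i, hi, rfl⟩ := List.mem_map.1 hb
    exact hz _ (by omega) (by rw [List.mem_range] at hi; omega)
  rw [List.length_map, List.length_range] at hpow
  rw [List.range_add, List.map_append, List.prod_append, List.map_map, ← hpow]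
  rfl

namespace AxisSystem

open scoped commutatorElement

variable {Γ : Type*} [Group Γ] {M : AxisSystem Γ}

variable (M) in
/-- Successive translates of the axis joined by short jumps to other axes: one walks `k i` steps
along the axis at `Y i`, jumps by `x i`, which has length at most `c` and changes the axis, and
walks `k i` steps along the new axis to reach `Y (i + 1)`. -/
structure IsZigzag (Y x : ℕ → Γ) (k : ℕ → ℤ) (c : ℤ) : Prop where
  not_coaxial : ∀ i, ¬ M.Coaxial M.n₀ (x i) 1
  dist_le : ∀ i, M.dist 1 (x i) ≤ c
  succ_eq : ∀ i, Y (i + 1) = M.pt (M.pt (Y i) (k i) * x i) (k i)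

namespace IsZigzag

variable {Y x : ℕ → Γ} {k : ℕ → ℤ} {c : ℤ} (Z : M.IsZigzag Y x k c)

include Z

lemma pt_succ_neg (i : ℕ) : M.pt (Y (i + 1)) (-k i) = M.pt (Y i) (k i) * x i := by
  rw [Z.succ_eq, M.pt_pt, add_neg_cancel, M.pt_zero]

lemma dist_jump_le (i : ℕ) : M.dist (M.pt (Y i) (k i)) (M.pt (Y (i + 1)) (-k i)) ≤ c := by
  rw [Z.pt_succ_neg, M.dist_mul_right_self]
  exact Z.dist_le i

lemma not_coaxial_pt (i : ℕ) (s t : ℤ) :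
    ¬ M.Coaxial M.n₀ (M.pt (Y i) s) (M.pt (Y (i + 1)) t) := fun h => Z.not_coaxial i <| by
  have hjump : M.Coaxial M.n₀ (M.pt (Y i) (k i) * x i) (M.pt (Y i) (k i)) := by
    rw [← Z.pt_succ_neg]
    exact (AxialMetric.Coaxial.pt_self _ _ _).trans <|
      (AxialMetric.Coaxial.pt_self _ _ _).symm.trans <| h.symm.trans <|
        (AxialMetric.Coaxial.pt_self _ _ _).trans (AxialMetric.Coaxial.pt_self _ _ _).symm
  simpa using hjump.mul_left (M.pt (Y i) (k i))⁻¹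

lemma chordPath {ε s : ℕ → ℤ} {m : ℕ} {κ κ' : ℤ}
    (hκ' : κ + M.overlapBound (3 * M.δ + 2 * c) ≤ κ') (hκ : 5 * M.δ < κ)
    (hε : ∀ i, ε i = 1 ∨ ε i = -1) (hs : ∀ i < m, s (i + 1) = -k i + ε i * κ')
    (hk : ∀ i < m, 2 * κ' ≤ ε i * (k i + k (i + 1))) :
    M.ChordPath (fun j => M.pt (Y j) (s j)) ε m κ where
  sign_eq i _ := hε i
  excess_left_le i hi t ht₀ htκ := by
    have := M.overlapBound_nonneg (3 * M.δ + 2 * c)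
    have hpt (r : ℤ) : M.pt (M.pt (Y (i + 1)) (s (i + 1))) r =
        M.pt (M.pt (Y (i + 1)) (-k i)) (ε i * κ' + r) := by
      rw [M.pt_pt, M.pt_pt, hs i hi, add_assoc]
    have hpt₀ := hpt 0
    rw [M.pt_zero, add_zero] at hpt₀
    rw [M.excess_comm, hpt, hpt₀]
    refine excess_pt_le_of_not_coaxial (j₀ := k i) (c := c)
      (fun h => Z.not_coaxial_pt i 0 (-k i) (by rw [M.pt_zero]; exact h.symm))
      (by rw [M.dist_comm]; exact Z.dist_jump_le i) ?_ ?_ ?_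
    on_goal 3 => rw [le_abs]
    all_goals rcases hε i with h | h <;> rw [h] <;> omega
  excess_right_le i hi t ht₀ htκ := by
    have := M.overlapBound_nonneg (3 * M.δ + 2 * c)
    have hki := hk i hi
    have hpt (r : ℤ) : M.pt (M.pt (Y (i + 1)) (s (i + 1))) r =
        M.pt (M.pt (Y (i + 1)) (k (i + 1))) (-(k i + k (i + 1)) + ε i * κ' + r) := by
      rw [M.pt_pt, M.pt_pt, hs i hi]
      congr 1
      ring
    have hpt₀ := hpt 0
    rw [M.pt_zero, add_zero] at hpt₀
    rw [hpt, hpt₀]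
    refine excess_pt_le_of_not_coaxial (j₀ := -k (i + 1)) (c := c)
      (fun h => Z.not_coaxial_pt (i + 1) (k (i + 1)) 0 (by rw [M.pt_zero]; exact h))
      (Z.dist_jump_le (i + 1)) ?_ ?_ ?_
    on_goal 3 => rw [le_abs]
    all_goals rcases hε i with h | h <;> rw [h] at hki ⊢ <;> omega
  lt_length := hκ

lemma dist_succ_le {K r r' : ℤ} {i : ℕ} (hr : |r - k i| ≤ K) (hr' : |-k i - r'| ≤ K) :
    M.dist (M.pt (Y i) r) (M.pt (Y (i + 1)) r') ≤ 2 * (M.T * K) + c := by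
  have hT : 0 ≤ M.T := by have := M.one_le_T; omega
  have := M.dist_triangle (M.pt (Y i) r) (M.pt (Y i) (k i)) (M.pt (Y (i + 1)) r')
  have := M.dist_triangle (M.pt (Y i) (k i)) (M.pt (Y (i + 1)) (-k i)) (M.pt (Y (i + 1)) r')
  have := Z.dist_jump_le i
  have := M.dist_pt_pt (Y i) r (k i)
  have := M.dist_pt_pt (Y (i + 1)) (-k i) r'
  have := mul_le_mul_of_nonneg_left hr hT
  have := mul_le_mul_of_nonneg_left hr' hT
  omega

end IsZigzag

section Commutator

variable (M)

/-- The length over which the corners of the zigzag paths follow an axis on both sides. -/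
noncomputable def chordHalfLength : ℤ := M.overlapBound (40 * M.δ) + 5 * M.δ + 1

/-- The length by which the corners of the zigzag paths are moved along the axis, away from the
jumps by `h₀`. -/
noncomputable def turnLength : ℤ :=
  M.chordHalfLength + M.overlapBound (3 * M.δ + 2 * M.dist 1 M.h₀)

/-- The element that moves `k` steps along the axis, jumps by `h₀`, and moves `k` steps along the
new axis. -/
noncomputable def turn (k : ℤ) : Γ := M.g ^ k * M.h₀ * M.g ^ k

/-- The commutator of the `p`-th powers of two elements that turn at different rates; these
commutators survive in the quotients and certify that these are non-elementary. -/
noncomputable def turnCommutator (p : ℕ) : Γ :=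
  ⁅M.turn (2 * M.turnLength) ^ p, M.turn (4 * M.turnLength) ^ p⁆

/-- The sign of the exponents of the `i`-th of the `4 * p` letters of `turnCommutator p`. -/
def letterSign (p i : ℕ) : ℤ := if i < 2 * p then 1 else -1

/-- The number of steps along the axis before and after the jump in the `i`-th of the `4 * p`
letters of `turnCommutator p`. -/
noncomputable def letterShift (p i : ℕ) : ℤ :=
  if i < p then 2 * M.turnLength else if i < 2 * p then 4 * M.turnLength else
    if i < 3 * p then -(2 * M.turnLength) else -(4 * M.turnLength)

/-- The `i`-th of the `4 * p` letters of `turnCommutator p`. -/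
noncomputable def letter (p i : ℕ) : Γ :=
  M.g ^ M.letterShift p i * M.h₀ ^ letterSign p i * M.g ^ M.letterShift p i

/-- A corner of the zigzag path that spells `turnCommutator p`: the product of the first `i`
letters. -/
noncomputable def letterProd (p i : ℕ) : Γ := ((List.range i).map (M.letter p)).prod

/-- The position, along the axis at `letterProd p i`, of the `i`-th corner of the chord path from
`1` to `turnCommutator p`. -/
noncomputable def cornerShift (p i : ℕ) : ℤ :=
  if i = 0 ∨ i = 4 * p then 0
  else -M.letterShift p (i - 1) + letterSign p (i - 1) * M.turnLength

variable {M} {p : ℕ}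

lemma letterProd_four_mul : M.letterProd p (4 * p) = M.turnCommutator p := by
  have hA := prod_map_range_add (z := M.letter p) (a := M.turn (2 * M.turnLength)) (m := 0) (n := p)
    fun i _ hi => by simp [letter, letterShift, letterSign, turn, show i < p by omega,
      show i < 2 * p by omega]
  have hB := prod_map_range_add (z := M.letter p) (a := M.turn (4 * M.turnLength)) (m := 0 + p)
    (n := p) fun i _ hi => by simp [letter, letterShift, letterSign, turn,
      show ¬ i < p by omega, show i < 2 * p by omega]
  have hA' := prod_map_range_add (z := M.letter p) (a := (M.turn (2 * M.turnLength))⁻¹)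
    (m := 0 + p + p) (n := p) fun i _ hi => by simp [letter, letterShift, letterSign, turn,
      mul_assoc, show ¬ i < p by omega, show ¬ i < 2 * p by omega, show i < 3 * p by omega]
  have hB' := prod_map_range_add (z := M.letter p) (a := (M.turn (4 * M.turnLength))⁻¹)
    (m := 0 + p + p + p) (n := p) fun i _ _ => by simp [letter, letterShift, letterSign, turn,
      mul_assoc, show ¬ i < p by omega, show ¬ i < 2 * p by omega, show ¬ i < 3 * p by omega]
  rw [letterProd, show 4 * p = 0 + p + p + p + p by omega, hB', hA', hB, hA, List.range_zero,
    List.map_nil, List.prod_nil, one_mul, inv_pow, inv_pow, turnCommutator, commutatorElement_def]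

lemma chordHalfLength_bounds :
    M.overlapBound (40 * M.δ) ≤ M.chordHalfLength ∧ 5 * M.δ < M.chordHalfLength := by
  have := M.one_le_δ
  have := M.overlapBound_nonneg (40 * M.δ)
  unfold chordHalfLength
  omega

lemma turnLength_pos : 0 < M.turnLength := by
  have := M.one_le_δ
  have := (M.chordHalfLength_bounds).2
  have := M.overlapBound_nonneg (3 * M.δ + 2 * M.dist 1 M.h₀)
  unfold turnLength
  omega

lemma abs_letterShift_le (i : ℕ) : |M.letterShift p i| ≤ 4 * M.turnLength := by
  have := M.turnLength_pos
  unfold letterShift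
  rw [abs_le]
  split_ifs <;> omega

lemma letterSign_eq (i : ℕ) : letterSign p i = 1 ∨ letterSign p i = -1 := by
  unfold letterSign
  split_ifs <;> simp

lemma abs_cornerShift_le (i : ℕ) : |M.cornerShift p i| ≤ 5 * M.turnLength := by
  have := M.turnLength_pos
  have hshift := M.abs_letterShift_le (p := p) (i - 1)
  rw [abs_le] at hshift ⊢
  unfold cornerShift
  split_ifs
  · omega
  · rcases letterSign_eq (p := p) (i - 1) with h | h <;> rw [h] <;> omega

lemma isZigzag_letterProd :
    M.IsZigzag (M.letterProd p) (fun i => M.h₀ ^ letterSign p i) (M.letterShift p)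
      (M.dist 1 M.h₀) where
  not_coaxial i := by
    rcases letterSign_eq (p := p) i with h | h <;> rw [h]
    · simpa using M.h₀_not_coaxial
    · exact fun hinv => M.h₀_not_coaxial (by simpa using (hinv.mul_left M.h₀).symm)
  dist_le i := by
    rcases letterSign_eq (p := p) i with h | h <;> simp [h, M.dist_one_inv]
  succ_eq i := by
    rw [letterProd, List.prod_range_succ]
    simp only [letter, letterProd, AxialMetric.pt, mul_assoc]

lemma exists_chordPath_turnCommutator (hp : 0 < p) :
    ∃ P ε m, M.ChordPath P ε m M.chordHalfLength ∧ 0 < m ∧ P 0 = 1 ∧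
      P (m + 1) = M.turnCommutator p ∧
      (∀ i, M.dist (P i) (P (i + 1)) ≤ 2 * (M.T * (9 * M.turnLength)) + M.dist 1 M.h₀) ∧
      ∀ i, ¬ M.Coaxial M.n₀ (P i) (P (i + 1)) := by
  have hq := M.turnLength_pos
  obtain ⟨m, hm⟩ : ∃ m, 4 * p = m + 1 := ⟨4 * p - 1, by omega⟩
  have Z := isZigzag_letterProd (M := M) (p := p)
  refine ⟨_, _, m, Z.chordPath (ε := letterSign p) (s := M.cornerShift p) (κ' := M.turnLength)
    le_rfl chordHalfLength_bounds.2 letterSign_eq (fun i hi => ?_) (fun i hi => ?_), by omega, ?_,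
    ?_, fun i => Z.dist_succ_le ?_ ?_, fun i => Z.not_coaxial_pt i _ _⟩
  · rw [cornerShift, if_neg (by omega), Nat.add_sub_cancel]
  · unfold letterSign letterShift
    split_ifs <;> omega
  · simp [cornerShift, letterProd, M.pt_zero]
  · rw [← hm, cornerShift, if_pos (Or.inr rfl), M.pt_zero, letterProd_four_mul]
  all_goals
    have hk := M.abs_letterShift_le (p := p) i
    have hs := M.abs_cornerShift_le (p := p) i
    have hs' := M.abs_cornerShift_le (p := p) (i + 1)
    rw [abs_le] at *
    omega

lemma turnCommutator_ne_one (hp : 0 < p) : M.turnCommutator p ≠ 1 := by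
  obtain ⟨P, ε, m, C, hm, hP₀, hPm, -⟩ := M.exists_chordPath_turnCommutator hp
  rw [← hPm, ← hP₀]
  exact (C.start_ne_end hm).symm

variable (M) in
/-- Segments from `1` to the elements `turnCommutator p` do not follow any axis for longer than
this. -/
noncomputable def turnOverlapBound : ℤ :=
  31 * M.δ + 2 * (M.T * M.chordHalfLength) +
    2 * (2 * (M.T * (9 * M.turnLength)) + M.dist 1 M.h₀)

lemma dist_pt_pt_le_turnOverlapBound (hp : 0 < p) {a : Γ} {r s : ℤ}
    (hr : M.excess 1 (M.turnCommutator p) (M.pt a r) ≤ 10 * M.δ)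
    (hs : M.excess 1 (M.turnCommutator p) (M.pt a s) ≤ 10 * M.δ) :
    M.dist (M.pt a r) (M.pt a s) ≤ M.turnOverlapBound := by
  obtain ⟨P, ε, m, C, -, hP₀, hPm, hB, hP⟩ := M.exists_chordPath_turnCommutator hp
  rw [← hP₀, ← hPm] at hr hs
  exact dist_pt_pt_le_of_chordPath C chordHalfLength_bounds.1 (fun i _ => hB i)
    (fun i _ => hP (i + 1)) hr hs

end Commutator

lemma turnCommutator_notMem_normalClosure {n n' : ℤ} (hn₀ : M.n₀ ∣ n) (hn : n = 2 * n')
    (hn' : M.minHalfExponent < n') (hlen : M.turnOverlapBound + 2 * M.lengthDefect < n)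
    {p : ℕ} (hp : 0 < p) : M.turnCommutator p ∉ Subgroup.normalClosure {M.g ^ n} := by
  intro hmem
  obtain ⟨a, ha⟩ := exists_long_axis_of_mem_normalClosure hn₀ hn hn' hmem (turnCommutator_ne_one hp)
  have := lengthDefect_lt_minHalfExponent (M := M)
  have := dist_pt_pt_le_turnOverlapBound hp (ha 0 le_rfl (by omega)) (ha _ (by omega) le_rfl)
  have := M.abs_sub_le_dist_pt a 0 (n - 2 * M.lengthDefect)
  have := neg_le_abs (0 - (n - 2 * M.lengthDefect))
  omega

end AxisSystem

open scoped commutatorElement in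
lemma exists_commutator_pow_eq_one_of_index_ne_zero {G : Type*} [Group G] {q : G}
    (hq : (Subgroup.zpowers q).index ≠ 0) (a b : G) : ∃ p > 0, ⁅a ^ p, b ^ p⁆ = 1 := by
  obtain ⟨u, hu, -, ha⟩ := Subgroup.exists_pow_mem_of_index_ne_zero hq a
  obtain ⟨v, hv, -, hb⟩ := Subgroup.exists_pow_mem_of_index_ne_zero hq b
  have ha' : a ^ (u * v) ∈ Subgroup.zpowers q := by
    rw [pow_mul]
    exact Subgroup.pow_mem _ ha v
  have hb' : b ^ (u * v) ∈ Subgroup.zpowers q := by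
    rw [mul_comm, pow_mul]
    exact Subgroup.pow_mem _ hb u
  obtain ⟨i, hi⟩ := Subgroup.mem_zpowers_iff.1 ha'
  obtain ⟨j, hj⟩ := Subgroup.mem_zpowers_iff.1 hb'
  refine ⟨u * v, Nat.mul_pos hu hv, ?_⟩
  rw [commutatorElement_eq_one_iff_commute, ← hi, ← hj]
  exact Commute.zpow_zpow_self q i j

lemma AxisSystem.isNonElementaryGroup_of_ker_eq {Γ : Type*} [Group Γ] {M : AxisSystem Γ}
    {n n' : ℤ} (hn₀ : M.n₀ ∣ n) (hn : n = 2 * n') (hn' : M.minHalfExponent < n')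
    (hlen : M.turnOverlapBound + 2 * M.lengthDefect < n) {Q : Type*} [Group Q] {f : Γ →* Q}
    (hker : f.ker = Subgroup.normalClosure {M.g ^ n}) : IsNonElementaryGroup Q := by
  intro q
  by_contra hq
  obtain ⟨p, hp, hcomm⟩ := exists_commutator_pow_eq_one_of_index_ne_zero hq
    (f (M.turn (2 * M.turnLength))) (f (M.turn (4 * M.turnLength)))
  refine turnCommutator_notMem_normalClosure hn₀ hn hn' hlen hp ?_
  rwa [← hker, MonoidHom.mem_ker, turnCommutator, map_commutatorElement, map_pow, map_pow]

/-! ### Injectivity on finite sets -/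

lemma IsNonElementaryGroup.infinite {G : Type*} [Group G] (h : IsNonElementaryGroup G) :
    Infinite G := by
  have hindex := h 1
  rw [Subgroup.zpowers_one_eq_bot, Subgroup.index_bot] at hindex
  by_contra hfin
  rw [not_infinite_iff_finite] at hfin
  exact Nat.card_pos.ne' hindex

namespace AxisSystem

variable {Γ : Type*} [Group Γ] {M : AxisSystem Γ} {n n' : ℤ}

lemma zpow_ne_one (hn : n ≠ 0) : M.g ^ n ≠ 1 := fun h => by
  have hdist := M.dist_one_zpow n
  rw [h, M.dist_self] at hdist
  have := M.one_le_T
  exact (mul_pos (by omega) (abs_pos.2 hn)).ne hdist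

lemma le_dist_one_of_mem_normalClosure (hn₀ : M.n₀ ∣ n) (hn : n = 2 * n')
    (hn' : M.minHalfExponent < n') {w : Γ} (hw : w ∈ Subgroup.normalClosure {M.g ^ n})
    (hw₁ : w ≠ 1) : n - 2 * M.lengthDefect - 10 * M.δ ≤ M.dist 1 w := by
  obtain ⟨a, ha⟩ := exists_long_axis_of_mem_normalClosure hn₀ hn hn' hw hw₁
  have := lengthDefect_lt_minHalfExponent (M := M)
  set p := M.pt a 0
  set q := M.pt a (n - 2 * M.lengthDefect)
  have hp : M.excess 1 w p ≤ 10 * M.δ := ha 0 le_rfl (by omega)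
  have hq : M.excess 1 w q ≤ 10 * M.δ := ha _ (by omega) le_rfl
  have hpq : |0 - (n - 2 * M.lengthDefect)| ≤ M.dist p q := M.abs_sub_le_dist_pt a _ _
  have := neg_le_abs (0 - (n - 2 * M.lengthDefect))
  have := M.dist_triangle p 1 q
  have := M.dist_triangle p w q
  have := M.dist_comm p 1
  have := M.dist_comm w q
  unfold DiscreteHyperbolicMetric.excess at hp hq
  omega

lemma quotientIsNonElementaryHyperbolic {S : Set Γ} (hS : IsSymmGenSet S)
    (hM : M.dist = wordDist S) (hn₀ : M.n₀ ∣ n) (hn : n = 2 * n') (hn' : M.dehnHalfExponent < n')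
    (hmin : M.minHalfExponent < n') (hlen : M.turnOverlapBound + 2 * M.lengthDefect < n) :
    QuotientIsNonElementaryHyperbolic (Subgroup.normalClosure {M.g ^ n})
      Subgroup.normalClosure_normal := by
  set N := Subgroup.normalClosure {M.g ^ n}
  have hsurj := QuotientGroup.mk'_surjective N
  have hker := QuotientGroup.ker_mk' N
  obtain ⟨L, hL⟩ := exists_dehnProperty hS hM hn₀ hn hn' hsurj hker
  obtain ⟨D, hD, hD'⟩ := (hS.image hsurj).exists_fourPointInequality hL
  exact ⟨(hS.image hsurj).isHyperbolicGroup hD hD',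
    isNonElementaryGroup_of_ker_eq hn₀ hn hmin hlen hker⟩

variable (M) in
lemma exists_exponent (R : ℤ) : ∃ n' : ℤ, M.n₀ ∣ 2 * n' ∧ M.dehnHalfExponent < n' ∧
    M.minHalfExponent < n' ∧ M.turnOverlapBound + 2 * M.lengthDefect < 2 * n' ∧
    R < 2 * n' - 2 * M.lengthDefect - 10 * M.δ := by
  have := M.one_le_δ
  have := lengthDefect_nonneg (M := M)
  have := lengthDefect_lt_minHalfExponent (M := M)
  have hdehn : M.dehnHalfExponent = M.minHalfExponent + 2 * M.lengthDefect + 56 * M.δ := rfl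
  obtain ⟨b, hb⟩ := exists_lt_nsmul (by have := M.one_le_n₀; omega : 0 < M.n₀)
    (max M.dehnHalfExponent (max M.turnOverlapBound R))
  exact ⟨b • M.n₀, ⟨2 * b, by rw [nsmul_eq_mul]; ring⟩, by omega, by omega, by omega, by omega⟩

end AxisSystem

theorem exists_normal_quotientIsNonElementaryHyperbolic {Γ : Type*} [Group Γ]
    (hΓ : IsHyperbolicGroup Γ) (hne : IsNonElementaryGroup Γ) {F : Set Γ} (hF : F.Finite) :
    ∃ N : Subgroup Γ, N ≠ ⊥ ∧ (∃ hN : N.Normal, QuotientIsNonElementaryHyperbolic N hN) ∧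
      (N : Set Γ) ∩ F ⊆ {1} := by
  have := hne.infinite
  obtain ⟨S, hSfin, hSinv, hSgen, δ, -, hδ⟩ := hΓ
  have hS : IsSymmGenSet S := ⟨hSfin, hSinv, hSgen⟩
  obtain ⟨M₀, hM⟩ := hS.exists_axialMetric (hS.fourPointInequality hδ)
  obtain ⟨M, rfl⟩ := M₀.exists_axisSystem hne
  obtain ⟨R, hR⟩ := (hF.image (M.dist 1)).bddAbove
  obtain ⟨n', hn₀, hdehn, hmin, hlen, hlong⟩ := M.exists_exponent R
  refine ⟨Subgroup.normalClosure {M.g ^ (2 * n')}, fun hbot => ?_, ⟨_,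
    AxisSystem.quotientIsNonElementaryHyperbolic hS hM hn₀ rfl hdehn hmin hlen⟩, ?_⟩
  · have hmem := Subgroup.subset_normalClosure (Set.mem_singleton (M.g ^ (2 * n')))
    rw [hbot] at hmem
    have := AxisSystem.lengthDefect_nonneg (M := M)
    have := AxisSystem.lengthDefect_lt_minHalfExponent (M := M)
    exact AxisSystem.zpow_ne_one (by omega) (Subgroup.mem_bot.1 hmem)
  · rintro w ⟨hw, hwF⟩
    by_contra! hw₁
    have := AxisSystem.le_dist_one_of_mem_normalClosure hn₀ rfl hmin hw hw₁
    have := hR ⟨w, hwF, rfl⟩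
    omega

lemma infinite_setOf_inter_subset_one {G : Type*} [Group G] {P : Subgroup G → Prop}
    (hP : ∀ F : Set G, F.Finite → ∃ N : Subgroup G, N ≠ ⊥ ∧ P N ∧ (N : Set G) ∩ F ⊆ {1})
    {F : Set G} (hF : F.Finite) :
    {N : Subgroup G | N ≠ ⊥ ∧ P N ∧ (N : Set G) ∩ F ⊆ {1}}.Infinite := fun hfin => by
  have hnontrivial (N : Subgroup G) (hN : N ≠ ⊥) : ∃ y ∈ N, y ≠ 1 := by
    simpa [Subgroup.eq_bot_iff_forall] using hN
  choose! y hyN hy₁ using hnontrivial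
  obtain ⟨N, hN, hPN, hNF⟩ := hP _ (hF.union (hfin.image y))
  rw [Set.inter_union_distrib_left, Set.union_subset_iff] at hNF
  exact hy₁ N hN (hNF.2 ⟨hyN N hN, N, ⟨hN, hPN, hNF.1⟩, rfl⟩)

theorem many_quotients_injective_on_finite_set_general
    {Γ : Type*} [Group Γ] (hΓ : IsHyperbolicGroup Γ) (hne : IsNonElementaryGroup Γ)
    (S : Set Γ) (hS : S.Finite) :
    ∃ (N : ℕ → Subgroup Γ) (hN : ∀ i, (N i).Normal),
      Function.Injective N ∧ (∀ i, N i ≠ ⊥) ∧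
      (∀ i, QuotientIsNonElementaryHyperbolic (N i) (hN i)) ∧
      ∀ i, ((N i : Set Γ) ∩ (S * S⁻¹)) ⊆ {1} := by
  have hinf := infinite_setOf_inter_subset_one
    (fun _ hF => exists_normal_quotientIsNonElementaryHyperbolic hΓ hne hF) (hS.mul hS.inv)
  have hmem i := (hinf.natEmbedding _ i).2
  exact ⟨fun i => hinf.natEmbedding _ i, fun i => (hmem i).2.1.1,
    Subtype.val_injective.comp (hinf.natEmbedding _).injective, fun i => (hmem i).1,
    fun i => (hmem i).2.1.2, fun i => (hmem i).2.2⟩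

/-- Let `Γ` be a non-elementary hyperbolic group with no nontrivial finite normal
subgroup, and let `S ⊆ Γ` be a finite subset.  Then there is a sequence `(N_i)` of
pairwise distinct nontrivial normal subgroups of `Γ` such that each quotient `Γ/N_i` is
a non-elementary hyperbolic group and `N_i ∩ (S·S⁻¹) ⊆ {1}` for every `i` (so the
quotient map `Γ → Γ/N_i` is injective on `S`). -/
theorem many_quotients_injective_on_finite_set
    {Γ : Type*} [Group Γ] (hΓ : IsHyperbolicGroup Γ) (hne : IsNonElementaryGroup Γ)
    (hnofin : ∀ H : Subgroup Γ, H.Normal → (H : Set Γ).Finite → H = ⊥)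
    (S : Set Γ) (hS : S.Finite) :
    ∃ (N : ℕ → Subgroup Γ) (hN : ∀ i, (N i).Normal),
      Function.Injective N ∧ (∀ i, N i ≠ ⊥) ∧
      (∀ i, QuotientIsNonElementaryHyperbolic (N i) (hN i)) ∧
      ∀ i, ((N i : Set Γ) ∩ (S * S⁻¹)) ⊆ {1} :=
  many_quotients_injective_on_finite_set_general hΓ hne S hS
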